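/- arXiv:2101.09950 — 4 statements merged into one kernel-verified Lean document; each statement's English description precedes it below -/
import Mathlib

section
/- Let λ be an infinite cardinal. For every ordinal α with λ ≤ α < λ⁺ (where λ⁺ is the successor cardinal of λ), the space K(C([0,α],ℝ)) of compact operators on C([0,α],ℝ) has a dense subset of cardinality λ; moreover, the set of ordinals α in the interval [λ, λ⁺), considered up to the equivalence identifying α and β whenever the rings K(C([0,α],ℝ)) and K(C([0,β],ℝ)) are isomorphic as rings, has exactly λ⁺ equivalence classes. -/
open Cardinal

set_option synthInstance.maxHeartbeats 1000000

/-- The non-unital algebra `K(E)` of compact operators on `E`. -/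
def compactOperators (𝕜 : Type*) [NontriviallyNormedField 𝕜]
    (E : Type*) [NormedAddCommGroup E] [NormedSpace 𝕜 E] :
    NonUnitalSubalgebra 𝕜 (E →L[𝕜] E) where
  carrier := {f : E →L[𝕜] E | IsCompactOperator f}
  add_mem' := fun hf hg => hf.add hg
  zero_mem' := isCompactOperator_zero
  smul_mem' := fun c _ hf => hf.smul c
  mul_mem' := fun {_ g} hf _ => hf.comp_clm g

/-- The ordinal interval `[0, α]`, i.e. the set of ordinals `≤ α`, with its (order) topology,
is a compact space. -/
instance (α : Ordinal.{u}) : CompactSpace (Set.Iic α) := by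
  rw [← isCompact_iff_compactSpace, ← Set.Icc_bot]
  exact isCompact_Icc

/-- The equivalence relation on ordinals in `[λ, λ⁺)` identifying `α` and `β` whenever the
rings `K(C([0,α], ℝ))` and `K(C([0,β], ℝ))` of compact operators are isomorphic as rings. -/
def ringIsoSetoid (lam : Cardinal.{u}) :
    Setoid {α : Ordinal.{u} // lam.ord ≤ α ∧ α < (Order.succ lam).ord} where
  r a b := Nonempty ((compactOperators ℝ C(Set.Iic a.1, ℝ)) ≃+*
    (compactOperators ℝ C(Set.Iic b.1, ℝ)))
  iseqv :=
    ⟨fun _ => ⟨RingEquiv.refl _⟩,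
     fun ⟨e⟩ => ⟨e.symm⟩,
     fun ⟨e⟩ ⟨f⟩ => ⟨e.trans f⟩⟩

open Filter Topology

/-!
A ring isomorphism `K(E) → K(F)` carries a rank-one projection `g₀ ⊗ x₀` to a rank-one projection
`h₀ ⊗ y₀`, hence the left ideal of the operators `g₀ ⊗ x`, a copy of `E`, to a copy of `F`. The
resulting bijection `E → F` is real-linear, because the corner of the projection is the field `ℝ`,
whose only ring endomorphism is the identity, and bounded by the closed graph theorem. So isomorphic
rings come from isomorphic Banach spaces (Eidelheit).

Let `λ ≤ α < λ⁺`. The indicators of the initial segments `[0, b]` span a dense subspace of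
`C([0, α])`, and a compact operator vanishes asymptotically along disjointly supported bounded
sequences; by transfinite induction on `b` the operators `f ↦ f c • 1_[0, b]` therefore span a dense
subspace of `K(C([0, α]))`.

The classes are separated by Bourgain's `ℓ¹`-index. If `ω ^ ρ ≤ α`, halving intervals of length
`ω ^ σ` produces a tree of rank `ρ` of finite Rademacher-like sequences in `C([0, α])`, each
isometrically equivalent to the basis of some `ℓ¹(n)`. If one isomorphism class were unbounded in
`λ⁺`, a member would contain such trees, up to constants, of all ranks below `λ⁺`; since it has a
dense subset of size `λ`, and `λ⁺` is regular, one could extract an infinite branch, that is, a copy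
of `ℓ¹`. But a gliding hump argument shows that `C([0, α])` contains no copy of `ℓ¹`. Hence every
class is bounded in `λ⁺`, and by regularity there are `λ⁺` classes.
-/

/-! ### Ring isomorphisms between algebras of compact operators -/

/-- An idempotent `p ≠ 0` with no idempotents other than `0` and `p` in the corner `p R p`. In the
ring of compact operators these are the rank-one projections, and the notion is purely
multiplicative, so ring isomorphisms preserve it. -/
structure IsMinimalIdempotent {R : Type*} [NonUnitalRing R] (p : R) : Prop where
  ne_zero : p ≠ 0
  mul_self : p * p = p
  eq_zero_or_eq : ∀ r, r * r = r → p * r * p = r → r = 0 ∨ r = p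

theorem IsMinimalIdempotent.map_ringEquiv {R S : Type*} [NonUnitalRing R] [NonUnitalRing S]
    {p : R} (hp : IsMinimalIdempotent p) (φ : R ≃+* S) : IsMinimalIdempotent (φ p) where
  ne_zero := (map_ne_zero_iff φ φ.injective).2 hp.ne_zero
  mul_self := by rw [← map_mul, hp.mul_self]
  eq_zero_or_eq r hr hpr := by
    have h := hp.eq_zero_or_eq (φ.symm r) (by rw [← map_mul, hr])
      (φ.injective (by simpa using hpr))
    simpa only [φ.symm_apply_eq, map_zero] using h

theorem continuous_of_forall_dual_comp_continuous {E F : Type*} [NormedAddCommGroup E]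
    [NormedSpace ℝ E] [CompleteSpace E] [NormedAddCommGroup F] [NormedSpace ℝ F] [CompleteSpace F]
    (T : E →ₗ[ℝ] F) (hT : ∀ g : F →L[ℝ] ℝ, Continuous fun x => g (T x)) : Continuous T :=
  T.continuous_of_seq_closed_graph fun _ x _ hu hTu =>
    (SeparatingDual.eq_iff_forall_dual_eq (R := ℝ)).2 fun g =>
      tendsto_nhds_unique ((g.continuous.tendsto _).comp hTu) (((hT g).tendsto x).comp hu)

namespace compactOperators

section RankOne

variable {E : Type*} [NormedAddCommGroup E] [NormedSpace ℝ E]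

theorem ext {A B : compactOperators ℝ E} (h : ∀ z, A.1 z = B.1 z) : A = B :=
  Subtype.ext (ContinuousLinearMap.ext h)

/-- The operator `g ⊗ x : z ↦ g z • x` of rank at most one, as a compact operator. -/
def rankOne (x : E) (g : E →L[ℝ] ℝ) : compactOperators ℝ E :=
  ⟨g.smulRight x, (isCompactOperator_of_locallyCompactSpace_dom g).clm_comp
    (ContinuousLinearMap.toSpanSingleton ℝ x)⟩

@[simp] theorem rankOne_apply (x : E) (g : E →L[ℝ] ℝ) (z : E) : (rankOne x g).1 z = g z • x := rfl

theorem add_apply (A B : compactOperators ℝ E) (z : E) : (A + B).1 z = A.1 z + B.1 z := rfl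

theorem mul_apply (A B : compactOperators ℝ E) (z : E) : (A * B).1 z = A.1 (B.1 z) := rfl

theorem add_rankOne (x y : E) (g : E →L[ℝ] ℝ) :
    rankOne (x + y) g = rankOne x g + rankOne y g :=
  ext fun z => smul_add (g z) x y

theorem mul_rankOne (A : compactOperators ℝ E) (x : E) (g : E →L[ℝ] ℝ) :
    A * rankOne x g = rankOne (A.1 x) g :=
  ext fun z => map_smul A.1 (g z) x

theorem smul_rankOne (c : ℝ) (x : E) (g : E →L[ℝ] ℝ) : c • rankOne x g = rankOne (c • x) g :=
  ext fun z => smul_comm c (g z) x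

theorem rankOne_mul_mul_rankOne (x y : E) (g h : E →L[ℝ] ℝ) (A : compactOperators ℝ E) :
    rankOne x g * A * rankOne y h = g (A.1 y) • rankOne x h := by
  rw [mul_assoc, mul_rankOne, mul_rankOne, smul_rankOne, rankOne_apply]

theorem isMinimalIdempotent_rankOne {x : E} {g : E →L[ℝ] ℝ} (hgx : g x = 1) :
    IsMinimalIdempotent (rankOne x g) where
  ne_zero h := by
    have : g ((rankOne x g).1 x) = g 0 := congrArg (fun A : compactOperators ℝ E => g (A.1 x)) h
    simp [hgx] at this
  mul_self := by rw [mul_rankOne, rankOne_apply, hgx, one_smul]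
  eq_zero_or_eq r hr hpr := by
    rw [rankOne_mul_mul_rankOne] at hpr
    have hc : g (r.1 x) * g (r.1 x) = g (r.1 x) := by
      have := congrArg (fun A : compactOperators ℝ E => g (A.1 x)) hr
      rw [← hpr, smul_rankOne] at this
      simpa [mul_apply, hgx] using this
    rcases IsIdempotentElem.iff_eq_zero_or_one.mp hc with h | h <;> rw [h] at hpr
    · exact .inl (by rw [← hpr, zero_smul])
    · exact .inr (by rw [← hpr, one_smul])

theorem exists_eq_rankOne {q : compactOperators ℝ E} (hq : IsMinimalIdempotent q) :
    ∃ (x : E) (g : E →L[ℝ] ℝ), g x = 1 ∧ q = rankOne x g := by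
  obtain ⟨z, hz⟩ : ∃ z, q.1 z ≠ 0 := by
    by_contra! h
    exact hq.ne_zero (ext h)
  have hqq (w : E) : q.1 (q.1 w) = q.1 w := by rw [← mul_apply, hq.mul_self]
  obtain ⟨g, hg⟩ := SeparatingDual.exists_eq_one (R := ℝ) hz
  set s := rankOne (q.1 z) (g.comp q.1) with hs
  have hgqz : g.comp q.1 (q.1 z) = 1 := by rw [ContinuousLinearMap.comp_apply, hqq, hg]
  have hs_min := isMinimalIdempotent_rankOne hgqz
  have hqsq : q * s * q = s := ext fun w => by simp [hs, hqq]
  have hsq := (hq.eq_zero_or_eq s hs_min.mul_self hqsq).resolve_left hs_min.ne_zero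
  exact ⟨_, _, hgqz, hsq.symm⟩

end RankOne

section Eidelheit

variable {E F : Type*} [NormedAddCommGroup E] [NormedSpace ℝ E]
  [NormedAddCommGroup F] [NormedSpace ℝ F]
  (φ : compactOperators ℝ E ≃+* compactOperators ℝ F)
  {x₀ : E} {g₀ : E →L[ℝ] ℝ} {y₀ : F} {h₀ : F →L[ℝ] ℝ}

theorem smul_rankOne_mul_smul_rankOne (hx₀ : g₀ x₀ = 1) (a b : ℝ) :
    (a • rankOne x₀ g₀) * (b • rankOne x₀ g₀) = (a * b) • rankOne x₀ g₀ := by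
  rw [smul_rankOne, smul_rankOne, smul_rankOne, mul_rankOne, rankOne_apply, map_smul, hx₀,
    smul_smul, smul_eq_mul, mul_one, mul_comm]

theorem map_smul_rankOne_mem_corner (hx₀ : g₀ x₀ = 1)
    (hφ : φ (rankOne x₀ g₀) = rankOne y₀ h₀) (c : ℝ) :
    φ (c • rankOne x₀ g₀) = h₀ ((φ (c • rankOne x₀ g₀)).1 y₀) • rankOne y₀ h₀ := by
  have hcorner : rankOne x₀ g₀ * (c • rankOne x₀ g₀) * rankOne x₀ g₀ = c • rankOne x₀ g₀ := by
    rw [rankOne_mul_mul_rankOne, smul_rankOne c, rankOne_apply, hx₀, one_smul, map_smul, hx₀,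
      smul_eq_mul, mul_one, smul_rankOne]
  rw [← rankOne_mul_mul_rankOne, ← hφ, ← map_mul, ← map_mul, hcorner]

/-- The corner of a rank-one projection is a copy of `ℝ`, which has no ring endomorphism besides
the identity. -/
theorem map_smul_rankOne (hx₀ : g₀ x₀ = 1) (hy₀ : h₀ y₀ = 1)
    (hφ : φ (rankOne x₀ g₀) = rankOne y₀ h₀) (c : ℝ) :
    φ (c • rankOne x₀ g₀) = c • rankOne y₀ h₀ := by
  have hcorner := map_smul_rankOne_mem_corner φ hx₀ hφ
  have coeff_smul (a : ℝ) : h₀ ((a • rankOne y₀ h₀).1 y₀) = a := by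
    rw [smul_rankOne, rankOne_apply, hy₀, one_smul, map_smul, hy₀, smul_eq_mul, mul_one]
  let θ : ℝ →+* ℝ :=
    { toFun := fun c => h₀ ((φ (c • rankOne x₀ g₀)).1 y₀)
      map_one' := by rw [one_smul, hφ, rankOne_apply, hy₀, one_smul, hy₀]
      map_zero' := by rw [zero_smul, map_zero]; exact map_zero h₀
      map_add' := fun a b => by rw [add_smul, map_add, add_apply, map_add]
      map_mul' := fun a b => by
        rw [← smul_rankOne_mul_smul_rankOne hx₀, map_mul, hcorner a, hcorner b,
          smul_rankOne_mul_smul_rankOne hy₀, coeff_smul, coeff_smul, coeff_smul] }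
  have hθ : θ c = c := RingHom.congr_fun (Subsingleton.elim θ (RingHom.id ℝ)) c
  exact (hcorner c).trans (congrArg (· • rankOne y₀ h₀) hθ)

theorem map_symm_rankOne (hφ : φ (rankOne x₀ g₀) = rankOne y₀ h₀) :
    φ.symm (rankOne y₀ h₀) = rankOne x₀ g₀ := by
  rw [← hφ, φ.symm_apply_apply]

/-- `x ↦ φ (g₀ ⊗ x) y₀`, the spatial map implementing `φ` when `φ` carries the projection `g₀ ⊗ x₀`
to one fixing `y₀`. -/
noncomputable def spatialMap (g₀ : E →L[ℝ] ℝ) (y₀ : F) (x : E) : F := (φ (rankOne x g₀)).1 y₀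

theorem spatialMap_symm_spatialMap (hx₀ : g₀ x₀ = 1) (hφ : φ (rankOne x₀ g₀) = rankOne y₀ h₀)
    (x : E) : spatialMap φ.symm h₀ x₀ (spatialMap φ g₀ y₀ x) = x := by
  rw [spatialMap, spatialMap, ← mul_rankOne, map_mul, φ.symm_apply_apply, map_symm_rankOne φ hφ,
    mul_rankOne]
  simp [hx₀]

theorem spatialMap_add (x y : E) :
    spatialMap φ g₀ y₀ (x + y) = spatialMap φ g₀ y₀ x + spatialMap φ g₀ y₀ y := by
  rw [spatialMap, add_rankOne, map_add, add_apply, spatialMap, spatialMap]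

theorem spatialMap_smul (hx₀ : g₀ x₀ = 1) (hy₀ : h₀ y₀ = 1)
    (hφ : φ (rankOne x₀ g₀) = rankOne y₀ h₀) (c : ℝ) (x : E) :
    spatialMap φ g₀ y₀ (c • x) = c • spatialMap φ g₀ y₀ x := by
  have hfactor : rankOne (c • x) g₀ = rankOne x g₀ * (c • rankOne x₀ g₀) := by
    rw [smul_rankOne, mul_rankOne, rankOne_apply, map_smul, hx₀, smul_eq_mul, mul_one]
  rw [spatialMap, hfactor, map_mul, map_smul_rankOne φ hx₀ hy₀ hφ, mul_apply, smul_rankOne,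
    rankOne_apply, hy₀, one_smul, map_smul, spatialMap]

/-- Composing the spatial map with a functional `g` gives the functional `x ↦ g₀ (φ⁻¹(g ⊗ y₀) x)`,
which is continuous because `φ⁻¹(g ⊗ y₀)` is an operator. -/
theorem apply_spatialMap (hx₀ : g₀ x₀ = 1) (hy₀ : h₀ y₀ = 1)
    (hφ : φ (rankOne x₀ g₀) = rankOne y₀ h₀) (g : F →L[ℝ] ℝ) (x : E) :
    g (spatialMap φ g₀ y₀ x) = g₀ ((φ.symm (rankOne y₀ g)).1 x) := by
  have hcorner : φ.symm (rankOne y₀ g) * rankOne x g₀ =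
      g (spatialMap φ g₀ y₀ x) • rankOne x₀ g₀ := by
    apply φ.injective
    have hfix : φ (rankOne x g₀) = φ (rankOne x g₀) * rankOne y₀ h₀ := by
      rw [← hφ, ← map_mul, mul_rankOne, rankOne_apply, hx₀, one_smul]
    rw [map_mul, φ.apply_symm_apply, map_smul_rankOne φ hx₀ hy₀ hφ, hfix, ← mul_assoc,
      rankOne_mul_mul_rankOne, spatialMap]
  have := congrArg (fun A : compactOperators ℝ E => g₀ (A.1 x₀)) hcorner
  rw [smul_rankOne, mul_rankOne] at this
  simpa [hx₀] using this.symm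

theorem continuous_spatialMap [CompleteSpace E] [CompleteSpace F] (hx₀ : g₀ x₀ = 1)
    (hy₀ : h₀ y₀ = 1) (hφ : φ (rankOne x₀ g₀) = rankOne y₀ h₀) :
    Continuous (spatialMap φ g₀ y₀) :=
  continuous_of_forall_dual_comp_continuous
    (IsLinearMap.mk' _ ⟨spatialMap_add φ, spatialMap_smul φ hx₀ hy₀ hφ⟩) fun g => by
      simp only [IsLinearMap.mk'_apply, apply_spatialMap φ hx₀ hy₀ hφ]
      fun_prop

/-- Eidelheit's theorem for the rings of compact operators. -/
theorem nonempty_continuousLinearEquiv_of_ringEquiv [CompleteSpace E] [CompleteSpace F]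
    [Nontrivial E] (φ : compactOperators ℝ E ≃+* compactOperators ℝ F) : Nonempty (E ≃L[ℝ] F) := by
  obtain ⟨x₀, hx₀⟩ := exists_ne (0 : E)
  obtain ⟨g₀, hg₀⟩ := SeparatingDual.exists_eq_one (R := ℝ) hx₀
  obtain ⟨y₀, h₀, hy₀, hφ⟩ :=
    exists_eq_rankOne ((isMinimalIdempotent_rankOne hg₀).map_ringEquiv φ)
  have hφ_symm := map_symm_rankOne φ hφ
  exact ⟨{
    toFun := spatialMap φ g₀ y₀
    invFun := spatialMap φ.symm h₀ x₀
    map_add' := spatialMap_add φ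
    map_smul' := spatialMap_smul φ hg₀ hy₀ hφ
    left_inv := spatialMap_symm_spatialMap φ hg₀ hφ
    right_inv := spatialMap_symm_spatialMap φ.symm hy₀ hφ_symm
    continuous_toFun := continuous_spatialMap φ hg₀ hy₀ hφ
    continuous_invFun := continuous_spatialMap φ.symm hy₀ hg₀ hφ_symm }⟩

end Eidelheit

end compactOperators

/-! ### Cardinalities of dense sets -/

theorem exists_dense_mk_le_of_dense_span {E : Type*} [AddCommGroup E] [Module ℝ E]
    [TopologicalSpace E] [ContinuousAdd E] [ContinuousSMul ℝ E] {S : Set E}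
    (hS : Dense (Submodule.span ℝ S : Set E)) : ∃ D : Set E, Dense D ∧ #D ≤ max ℵ₀ #S := by
  let ratComb : List (ℚ × S) → E := fun l => (l.map fun p => (p.1 : ℝ) • p.2.1).sum
  have add_mem : ∀ x ∈ Set.range ratComb, ∀ y ∈ Set.range ratComb,
      x + y ∈ Set.range ratComb := by
    rintro _ ⟨l, rfl⟩ _ ⟨m, rfl⟩
    exact ⟨l ++ m, by simp [ratComb]⟩
  have smul_mem : ∀ r ∈ Set.range ((↑) : ℚ → ℝ), ∀ y ∈ Set.range ratComb,
      r • y ∈ Set.range ratComb := by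
    rintro _ ⟨q, rfl⟩ _ ⟨l, rfl⟩
    refine ⟨l.map fun p => (q * p.1, p.2), ?_⟩
    simp only [ratComb, List.smul_sum, List.map_map, Function.comp_def, smul_smul, Rat.cast_mul]
  have span_subset : (Submodule.span ℝ S : Set E) ⊆ closure (Set.range ratComb) := by
    intro x hx
    induction hx using Submodule.span_induction with
    | mem x hx => exact subset_closure ⟨[(1, ⟨x, hx⟩)], by simp [ratComb]⟩
    | zero => exact subset_closure ⟨[], by simp [ratComb]⟩
    | add x y _ _ hx hy => exact map_mem_closure₂ continuous_add hx hy add_mem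
    | smul a x _ hx =>
      exact map_mem_closure₂ continuous_smul (Rat.isDenseEmbedding_coe_real.dense a) hx smul_mem
  refine ⟨Set.range ratComb, dense_closure.1 (hS.mono span_subset), mk_range_le.trans ?_⟩
  calc #(List (ℚ × S)) ≤ max ℵ₀ #(ℚ × S) := mk_list_le_max _
    _ ≤ max ℵ₀ (max ℵ₀ #S) := by
        gcongr
        rw [mk_prod]
        exact (mul_le_max_of_aleph0_le_left (by simp)).trans (by simp)
    _ = max ℵ₀ #S := by simp

theorem exists_dense_mk_eq {E : Type*} [TopologicalSpace E] {κ : Cardinal} {D : Set E}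
    (hD : Dense D) (hDκ : #D ≤ κ) (hκ : ℵ₀ ≤ κ) (hκE : κ ≤ #E) :
    ∃ D' : Set E, Dense D' ∧ #D' = κ := by
  obtain ⟨S, hS⟩ := le_mk_iff_exists_set.1 hκE
  refine ⟨D ∪ S, hD.mono Set.subset_union_left, le_antisymm ?_ ?_⟩
  · exact (mk_union_le D S).trans (add_le_of_le hκ hDκ hS.le)
  · exact hS.ge.trans (mk_le_mk_of_subset Set.subset_union_right)

/-! ### Compact operators on spaces of continuous functions on well-ordered spaces -/

theorem eq_zero_of_tendsto_of_norm_sum_le {F : Type*} [NormedAddCommGroup F] [NormedSpace ℝ F]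
    {u : ℕ → F} {y : F} {M : ℝ} (hu : Tendsto u atTop (𝓝 y))
    (hM : ∀ s : Finset ℕ, ‖∑ k ∈ s, u k‖ ≤ M) : y = 0 := by
  have norm_nsmul_le (N : ℕ) : N * ‖y‖ ≤ M := by
    have hlim : Tendsto (fun k => ∑ j ∈ Finset.range N, u (j + k)) atTop (𝓝 (N • y)) := by
      simpa using tendsto_finsetSum (Finset.range N) fun j _ =>
        hu.comp (tendsto_add_atTop_nat j) |>.congr fun k => by simp [add_comm]
    rw [← nsmul_eq_mul, ← RCLike.norm_nsmul ℝ]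
    refine le_of_tendsto hlim.norm (.of_forall fun k => ?_)
    simpa using hM ((Finset.range N).map (addRightEmbedding k))
  by_contra hy
  obtain ⟨N, hN⟩ := exists_nat_gt (M / ‖y‖)
  rw [div_lt_iff₀ (norm_pos_iff.2 hy)] at hN
  exact (norm_nsmul_le N).not_gt hN

theorem tendsto_zero_of_isCompactOperator_of_norm_sum_le {E F : Type*} [NormedAddCommGroup E]
    [NormedSpace ℝ E] [NormedAddCommGroup F] [NormedSpace ℝ F] {A : E →L[ℝ] F}
    (hA : IsCompactOperator A) {x : ℕ → E} {C : ℝ} (hx : ∀ s : Finset ℕ, ‖∑ k ∈ s, x k‖ ≤ C) :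
    Tendsto (fun k => A (x k)) atTop (𝓝 0) := by
  refine tendsto_of_subseq_tendsto fun ns hns => ?_
  obtain ⟨φ, -, hφ⟩ := strictMono_subseq_of_tendsto_atTop hns
  have hcompact := IsCompactOperator.isCompact_closure_image_closedBall
    (f := (A : E →ₗ[ℝ] F)) hA C
  obtain ⟨y, -, ψ, hψ, hy⟩ := hcompact.tendsto_subseq (x := fun k => A (x (ns (φ k)))) fun k =>
    subset_closure ⟨x (ns (φ k)), by simpa using hx {ns (φ k)}, rfl⟩
  suffices y = 0 from ⟨φ ∘ ψ, this ▸ hy⟩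
  refine eq_zero_of_tendsto_of_norm_sum_le (M := ‖A‖ * C) hy fun s => ?_
  have hinj : Function.Injective fun k => ns (φ (ψ k)) := (hφ.comp hψ).injective
  calc ‖∑ k ∈ s, A (x (ns (φ (ψ k))))‖ = ‖A (∑ k ∈ s.map ⟨_, hinj⟩, x k)‖ := by simp
    _ ≤ ‖A‖ * C := A.le_opNorm_of_le (hx _)

theorem norm_sum_le_of_pairwise_disjoint_support {X ι : Type*} [TopologicalSpace X]
    [CompactSpace X] {f : ι → C(X, ℝ)} {C : ℝ} (hC : 0 ≤ C) (hf : ∀ k, ‖f k‖ ≤ C)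
    (hdisj : Pairwise (Function.onFun Disjoint fun k => Function.support (f k))) (s : Finset ι) :
    ‖∑ k ∈ s, f k‖ ≤ C := by
  refine (ContinuousMap.norm_le _ hC).2 fun t => ?_
  rw [ContinuousMap.sum_apply]
  by_cases h : ∃ k ∈ s, f k t ≠ 0
  · obtain ⟨k, hk, hkt⟩ := h
    have eq_zero (l : ι) (hlk : l ≠ k) : f l t = 0 :=
      by_contra fun hlt => (hdisj hlk).le_bot ⟨hlt, hkt⟩
    rw [Finset.sum_eq_single_of_mem k hk fun l _ => eq_zero l]
    exact ((f k).norm_coe_le_norm t).trans (hf k)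
  · push Not at h
    simpa [Finset.sum_eq_zero h] using hC

section WellOrdered

variable {X : Type*} [LinearOrder X] [TopologicalSpace X] [OrderTopology X]

theorem exists_mem_Ico_forall_mem_Ioc_abs_sub_le (f : C(X, ℝ)) {a b : X} (hab : a < b) {ε : ℝ}
    (hε : 0 < ε) : ∃ a' ∈ Set.Ico a b, ∀ t ∈ Set.Ioc a' b, |f t - f b| ≤ ε := by
  have hball : f ⁻¹' Metric.closedBall (f b) ε ∈ 𝓝 b :=
    f.continuous.continuousAt (Metric.closedBall_mem_nhds _ hε)
  obtain ⟨a', ha', hsub⟩ := exists_Ioc_subset_of_mem_nhds' hball hab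
  exact ⟨a', ha', fun t ht => hsub ht⟩

variable [WellFoundedLT X]

theorem isClopen_Iic_of_wellFoundedLT (b : X) : IsClopen (Set.Iic b) := by
  refine ⟨isClosed_Iic, ?_⟩
  by_cases hb : IsMax b
  · have : Set.Iic b = Set.univ := Set.eq_univ_of_forall fun _ => le_of_not_gt hb.not_lt
    exact this ▸ isOpen_univ
  · obtain ⟨c, hc⟩ := exists_covBy_of_wellFoundedLT hb
    exact hc.Iio_eq ▸ isOpen_Iio

theorem isClopen_Ioc_of_wellFoundedLT (a b : X) : IsClopen (Set.Ioc a b) := by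
  rw [← Set.Ioi_inter_Iic, ← Set.compl_Iic]
  exact (isClopen_Iic_of_wellFoundedLT a).compl.inter (isClopen_Iic_of_wellFoundedLT b)

/-- The indicator function of the initial segment `Iic b` of a well-ordered space; these functions
span a dense subspace of the continuous functions, which makes them the building blocks below. -/
noncomputable def iicIndicator (b : X) : C(X, ℝ) :=
  LocallyConstant.charFn ℝ (isClopen_Iic_of_wellFoundedLT b)

theorem iicIndicator_apply (b t : X) : iicIndicator b t = if t ≤ b then 1 else 0 := by
  simp [iicIndicator, LocallyConstant.coe_charFn, Set.indicator_apply]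

theorem iicIndicator_top [OrderTop X] : iicIndicator (⊤ : X) = 1 := by
  ext t
  simp [iicIndicator_apply]

theorem iicIndicator_mul_iicIndicator (a b : X) :
    iicIndicator a * iicIndicator b = iicIndicator (min a b) := by
  ext t
  simp only [ContinuousMap.mul_apply, iicIndicator_apply, le_min_iff]
  split_ifs <;> simp_all

variable [CompactSpace X]

theorem dense_span_range_iicIndicator [OrderTop X] :
    Dense (Submodule.span ℝ (Set.range (iicIndicator (X := X))) : Set C(X, ℝ)) := by
  let S : Submonoid C(X, ℝ) :=
    { carrier := Set.range iicIndicator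
      one_mem' := ⟨⊤, iicIndicator_top⟩
      mul_mem' := by
        rintro _ _ ⟨a, rfl⟩ ⟨b, rfl⟩
        exact ⟨min a b, (iicIndicator_mul_iicIndicator a b).symm⟩ }
  have hspan : Submodule.span ℝ (Set.range (iicIndicator (X := X))) =
      Subalgebra.toSubmodule (Algebra.adjoin ℝ (S : Set C(X, ℝ))) := by
    rw [Algebra.adjoin_eq_span, S.closure_eq]
    rfl
  have hsep : (Algebra.adjoin ℝ (S : Set C(X, ℝ))).SeparatesPoints := by
    intro x y hxy
    wlog hlt : x < y generalizing x y
    · obtain ⟨f, hf, hne⟩ := this hxy.symm (hxy.lt_or_gt.resolve_left hlt)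
      exact ⟨f, hf, hne.symm⟩
    · refine ⟨_, ⟨_, Algebra.subset_adjoin ⟨x, rfl⟩, rfl⟩, ?_⟩
      simp [iicIndicator_apply, hlt.not_ge]
  have hdense := ContinuousMap.subalgebra_topologicalClosure_eq_top_of_separatesPoints _ hsep
  rw [hspan, dense_iff_closure_eq]
  exact congrArg (SetLike.coe (A := Subalgebra ℝ C(X, ℝ))) hdense

theorem norm_mul_iicIndicator_le (f : C(X, ℝ)) (b : X) : ‖f * iicIndicator b‖ ≤ ‖f‖ := by
  refine (ContinuousMap.norm_le _ (norm_nonneg f)).2 fun t => ?_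
  by_cases ht : t ≤ b
  · simpa [iicIndicator_apply, ht] using f.norm_coe_le_norm t
  · simp [iicIndicator_apply, ht]

variable {F : Type*} [NormedAddCommGroup F] [NormedSpace ℝ F]

theorem exists_norm_mul_iicIndicator_sub_lt {f : C(X, ℝ)} {a b : X} (hab : a < b)
    (hf : Function.support f ⊆ Set.Ioo a b) {δ : ℝ} (hδ : 0 < δ) :
    ∃ a' ∈ Set.Ico a b, ‖f * iicIndicator a' - f‖ < δ := by
  obtain ⟨a', ha', hsmall⟩ := exists_mem_Ico_forall_mem_Ioc_abs_sub_le f hab (half_pos hδ)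
  have hfb : f b = 0 := Function.notMem_support.1 fun h => lt_irrefl b (hf h).2
  refine ⟨a', ha', ((ContinuousMap.norm_le _ (half_pos hδ).le).2 fun t => ?_).trans_lt
    (half_lt_self hδ)⟩
  by_cases ht : t ∈ Set.Ioc a' b
  · simpa [iicIndicator_apply, ht.1.not_ge, hfb] using hsmall t ht
  · have : t ≤ a' ∨ f t = 0 := by
      by_contra! h
      exact ht ⟨h.1, (hf h.2).2.le⟩
    rcases this with h | h <;> simp [iicIndicator_apply, h, (half_pos hδ).le]

theorem exists_hump (A : C(X, ℝ) →L[ℝ] F) {f : C(X, ℝ)} {a b : X} {ε : ℝ} (hab : a < b)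
    (hf : Function.support f ⊆ Set.Ioo a b) (hAf : ε * ‖f‖ < ‖A f‖) :
    ∃ a' ∈ Set.Ico a b, ∃ g : C(X, ℝ), ‖g‖ ≤ 1 ∧ Function.support g ⊆ Set.Ioc a a' ∧
      ε ≤ ‖A g‖ := by
  have hf0 : 0 < ‖f‖ := norm_pos_iff.2 (by rintro rfl; simp at hAf)
  set h := ‖f‖⁻¹ • f with hh
  have hAh : ε < ‖A h‖ := by
    rwa [map_smul, norm_smul, norm_inv, norm_norm, lt_inv_mul_iff₀ hf0, mul_comm]
  have hh1 : ‖h‖ = 1 := by rw [norm_smul, norm_inv, norm_norm, inv_mul_cancel₀ hf0.ne']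
  have hsupp : Function.support h ⊆ Set.Ioo a b := fun t ht =>
    hf fun hft => ht (by simp [hh, hft])
  obtain ⟨δ, hδ, hball⟩ :=
    Metric.isOpen_iff.1 (isOpen_lt continuous_const A.continuous.norm) h hAh
  obtain ⟨a', ha', hlt⟩ := exists_norm_mul_iicIndicator_sub_lt hab hsupp hδ
  refine ⟨a', ha', h * iicIndicator a', (norm_mul_iicIndicator_le h a').trans_eq hh1,
    fun t ht => ?_, (hball (mem_ball_iff_norm.2 hlt)).le⟩
  have hta' : t ≤ a' := by
    by_contra h'
    simp [iicIndicator_apply, h'] at ht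
  exact ⟨(hsupp (left_ne_zero_of_mul ht)).1, hta'⟩

/-- Otherwise there would be disjointly supported functions in the unit ball on which `A` is bounded
below, although their partial sums are bounded. -/
theorem exists_forall_support_subset_norm_le {A : C(X, ℝ) →L[ℝ] F} (hA : IsCompactOperator A)
    {b : X} (hb : ¬IsMin b) {ε : ℝ} (hε : 0 < ε) :
    ∃ a < b, ∀ f : C(X, ℝ), Function.support f ⊆ Set.Ioo a b → ‖A f‖ ≤ ε * ‖f‖ := by
  by_contra! hcon
  obtain ⟨a₀, ha₀⟩ := not_isMin_iff.1 hb
  have step (a : Set.Iio b) : ∃ a' : Set.Iio b, a ≤ a' ∧ ∃ g : C(X, ℝ), ‖g‖ ≤ 1 ∧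
      Function.support g ⊆ Set.Ioc a.1 a'.1 ∧ ε ≤ ‖A g‖ := by
    obtain ⟨f, hf, hAf⟩ := hcon a a.2
    obtain ⟨a', ha', g, hg⟩ := exists_hump A a.2 hf hAf
    exact ⟨⟨a', ha'.2⟩, ha'.1, g, hg⟩
  choose next le_next hump norm_hump support_hump le_norm_hump using step
  let u : ℕ → Set.Iio b := fun k => next^[k] ⟨a₀, ha₀⟩
  have u_succ (k : ℕ) : u (k + 1) = next (u k) := Function.iterate_succ_apply' _ _ _
  have u_mono : Monotone fun k => (u k).1 := monotone_nat_of_le_succ fun k => by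
    rw [u_succ]
    exact le_next _
  have support_subset (k : ℕ) :
      Function.support (hump (u k)) ⊆ Set.Ioc (u k).1 (u (k + 1)).1 := by
    rw [u_succ]
    exact support_hump _
  have hdisj : Pairwise (Function.onFun Disjoint fun k => Function.support (hump (u k))) :=
    u_mono.pairwise_disjoint_on_Ioc_succ.mono fun k l hkl =>
      hkl.mono (support_subset k) (support_subset l)
  have hlim := tendsto_zero_of_isCompactOperator_of_norm_sum_le hA
    (norm_sum_le_of_pairwise_disjoint_support zero_le_one (fun k => norm_hump (u k)) hdisj)
  exact hε.not_ge ((ge_of_tendsto' hlim.norm fun k => le_norm_hump _).trans_eq norm_zero)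

/-- Multiplication by `iicIndicator b`, i.e. restriction of functions to `Iic b` extended by zero,
as an operator. -/
noncomputable def mulIicIndicator (b : X) : C(X, ℝ) →L[ℝ] C(X, ℝ) :=
  (ContinuousLinearMap.mul ℝ C(X, ℝ)).flip (iicIndicator b)

theorem mulIicIndicator_apply (b : X) (f : C(X, ℝ)) : mulIicIndicator b f = f * iicIndicator b :=
  rfl

theorem comp_mulIicIndicator_of_isMin (A : C(X, ℝ) →L[ℝ] F) {b : X} (hb : IsMin b) :
    A.comp (mulIicIndicator b) =
      (ContinuousMap.evalCLM ℝ b).smulRight (A (iicIndicator b)) := by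
  ext f
  have : mulIicIndicator b f = f b • iicIndicator b := by
    ext t
    by_cases ht : t ≤ b
    · simp [mulIicIndicator_apply, hb.eq_of_le ht]
    · simp [mulIicIndicator_apply, iicIndicator_apply, ht]
  simp [this]

theorem exists_norm_comp_mulIicIndicator_sub_le {A : C(X, ℝ) →L[ℝ] F} (hA : IsCompactOperator A)
    {b : X} (hb : ¬IsMin b) {ε : ℝ} (hε : 0 < ε) :
    ∃ a < b, ‖A.comp (mulIicIndicator b) - (A.comp (mulIicIndicator a) +
      (ContinuousMap.evalCLM ℝ b).smulRight (A (iicIndicator b - iicIndicator a)))‖ ≤ ε := by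
  obtain ⟨a, hab, hsmall⟩ := exists_forall_support_subset_norm_le hA hb (half_pos hε)
  refine ⟨a, hab, ContinuousLinearMap.opNorm_le_bound _ hε.le fun f => ?_⟩
  set g : C(X, ℝ) := (f - f b • 1) * (iicIndicator b - iicIndicator a) with hg
  have g_eq : g = f * iicIndicator b - (f * iicIndicator a +
      f b • (iicIndicator b - iicIndicator a)) := by
    rw [hg, sub_mul, mul_sub, smul_mul_assoc, one_mul, sub_sub]
  have g_apply (t : X) : g t = if t ∈ Set.Ioc a b then f t - f b else 0 := by
    by_cases h₁ : t ≤ a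
    · simp [hg, iicIndicator_apply, h₁, h₁.trans hab.le]
    · by_cases h₂ : t ≤ b <;> simp [hg, iicIndicator_apply, h₁, h₂, lt_of_not_ge]
  have g_norm : ‖g‖ ≤ 2 * ‖f‖ := by
    refine (ContinuousMap.norm_le _ (by positivity)).2 fun t => ?_
    rw [g_apply]
    split_ifs
    · linarith [norm_sub_le (f t) (f b), f.norm_coe_le_norm t, f.norm_coe_le_norm b]
    · simp
  have g_support : Function.support g ⊆ Set.Ioo a b := fun t ht => by
    rw [Function.mem_support, g_apply, ite_ne_right_iff, sub_ne_zero] at ht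
    exact ⟨ht.1.1, ht.1.2.lt_of_ne fun htb => ht.2 (by rw [htb])⟩
  calc _ = ‖A g‖ := by simp [g_eq, mulIicIndicator_apply]
    _ ≤ ε / 2 * ‖g‖ := hsmall g g_support
    _ ≤ ε / 2 * (2 * ‖f‖) := by gcongr
    _ = ε * ‖f‖ := by ring

theorem mem_of_isCompactOperator_of_forall_evalCLM_smulRight_mem [OrderTop X]
    {W : Submodule ℝ (C(X, ℝ) →L[ℝ] F)}
    (hW : IsClosed (W : Set (C(X, ℝ) →L[ℝ] F)))
    (heval : ∀ (c : X) (y : F), (ContinuousMap.evalCLM ℝ c).smulRight y ∈ W)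
    {A : C(X, ℝ) →L[ℝ] F} (hA : IsCompactOperator A) : A ∈ W := by
  have comp_mem (b : X) : A.comp (mulIicIndicator b) ∈ W := by
    induction b using WellFoundedLT.induction with
    | ind b ih =>
      by_cases hb : IsMin b
      · exact comp_mulIicIndicator_of_isMin A hb ▸ heval b _
      · rw [← SetLike.mem_coe, ← hW.closure_eq]
        refine (SeminormedAddCommGroup.mem_closure_iff (E := C(X, ℝ) →L[ℝ] F)).2 fun ε hε => ?_
        obtain ⟨a, hab, hle⟩ := exists_norm_comp_mulIicIndicator_sub_le hA hb (half_pos hε)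
        exact ⟨_, W.add_mem (ih a hab) (heval b _), hle.trans_lt (half_lt_self hε)⟩
  have hid : mulIicIndicator (⊤ : X) = ContinuousLinearMap.id ℝ _ := by
    ext1 f
    rw [mulIicIndicator_apply, iicIndicator_top, mul_one, ContinuousLinearMap.id_apply]
  simpa [hid] using comp_mem ⊤

theorem dense_span_range_rankOne_iicIndicator [OrderTop X] :
    Dense (Submodule.span ℝ (Set.range fun p : X × X =>
      compactOperators.rankOne (iicIndicator p.1) (ContinuousMap.evalCLM ℝ p.2)) :
        Set (compactOperators ℝ C(X, ℝ))) := by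
  set V := Submodule.span ℝ (Set.range fun p : X × X =>
    compactOperators.rankOne (iicIndicator p.1) (ContinuousMap.evalCLM ℝ p.2))
  set W := (V.map (compactOperators ℝ C(X, ℝ)).toSubmodule.subtype).topologicalClosure
  have heval (c : X) (y : C(X, ℝ)) : (ContinuousMap.evalCLM ℝ c).smulRight y ∈ W := by
    let Φ := ContinuousLinearMap.smulRightL ℝ C(X, ℝ) C(X, ℝ) (ContinuousMap.evalCLM ℝ c)
    have hle : Submodule.span ℝ (Set.range iicIndicator) ≤ W.comap (Φ : C(X, ℝ) →ₗ[ℝ] _) := by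
      rw [Submodule.span_le]
      rintro _ ⟨a, rfl⟩
      exact Submodule.le_topologicalClosure _
        ⟨_, Submodule.subset_span ⟨(a, c), rfl⟩, rfl⟩
    exact closure_minimal hle
      ((Submodule.isClosed_topologicalClosure _).preimage Φ.continuous)
      (dense_span_range_iicIndicator y)
  exact Subtype.dense_iff.2 fun A hA =>
    mem_of_isCompactOperator_of_forall_evalCLM_smulRight_mem
      (Submodule.isClosed_topologicalClosure _) heval hA

theorem exists_dense_continuousMap_mk_le (X : Type*) [LinearOrder X] [TopologicalSpace X]
    [OrderTopology X] [WellFoundedLT X] [CompactSpace X] [OrderTop X] :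
    ∃ D : Set C(X, ℝ), Dense D ∧ #D ≤ max ℵ₀ #X := by
  obtain ⟨D, hD, hcard⟩ := exists_dense_mk_le_of_dense_span
    (dense_span_range_iicIndicator (X := X))
  exact ⟨D, hD, hcard.trans (max_le_max le_rfl mk_range_le)⟩

theorem rankOne_one_evalCLM_injective [OrderTop X] : Function.Injective fun c : X =>
    compactOperators.rankOne (1 : C(X, ℝ)) (ContinuousMap.evalCLM ℝ c) := by
  have le_of_eq {c d : X} (h : compactOperators.rankOne (1 : C(X, ℝ))
      (ContinuousMap.evalCLM ℝ c) = compactOperators.rankOne 1 (ContinuousMap.evalCLM ℝ d)) :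
      d ≤ c := by
    have happly := congrArg (fun A : compactOperators ℝ C(X, ℝ) => A.1 (iicIndicator c) ⊤) h
    simp only [compactOperators.rankOne_apply, ContinuousMap.smul_apply, ContinuousMap.one_apply,
      ContinuousMap.evalCLM_apply, iicIndicator_apply] at happly
    simpa using happly
  exact fun c d h => le_antisymm (le_of_eq h.symm) (le_of_eq h)

theorem exists_dense_compactOperators_mk_eq (X : Type*) [LinearOrder X] [TopologicalSpace X]
    [OrderTopology X] [WellFoundedLT X] [CompactSpace X] [OrderTop X] [Infinite X] :
    ∃ D : Set (compactOperators ℝ C(X, ℝ)), Dense D ∧ #D = #X := by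
  obtain ⟨D, hD, hcard⟩ := exists_dense_mk_le_of_dense_span
    (dense_span_range_rankOne_iicIndicator (X := X))
  have hX : ℵ₀ ≤ #X := aleph0_le_mk X
  have hprod : max ℵ₀ #(X × X) ≤ #X := by rw [mk_prod, lift_id, mul_eq_self hX, max_eq_right hX]
  exact exists_dense_mk_eq hD ((hcard.trans (max_le_max le_rfl mk_range_le)).trans hprod) hX
    (mk_le_of_injective rankOne_one_evalCLM_injective)

end WellOrdered

/-! ### Basic sequences of `ℓ¹` type -/

section EllOne

variable {ι : Type*}

/-- The `ℓ¹` norm of a finitely supported family of reals. -/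
noncomputable def ellOneNorm (a : ι →₀ ℝ) : ℝ := a.sum fun _ c => |c|

theorem ellOneNorm_single (i : ι) (c : ℝ) : ellOneNorm (Finsupp.single i c) = |c| := by
  simp [ellOneNorm]

theorem ellOneNorm_smul (c : ℝ) (a : ι →₀ ℝ) : ellOneNorm (c • a) = |c| * ellOneNorm a := by
  simp only [ellOneNorm, Finsupp.mul_sum, ← abs_mul]
  exact Finsupp.sum_smul_index' fun _ => abs_zero

theorem ellOneNorm_add_of_disjoint {a b : ι →₀ ℝ} (h : Disjoint a.support b.support) :
    ellOneNorm (a + b) = ellOneNorm a + ellOneNorm b :=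
  Finsupp.sum_add_index_of_disjoint h _

theorem ellOneNorm_mapDomain {κ : Type*} {f : ι → κ} (hf : Function.Injective f) (a : ι →₀ ℝ) :
    ellOneNorm (a.mapDomain f) = ellOneNorm a :=
  Finsupp.sum_mapDomain_index_inj hf

theorem norm_linearCombination_le {E : Type*} [SeminormedAddCommGroup E] [NormedSpace ℝ E]
    {x : ι → E} {M : ℝ} (hx : ∀ i, ‖x i‖ ≤ M) (a : ι →₀ ℝ) :
    ‖Finsupp.linearCombination ℝ x a‖ ≤ M * ellOneNorm a := by
  rw [Finsupp.linearCombination_apply, ellOneNorm, Finsupp.mul_sum]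
  refine (norm_sum_le _ _).trans (Finset.sum_le_sum fun i _ => ?_)
  rw [norm_smul, Real.norm_eq_abs, mul_comm]
  exact mul_le_mul_of_nonneg_right (hx i) (abs_nonneg _)

/-- `x` is bounded by `C` and `C`-dominates the unit vector basis of `ℓ¹`, so that it spans an
isomorphic copy of `ℓ¹(ι)`. One constant is used for both bounds to save a parameter. -/
structure IsEllOne {E : Type*} [SeminormedAddCommGroup E] [NormedSpace ℝ E] (C : ℝ) (x : ι → E) :
    Prop where
  norm_le : ∀ i, ‖x i‖ ≤ C
  ellOneNorm_le : ∀ a : ι →₀ ℝ, ellOneNorm a ≤ C * ‖Finsupp.linearCombination ℝ x a‖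

namespace IsEllOne

variable {E F : Type*} [SeminormedAddCommGroup E] [NormedSpace ℝ E] [SeminormedAddCommGroup F]
  [NormedSpace ℝ F] {C C' : ℝ} {x : ι → E}

theorem mono (hx : IsEllOne C x) (hCC' : C ≤ C') : IsEllOne C' x where
  norm_le i := (hx.norm_le i).trans hCC'
  ellOneNorm_le a := (hx.ellOneNorm_le a).trans (by gcongr)

theorem map_continuousLinearEquiv (hx : IsEllOne C x) (hC : 0 ≤ C) (e : E ≃L[ℝ] F)
    (he : ‖(e : E →L[ℝ] F)‖ * C ≤ C') (he_symm : C * ‖(e.symm : F →L[ℝ] E)‖ ≤ C') :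
    IsEllOne C' (e ∘ x) where
  norm_le i := ((e : E →L[ℝ] F).le_opNorm_of_le (hx.norm_le i)).trans he
  ellOneNorm_le a := by
    have hle : ‖Finsupp.linearCombination ℝ x a‖ ≤
        ‖(e.symm : F →L[ℝ] E)‖ * ‖Finsupp.linearCombination ℝ (e ∘ x) a‖ := by
      have hmap : e (Finsupp.linearCombination ℝ x a) = Finsupp.linearCombination ℝ (e ∘ x) a :=
        Finsupp.apply_linearCombination ℝ (e : E →ₗ[ℝ] F) x a
      simpa [← hmap] using (e.symm : F →L[ℝ] E).le_opNorm (Finsupp.linearCombination ℝ (e ∘ x) a)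
    calc ellOneNorm a ≤ C * (‖(e.symm : F →L[ℝ] E)‖ * ‖Finsupp.linearCombination ℝ (e ∘ x) a‖) :=
          (hx.ellOneNorm_le a).trans (by gcongr)
      _ ≤ C' * ‖Finsupp.linearCombination ℝ (e ∘ x) a‖ := by
          rw [← mul_assoc]
          gcongr

theorem of_norm_sub_le {y : ι → E} {δ : ℝ} (hx : IsEllOne C x) (hC : 0 ≤ C) (hδC : δ ≤ C)
    (hδ : C * δ ≤ 1 / 2) (hxy : ∀ i, ‖x i - y i‖ ≤ δ) : IsEllOne (2 * C) y where
  norm_le i := by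
    linarith [norm_sub_norm_le (y i) (x i), norm_sub_rev (x i) (y i), hxy i, hx.norm_le i]
  ellOneNorm_le a := by
    have hsub : ‖Finsupp.linearCombination ℝ x a - Finsupp.linearCombination ℝ y a‖ ≤
        δ * ellOneNorm a := by
      have : Finsupp.linearCombination ℝ x a - Finsupp.linearCombination ℝ y a =
          Finsupp.linearCombination ℝ (x - y) a := by
        simp [Finsupp.linearCombination_apply, smul_sub, Finsupp.sum]
      exact this ▸ norm_linearCombination_le hxy a
    have htri := norm_sub_norm_le (Finsupp.linearCombination ℝ x a)
      (Finsupp.linearCombination ℝ y a)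
    have hpos : 0 ≤ ellOneNorm a := Finset.sum_nonneg fun _ _ => abs_nonneg _
    have : ellOneNorm a ≤ C * ‖Finsupp.linearCombination ℝ y a‖ + 1 / 2 * ellOneNorm a :=
      calc ellOneNorm a ≤ C * ‖Finsupp.linearCombination ℝ x a‖ := hx.ellOneNorm_le a
        _ ≤ C * (‖Finsupp.linearCombination ℝ y a‖ + δ * ellOneNorm a) := by
            gcongr
            linarith
        _ = C * ‖Finsupp.linearCombination ℝ y a‖ + C * δ * ellOneNorm a := by ring
        _ ≤ _ := by gcongr
    linarith

theorem of_forall_fin {x : ℕ → E} (hx : ∀ n, IsEllOne C fun i : Fin n => x i) : IsEllOne C x where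
  norm_le i := (hx (i + 1)).norm_le ⟨i, i.lt_succ_self⟩
  ellOneNorm_le a := by
    obtain ⟨n, hn⟩ := a.support.exists_nat_subset_range
    have hrange : (a.support : Set ℕ) ⊆ Set.range ((↑) : Fin n → ℕ) := fun i hi =>
      ⟨⟨i, Finset.mem_range.1 (hn hi)⟩, rfl⟩
    rw [← Finsupp.mapDomain_comapDomain _ Fin.val_injective a hrange,
      ellOneNorm_mapDomain Fin.val_injective, Finsupp.linearCombination_mapDomain]
    exact (hx n).ellOneNorm_le _

end IsEllOne

end EllOne

section SmallBlocks

variable {X : Type*} [TopologicalSpace X] {L : (ℕ →₀ ℝ) →ₗ[ℝ] C(X, ℝ)} {s : Set X}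

theorem exists_disjoint_support_of_mem_supported_Ici (a : ℕ →₀ ℝ) (m : ℕ) :
    ∃ m' ≥ m, ∀ b ∈ Finsupp.supported ℝ ℝ (Set.Ici m'), Disjoint a.support b.support := by
  obtain ⟨n, hn⟩ := a.support.exists_nat_subset_range
  refine ⟨max m n, le_max_left m n, fun b hb => Finset.disjoint_left.2 fun i hia hib => ?_⟩
  exact (Finset.mem_range.1 (hn hia)).not_ge ((le_max_right m n).trans (hb hib))

/-- Arbitrarily far out there are `ℓ¹`-normalized finite blocks whose image under `L` is uniformly
small on `s`. -/
def HasSmallBlocks (L : (ℕ →₀ ℝ) →ₗ[ℝ] C(X, ℝ)) (s : Set X) : Prop :=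
  ∀ (m : ℕ) (ε : ℝ), 0 < ε → ∃ a ∈ Finsupp.supported ℝ ℝ (Set.Ici m), ellOneNorm a = 1 ∧
    ∀ t ∈ s, |L a t| ≤ ε

theorem hasSmallBlocks_empty : HasSmallBlocks L ∅ := fun m _ _ =>
  ⟨Finsupp.single m 1, Finsupp.single_mem_supported ℝ 1 Set.self_mem_Ici,
    by rw [ellOneNorm_single, abs_one], fun _ => False.elim⟩

/-- Two disjoint small blocks have a normalized combination, still small, whose values at the given
point cancel. -/
theorem HasSmallBlocks.exists_apply_eq_zero (h : HasSmallBlocks L s) (b : X) (m : ℕ) {ε : ℝ}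
    (hε : 0 < ε) : ∃ a ∈ Finsupp.supported ℝ ℝ (Set.Ici m), ellOneNorm a = 1 ∧
      (∀ t ∈ s, |L a t| ≤ ε) ∧ L a b = 0 := by
  obtain ⟨a₁, hsupp₁, hnorm₁, hsmall₁⟩ := h m ε hε
  by_cases hzero : L a₁ b = 0
  · exact ⟨a₁, hsupp₁, hnorm₁, hsmall₁, hzero⟩
  obtain ⟨m', hm', hdisj⟩ := exists_disjoint_support_of_mem_supported_Ici a₁ m
  obtain ⟨a₂, hsupp₂, hnorm₂, hsmall₂⟩ := h m' ε hε
  set u := L a₁ b with hu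
  set v := L a₂ b with hv
  have hpos : 0 < |u| + |v| := by positivity
  have abs_div_pos (c : ℝ) : |c / (|u| + |v|)| = |c| / (|u| + |v|) := by
    rw [abs_div, abs_of_pos hpos]
  refine ⟨(v / (|u| + |v|)) • a₁ + (-u / (|u| + |v|)) • a₂, ?_, ?_, fun t ht => ?_, ?_⟩
  · exact add_mem (Submodule.smul_mem _ _ hsupp₁) (Submodule.smul_mem _ _
      (Finsupp.supported_mono (Set.Ici_subset_Ici.2 hm') hsupp₂))
  · rw [ellOneNorm_add_of_disjoint ((hdisj a₂ hsupp₂).mono Finsupp.support_smul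
      Finsupp.support_smul), ellOneNorm_smul, ellOneNorm_smul, hnorm₁, hnorm₂, abs_div_pos,
      abs_div_pos, abs_neg]
    field_simp
    ring
  · simp only [map_add, map_smul, ContinuousMap.add_apply, ContinuousMap.smul_apply, smul_eq_mul]
    calc _ ≤ |v| / (|u| + |v|) * |L a₁ t| + |u| / (|u| + |v|) * |L a₂ t| := by
          refine (abs_add_le _ _).trans_eq ?_
          rw [abs_mul, abs_mul, abs_div_pos, abs_div_pos, abs_neg]
      _ ≤ |v| / (|u| + |v|) * ε + |u| / (|u| + |v|) * ε := by
          gcongr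
          exacts [hsmall₁ t ht, hsmall₂ t ht]
      _ = ε := by field_simp; ring
  · simp only [map_add, map_smul, ContinuousMap.add_apply, ContinuousMap.smul_apply, smul_eq_mul,
      ← hu, ← hv]
    ring

section WellOrdered

variable [LinearOrder X] [OrderTopology X] {b : X} {M : ℝ}

/-- A gliding hump: each new block vanishes at `b`, hence is small near `b`, and all later blocks
are chosen small where it is large. -/
theorem exists_ellOneNorm_eq_natCast_abs_le (hL : ∀ a t, |L a t| ≤ M * ellOneNorm a)
    (hsmall : ∀ c < b, HasSmallBlocks L (Set.Iic c)) {ε : ℝ} (hε : 0 < ε) (N m : ℕ) {c : X}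
    (hc : c < b) : ∃ a ∈ Finsupp.supported ℝ ℝ (Set.Ici m), ellOneNorm a = N ∧
      (∀ t ≤ c, |L a t| ≤ N * ε) ∧ ∀ t ≤ b, |L a t| ≤ N * ε + M := by
  induction N generalizing m c with
  | zero =>
    have hM : 0 ≤ M := by
      simpa [ellOneNorm_single] using (abs_nonneg _).trans (hL (Finsupp.single 0 1) b)
    exact ⟨0, zero_mem _, by simp [ellOneNorm], by simp, fun t _ => by simpa using hM⟩
  | succ N ih =>
    obtain ⟨a, ha_supp, ha_norm, ha_small, hab⟩ := (hsmall c hc).exists_apply_eq_zero b m hε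
    obtain ⟨c', ⟨hcc', hc'b⟩, ha_near⟩ := exists_mem_Ico_forall_mem_Ioc_abs_sub_le (L a) hc hε
    obtain ⟨m', hm', hdisj⟩ := exists_disjoint_support_of_mem_supported_Ici a m
    obtain ⟨d, hd_supp, hd_norm, hd_small, hd_bound⟩ := ih m' hc'b
    have abs_add_le (t : X) : |L (a + d) t| ≤ |L a t| + |L d t| := by
      rw [map_add, ContinuousMap.add_apply]
      exact abs_add_le _ _
    refine ⟨a + d, add_mem ha_supp (Finsupp.supported_mono (Set.Ici_subset_Ici.2 hm') hd_supp),
      ?_, fun t ht => ?_, fun t ht => ?_⟩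
    · rw [ellOneNorm_add_of_disjoint (hdisj d hd_supp), ha_norm, hd_norm, Nat.cast_succ, add_comm]
    · push_cast
      linarith [abs_add_le t, ha_small t ht, hd_small t (ht.trans hcc')]
    · push_cast
      rcases le_or_gt t c' with htc' | htc'
      · linarith [abs_add_le t, hL a t, hd_small t htc', congrArg (M * ·) ha_norm]
      · have := ha_near t ⟨htc', ht⟩
        rw [hab, sub_zero] at this
        linarith [abs_add_le t, hd_bound t ht]

theorem hasSmallBlocks_Iic [WellFoundedLT X] (hL : ∀ a t, |L a t| ≤ M * ellOneNorm a) (b : X) :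
    HasSmallBlocks L (Set.Iic b) := by
  induction b using WellFoundedLT.induction with
  | ind b ih =>
  intro m ε hε
  by_cases hb : IsMin b
  · obtain ⟨a, hsupp, hnorm, -, hab⟩ := hasSmallBlocks_empty.exists_apply_eq_zero b m hε
    refine ⟨a, hsupp, hnorm, fun t ht => ?_⟩
    rw [hb.eq_of_le ht, hab, abs_zero]
    exact hε.le
  · obtain ⟨c, hc⟩ := not_isMin_iff.1 hb
    obtain ⟨N, hN⟩ := exists_nat_gt (max 0 (M / (ε / 2)))
    obtain ⟨hN0, hMN⟩ := max_lt_iff.1 hN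
    rw [div_lt_iff₀ (half_pos hε)] at hMN
    obtain ⟨a, hsupp, hnorm, -, hbound⟩ :=
      exists_ellOneNorm_eq_natCast_abs_le hL ih (half_pos hε) N m hc
    refine ⟨(N : ℝ)⁻¹ • a, Submodule.smul_mem _ _ hsupp, ?_, fun t ht => ?_⟩
    · rw [ellOneNorm_smul, hnorm, abs_of_pos (inv_pos.2 hN0), inv_mul_cancel₀ hN0.ne']
    · rw [map_smul, ContinuousMap.smul_apply, smul_eq_mul, abs_mul, abs_of_pos (inv_pos.2 hN0),
        inv_mul_le_iff₀ hN0]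
      linarith [hbound t ht]

theorem not_isEllOne_of_wellFoundedLT [WellFoundedLT X] [CompactSpace X] [OrderTop X] (C : ℝ)
    (f : ℕ → C(X, ℝ)) : ¬IsEllOne C f := by
  intro hf
  set L := Finsupp.linearCombination ℝ f
  have hL (a : ℕ →₀ ℝ) (t : X) : |L a t| ≤ C * ellOneNorm a :=
    ((L a).norm_coe_le_norm t).trans (norm_linearCombination_le hf.norm_le a)
  have hC : 0 ≤ C := (norm_nonneg _).trans (hf.norm_le 0)
  have hε : 0 < (C + 1)⁻¹ := by positivity
  obtain ⟨a, -, hnorm, hsmall⟩ := hasSmallBlocks_Iic hL ⊤ 0 _ hε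
  have hLa : ‖L a‖ ≤ (C + 1)⁻¹ := (ContinuousMap.norm_le _ hε.le).2 fun t => hsmall t le_top
  have : (1 : ℝ) < 1 :=
    calc 1 ≤ C * ‖L a‖ := hnorm ▸ hf.ellOneNorm_le a
      _ ≤ C * (C + 1)⁻¹ := by gcongr
      _ < 1 := by rw [mul_inv_lt_iff₀ (by positivity)]; linarith
  exact lt_irrefl _ this

end WellOrdered

end SmallBlocks

/-! ### Trees of large rank -/

section Tree

universe u v

variable {ι κ : Type*} {P : ∀ n, (Fin n → ι) → Prop} {Q : ∀ n, (Fin n → κ) → Prop}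

/-- The node `x` of the tree of finite sequences satisfying `P` has rank at least `ρ`: it lies in
the tree and, for every `σ < ρ`, has an immediate successor of rank at least `σ`. -/
def TreeRankGE (P : ∀ n, (Fin n → ι) → Prop) (ρ : Ordinal.{u}) {n : ℕ} (x : Fin n → ι) : Prop :=
  P n x ∧ ∀ σ < ρ, ∃ y, TreeRankGE P σ (Fin.snoc x y : Fin (n + 1) → ι)
termination_by ρ

theorem treeRankGE_iff {ρ : Ordinal.{u}} {n : ℕ} {x : Fin n → ι} : TreeRankGE P ρ x ↔
    P n x ∧ ∀ σ < ρ, ∃ y, TreeRankGE P σ (Fin.snoc x y : Fin (n + 1) → ι) := by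
  rw [TreeRankGE]

namespace TreeRankGE

theorem anti {ρ σ : Ordinal.{u}} {n : ℕ} {x : Fin n → ι} (h : TreeRankGE P ρ x) (hσ : σ ≤ ρ) :
    TreeRankGE P σ x := by
  rw [treeRankGE_iff] at h ⊢
  exact ⟨h.1, fun τ hτ => h.2 τ (hτ.trans_le hσ)⟩

theorem map {ρ : Ordinal.{u}} {n : ℕ} {x : Fin n → ι} (h : TreeRankGE P ρ x) (f : ι → κ)
    (hf : ∀ n x, P n x → Q n (f ∘ x)) : TreeRankGE Q ρ (f ∘ x) := by
  induction ρ using WellFoundedLT.induction generalizing n with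
  | ind ρ ih =>
    rw [treeRankGE_iff] at h ⊢
    refine ⟨hf n x h.1, fun σ hσ => ?_⟩
    obtain ⟨y, hy⟩ := h.2 σ hσ
    exact ⟨f y, Fin.comp_snoc f x y ▸ ih σ hσ hy⟩

end TreeRankGE

variable {c : Cardinal.{u}}

theorem exists_lt_ord_forall_le_of_isRegular (hc : c.IsRegular) {ι : Type v}
    (hι : Cardinal.lift.{u} #ι < Cardinal.lift.{v} c) {f : ι → Ordinal.{u}}
    (hf : ∀ i, f i < c.ord) : ∃ s < c.ord, ∀ i, f i ≤ s := by
  refine ⟨⨆ i, f i, Ordinal.lift_iSup_lt_of_lt_cof ?_ hf, fun i => ?_⟩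
  · rwa [← Ordinal.lift_cof, hc.cof_ord]
  · exact le_ciSup ⟨c.ord, Set.forall_mem_range.2 fun j => (hf j).le⟩ i

theorem exists_forall_lt_ord_of_isRegular (hc : c.IsRegular) {ι : Type v}
    (hι : Cardinal.lift.{u} #ι < Cardinal.lift.{v} c) {R : ι → Ordinal.{u} → Prop}
    (hR : ∀ i, Antitone (R i)) (h : ∀ ρ < c.ord, ∃ i, R i ρ) : ∃ i, ∀ ρ < c.ord, R i ρ := by
  by_contra! hcon
  choose σ hσ hRσ using hcon
  obtain ⟨s, hs, hσs⟩ := exists_lt_ord_forall_le_of_isRegular hc hι hσ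
  obtain ⟨i, hi⟩ := h s hs
  exact hRσ i (hR i (hσs i) hi)

theorem TreeRankGE.exists_forall_snoc (hc : c.IsRegular) {ι : Type v}
    (hι : Cardinal.lift.{u} #ι < Cardinal.lift.{v} c) {P : ∀ n, (Fin n → ι) → Prop}
    {n : ℕ} {x : Fin n → ι} (h : ∀ ρ < c.ord, TreeRankGE P ρ x) :
    ∃ y, ∀ ρ < c.ord, TreeRankGE P ρ (Fin.snoc x y : Fin (n + 1) → ι) :=
  exists_forall_lt_ord_of_isRegular hc hι (fun _ _ _ hσρ hρ => hρ.anti hσρ) fun ρ hρ =>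
    (treeRankGE_iff.1 (h _ ((isSuccLimit_ord hc.aleph0_le).succ_lt hρ))).2 ρ (Order.lt_succ ρ)

theorem TreeRankGE.exists_branch (hc : c.IsRegular) {ι : Type v}
    (hι : Cardinal.lift.{u} #ι < Cardinal.lift.{v} c) {P : ∀ n, (Fin n → ι) → Prop}
    {x : Fin 0 → ι} (h : ∀ ρ < c.ord, TreeRankGE P ρ x) :
    ∃ z : ℕ → ι, ∀ n, P n fun i : Fin n => z i := by
  choose next hnext using fun n (x : {x : Fin n → ι // ∀ ρ < c.ord, TreeRankGE P ρ x}) =>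
    TreeRankGE.exists_forall_snoc hc hι x.2
  let node (n : ℕ) : {x : Fin n → ι // ∀ ρ < c.ord, TreeRankGE P ρ x} :=
    Nat.rec ⟨x, h⟩ (fun n x => ⟨Fin.snoc x.1 (next n x), hnext n x⟩) n
  have node_succ (n : ℕ) : (node (n + 1)).1 = Fin.snoc (node n).1 (next n (node n)) := rfl
  let z (n : ℕ) : ι := next n (node n)
  have node_eq (n : ℕ) : (node n).1 = fun i : Fin n => z i := by
    induction n with
    | zero => exact Subsingleton.elim _ _
    | succ n ih =>
      rw [node_succ, ih]
      ext i
      cases i using Fin.lastCases with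
      | last => simp [z]
      | cast i => simp
  exact ⟨z, fun n => node_eq n ▸ (treeRankGE_iff.1 ((node n).2 0 hc.ord_pos)).1⟩

end Tree

section EllOneTree

universe u v

variable {E : Type*} [SeminormedAddCommGroup E] [NormedSpace ℝ E]
  {F : Type v} [SeminormedAddCommGroup F] [NormedSpace ℝ F] {C : ℝ} {ρ : Ordinal.{u}}

/-- The tree of finite sequences in `E` that are `C`-equivalent to the unit vector basis of `ℓ¹`
has rank at least `ρ`. Over all `ρ` this is Bourgain's `ℓ¹`-index of `E`. -/
def HasEllOneTree (E : Type*) [SeminormedAddCommGroup E] [NormedSpace ℝ E] (C : ℝ)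
    (ρ : Ordinal.{u}) : Prop :=
  TreeRankGE (fun _ x => IsEllOne C x) ρ (Fin.elim0 : Fin 0 → E)

theorem HasEllOneTree.anti {σ : Ordinal.{u}} (h : HasEllOneTree E C ρ) (hσ : σ ≤ ρ) :
    HasEllOneTree E C σ :=
  TreeRankGE.anti h hσ

theorem HasEllOneTree.exists_of_continuousLinearEquiv (h : HasEllOneTree E C ρ) (hC : 0 ≤ C)
    (e : E ≃L[ℝ] F) : ∃ N : ℕ, HasEllOneTree F N ρ := by
  obtain ⟨N, hN⟩ := exists_nat_ge
    (max (‖(e : E →L[ℝ] F)‖ * C) (C * ‖(e.symm : F →L[ℝ] E)‖))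
  have hmap := TreeRankGE.map h e fun n x hx =>
    hx.map_continuousLinearEquiv hC e ((le_max_left _ _).trans hN) ((le_max_right _ _).trans hN)
  rw [Subsingleton.elim (e ∘ Fin.elim0) (Fin.elim0 : Fin 0 → F)] at hmap
  exact ⟨N, hmap⟩

/-- Moving the trees into `D` bounds the branching below `c`, so that some branch keeps nodes of
every rank below `c`. -/
theorem exists_isEllOne_of_forall_hasEllOneTree {c : Cardinal.{u}} (hc : c.IsRegular)
    (hc₀ : ℵ₀ < c) {D : Set F} (hD : Dense D) (hDc : Cardinal.lift.{u} #D < Cardinal.lift.{v} c)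
    (h : ∀ ρ < c.ord, ∃ N : ℕ, HasEllOneTree F N ρ) :
    ∃ (C : ℝ) (x : ℕ → F), IsEllOne C x := by
  obtain ⟨N, hN⟩ := exists_forall_lt_ord_of_isRegular hc
    (R := fun N : ℕ => HasEllOneTree F N) (by simpa using hc₀) (fun _ _ _ hσρ hρ => hρ.anti hσρ) h
  have hδ : 0 < 1 / (2 * (N + 1 : ℝ)) := by positivity
  choose near hnear using fun x : F => hD.exists_dist_lt x hδ
  let nearD (x : F) : D := ⟨near x, (hnear x).1⟩
  have htree : ∀ ρ < c.ord, TreeRankGE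
      (fun _ (x : Fin _ → D) => IsEllOne (2 * (N + 1 : ℝ)) fun i => (x i : F)) ρ
      (nearD ∘ Fin.elim0) := fun ρ hρ => (hN ρ hρ).map nearD fun n x hx =>
    (hx.mono (le_add_of_nonneg_right zero_le_one)).of_norm_sub_le (by positivity)
      (by rw [div_le_iff₀ (by positivity)]; nlinarith [N.cast_nonneg (α := ℝ)])
      (by field_simp; norm_num) fun i => (dist_eq_norm (x i) _ ▸ (hnear (x i)).2).le
  obtain ⟨z, hz⟩ := TreeRankGE.exists_branch hc hDc htree
  exact ⟨_, fun n => z n, IsEllOne.of_forall_fin hz⟩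

end EllOneTree

/-! ### Trees in spaces of continuous functions on ordinals -/

section SignPatterns

open Ordinal

universe u

variable {α δ ε : Ordinal.{u}} {n : ℕ} {x : Fin n → C(Set.Iic α, ℝ)}

/-- Every pattern of signs is the common value of the functions `x i` on some interval of length
`δ`. -/
def RealizesSigns (δ : Ordinal.{u}) {n : ℕ} (x : Fin n → C(Set.Iic α, ℝ)) : Prop :=
  ∀ s : Fin n → ℤˣ, ∃ a b : Set.Iic α, (b : Ordinal.{u}) = a + δ ∧
    ∀ t ∈ Set.Ioc a b, ∀ i, x i t = ((s i : ℤ) : ℝ)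

theorem RealizesSigns.isEllOne (h : RealizesSigns δ x) (hδ : 0 < δ) (hx : ∀ i, ‖x i‖ ≤ 1) :
    IsEllOne 1 x where
  norm_le := hx
  ellOneNorm_le c := by
    obtain ⟨a, b, hb, hs⟩ := h fun i => if 0 ≤ c i then 1 else -1
    have hab : a < b := by
      rw [← Subtype.coe_lt_coe, hb]
      exact lt_add_of_pos_right _ hδ
    have hval : Finsupp.linearCombination ℝ x c b = ellOneNorm c := by
      rw [Finsupp.linearCombination_apply, Finsupp.sum, ContinuousMap.coe_sum, Finset.sum_apply]
      refine Finset.sum_congr rfl fun i _ => ?_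
      rw [ContinuousMap.smul_apply, hs b ⟨hab, le_rfl⟩ i, _root_.smul_eq_mul]
      split_ifs with hi
      · simp [abs_of_nonneg hi]
      · simp [abs_of_neg (not_le.1 hi)]
    rw [one_mul, ← hval]
    exact (Real.le_norm_self _).trans (ContinuousMap.norm_coe_le_norm _ b)

theorem exists_continuousMap_eq_one_of_isClopen {X : Type*} [TopologicalSpace X] [CompactSpace X]
    {U : Set X} (hU : IsClopen U) :
    ∃ y : C(X, ℝ), ‖y‖ ≤ 1 ∧ (∀ t ∈ U, y t = 1) ∧ ∀ t ∉ U, y t = -1 := by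
  classical
  refine ⟨⟨U.piecewise 1 (-1), continuous_one.piecewise (by simp [hU.frontier_eq])
    continuous_one.neg⟩, (ContinuousMap.norm_le _ zero_le_one).2 fun t => ?_,
    fun t ht => by simp [ht], fun t ht => by simp [ht]⟩
  by_cases ht : t ∈ U <;> simp [ht]

theorem RealizesSigns.exists_halves (h : RealizesSigns δ x) (hεδ : ε + ε ≤ δ) (s : Fin n → ℤˣ) :
    ∃ a m b : Set.Iic α, (m : Ordinal.{u}) = a + ε ∧ (b : Ordinal.{u}) = m + ε ∧
      ∀ t ∈ Set.Ioc a b, ∀ i, x i t = ((s i : ℤ) : ℝ) := by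
  obtain ⟨a, d, hd, hs⟩ := h s
  have hbd : (a : Ordinal.{u}) + ε + ε ≤ d := by
    rw [hd, add_assoc]
    gcongr
  exact ⟨a, ⟨a + ε, (le_self_add.trans hbd).trans d.2⟩, ⟨a + ε + ε, hbd.trans d.2⟩, rfl, rfl,
    fun t ht => hs t ⟨ht.1, ht.2.trans hbd⟩⟩

theorem RealizesSigns.exists_snoc (h : RealizesSigns δ x) (hεδ : ε + ε ≤ δ) :
    ∃ y, ‖y‖ ≤ 1 ∧ RealizesSigns ε (Fin.snoc x y : Fin (n + 1) → C(Set.Iic α, ℝ)) := by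
  choose a m b hm hb hs using h.exists_halves hεδ
  have ham (s) : a s ≤ m s := Subtype.coe_le_coe.1 (hm s ▸ le_self_add)
  have hmb (s) : m s ≤ b s := Subtype.coe_le_coe.1 (hb s ▸ le_self_add)
  obtain ⟨y, hy, hy_one, hy_neg⟩ := exists_continuousMap_eq_one_of_isClopen
    (U := ⋃ s, Set.Ioc (a s) (m s))
    (isClopen_iUnion_of_finite fun s => isClopen_Ioc_of_wellFoundedLT _ _)
  -- The values of `x` at `t` determine the pattern of the interval containing `t`.
  have hy_right (s) (t) (ht : t ∈ Set.Ioc (m s) (b s)) : y t = -1 := by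
    refine hy_neg t fun htU => ?_
    obtain ⟨r, hr⟩ := Set.mem_iUnion.1 htU
    have hrs : r = s := funext fun i => Units.ext <| Int.cast_injective (α := ℝ) <|
      (hs r t ⟨hr.1, hr.2.trans (hmb r)⟩ i).symm.trans (hs s t ⟨(ham s).trans_lt ht.1, ht.2⟩ i)
    exact ht.1.not_ge (hrs ▸ hr.2)
  refine ⟨y, hy, fun s => ?_⟩
  rcases Int.units_eq_one_or (s (Fin.last n)) with hlast | hlast
  · refine ⟨_, _, hm (Fin.init s), fun t ht i => ?_⟩
    cases i using Fin.lastCases with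
    | last => simp [hlast, hy_one t (Set.mem_iUnion.2 ⟨_, ht⟩)]
    | cast i => simpa [Fin.init] using hs _ t ⟨ht.1, ht.2.trans (hmb _)⟩ i
  · refine ⟨_, _, hb (Fin.init s), fun t ht i => ?_⟩
    cases i using Fin.lastCases with
    | last => simp [hlast, hy_right _ t ht]
    | cast i => simpa [Fin.init] using hs _ t ⟨(ham _).trans_lt ht.1, ht.2⟩ i

theorem RealizesSigns.treeRankGE {ρ : Ordinal.{u}} (h : RealizesSigns (ω ^ ρ) x)
    (hx : ∀ i, ‖x i‖ ≤ 1) : TreeRankGE (fun _ x => IsEllOne 1 x) ρ x := by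
  induction ρ using WellFoundedLT.induction generalizing n with
  | ind ρ ih =>
    refine treeRankGE_iff.2 ⟨h.isEllOne (opow_pos ρ omega0_pos) hx, fun σ hσ => ?_⟩
    have hlt : ω ^ σ < ω ^ ρ := (opow_lt_opow_iff_right one_lt_omega0).2 hσ
    obtain ⟨y, hy, hsnoc⟩ := h.exists_snoc (isPrincipal_add_omega0_opow ρ hlt hlt).le
    refine ⟨y, ih σ hσ hsnoc fun i => ?_⟩
    cases i using Fin.lastCases with
    | last => simpa using hy
    | cast i => simpa using hx i

theorem hasEllOneTree_of_opow_le {ρ : Ordinal.{u}} (h : ω ^ ρ ≤ α) :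
    HasEllOneTree C(Set.Iic α, ℝ) 1 ρ :=
  RealizesSigns.treeRankGE
    (fun _ => ⟨⊥, ⟨ω ^ ρ, h⟩, (zero_add _).symm, fun _ _ i => i.elim0⟩) fun i => i.elim0

end SignPatterns

/-! ### Counting isomorphism classes -/

section Counting

universe u

variable {c lam : Cardinal.{u}} {α : Ordinal.{u}}

theorem mk_Iic_eq_lift (hlam : ℵ₀ ≤ lam) (hα : lam.ord ≤ α) (hα' : α < (Order.succ lam).ord) :
    #(Set.Iic α) = Cardinal.lift.{u + 1} lam := by
  have hsucc : Order.succ α < (Order.succ lam).ord :=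
    (isSuccLimit_ord (hlam.trans (Order.le_succ lam))).succ_lt hα'
  rw [← Order.Iio_succ, mk_Iio_ordinal, lift_inj]
  exact le_antisymm (Order.lt_succ_iff.1 (lt_ord.1 hsucc))
    (ord_le.1 (hα.trans (Order.le_succ α)))

theorem mk_quotient_eq_lift_of_forall_bounded (hc : c.IsRegular) {μ : Ordinal.{u}} (hμ : μ < c.ord)
    (s : Setoid {α : Ordinal.{u} // μ ≤ α ∧ α < c.ord})
    (hs : ∀ a, ∃ γ < c.ord, ∀ b, s b a → b.1 < γ) :
    #(Quotient s) = Cardinal.lift.{u + 1} c := by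
  refine le_antisymm ?_ (le_of_not_gt fun hlt => ?_)
  · calc #(Quotient s) ≤ #{α : Ordinal.{u} // μ ≤ α ∧ α < c.ord} := mk_quotient_le
      _ ≤ #(Set.Iio c.ord) := mk_subtype_mono fun _ h => h.2
      _ = Cardinal.lift.{u + 1} c := by rw [mk_Iio_ordinal, card_ord]
  · choose γ hγ hlt_γ using fun q : Quotient s => hs q.out
    obtain ⟨τ, hτ, hγτ⟩ := exists_lt_ord_forall_le_of_isRegular hc
      (by rwa [lift_id'.{u, u + 1}]) hγ
    let a : {α : Ordinal.{u} // μ ≤ α ∧ α < c.ord} :=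
      ⟨max μ τ, le_max_left μ τ, max_lt hμ hτ⟩
    have haτ : a.1 < τ :=
      (hlt_γ ⟦a⟧ a (s.symm (Quotient.mk_out a))).trans_le (hγτ ⟦a⟧)
    exact haτ.not_ge (le_max_right μ τ)

/-- Spaces `C([0, β])` isomorphic to `C([0, α])` with `β ≥ ω ^ ρ` would give `C([0, α])` arbitrarily
high `ℓ¹`-trees, hence a copy of `ℓ¹`. -/
theorem exists_forall_lt_of_continuousLinearEquiv (hlam : ℵ₀ ≤ lam) (hα : lam.ord ≤ α)
    (hα' : α < (Order.succ lam).ord) :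
    ∃ γ < (Order.succ lam).ord, ∀ β,
      Nonempty (C(Set.Iic β, ℝ) ≃L[ℝ] C(Set.Iic α, ℝ)) → β < γ := by
  by_contra! hcon
  have htree : ∀ ρ < (Order.succ lam).ord, ∃ N : ℕ, HasEllOneTree C(Set.Iic α, ℝ) N ρ := by
    intro ρ hρ
    have hopow : Ordinal.omega0 ^ ρ < (Order.succ lam).ord := by
      rw [lt_ord, Order.lt_succ_iff] at hρ ⊢
      exact (Ordinal.card_opow_le _ _).trans (by simp [hlam, hρ])
    obtain ⟨β, ⟨e⟩, hβ⟩ := hcon _ hopow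
    exact (hasEllOneTree_of_opow_le hβ).exists_of_continuousLinearEquiv zero_le_one e
  obtain ⟨D, hD, hcard⟩ := exists_dense_continuousMap_mk_le (Set.Iic α)
  have hDlam : #D < Cardinal.lift.{u + 1} (Order.succ lam) := by
    rw [mk_Iic_eq_lift hlam hα hα', max_eq_right (by simpa using hlam)] at hcard
    exact hcard.trans_lt (lift_lt.2 (Order.lt_succ lam))
  obtain ⟨C, x, hx⟩ := exists_isEllOne_of_forall_hasEllOneTree (isRegular_succ hlam)
    (Order.lt_succ_iff.2 hlam) hD (by rwa [lift_id'.{u, u + 1}]) htree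
  exact not_isEllOne_of_wellFoundedLT C x hx

end Counting

/-- Let `λ` be an infinite cardinal. For every ordinal `α` with `λ ≤ α < λ⁺`, the space
`K(C([0,α], ℝ))` of compact operators on `C([0,α], ℝ)` has a dense subset of cardinality `λ`;
moreover, the set of ordinals in `[λ, λ⁺)`, considered up to the equivalence identifying `α`
and `β` whenever the rings `K(C([0,α], ℝ))` and `K(C([0,β], ℝ))` are isomorphic as rings, has
exactly `λ⁺` equivalence classes. -/
theorem statement10 (lam : Cardinal.{u}) (hlam : Cardinal.aleph0 ≤ lam) :
    (∀ α : Ordinal.{u}, lam.ord ≤ α → α < (Order.succ lam).ord →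
      ∃ D : Set (compactOperators ℝ C(Set.Iic α, ℝ)),
        Dense D ∧ #D = Cardinal.lift.{u + 1} lam) ∧
    #(Quotient (ringIsoSetoid lam)) = Cardinal.lift.{u + 1} (Order.succ lam) := by
  refine ⟨fun α hα hα' => ?_, ?_⟩
  · have hcard := mk_Iic_eq_lift hlam hα hα'
    have : Infinite (Set.Iic α) := infinite_iff.2 (by simpa [hcard] using hlam)
    exact hcard ▸ exists_dense_compactOperators_mk_eq (Set.Iic α)
  · refine mk_quotient_eq_lift_of_forall_bounded (isRegular_succ hlam)
      (ord_lt_ord.2 (Order.lt_succ lam)) _ fun a => ?_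
    obtain ⟨γ, hγ, hlt⟩ := exists_forall_lt_of_continuousLinearEquiv hlam a.2.1 a.2.2
    exact ⟨γ, hγ, fun b ⟨φ⟩ =>
      hlt b.1 (compactOperators.nonempty_continuousLinearEquiv_of_ringEquiv φ)⟩
end

section
/- For every infinite cardinal κ there exists a family (X_i)_{i ∈ I} of compact Hausdorff topological spaces with |I| = 2^κ such that each Banach algebra C(X_i,ℝ) has a dense subset of cardinality κ, and for distinct i, j ∈ I the rings C(X_i,ℝ) and C(X_j,ℝ) are not isomorphic as rings. -/
open Cardinal

/-!
Ring isomorphisms `C(X, ℝ) ≃+* C(Y, ℝ)` come from homeomorphisms, so it suffices to find `2 ^ κ`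
pairwise non-homeomorphic compact Hausdorff spaces of weight `κ`. Finite descending sequences in
the well-order `κ` form a tree without infinite branches; the topology in which the set of
extensions of each node is clopen makes it compact, and the Cantor–Bendixson rank of a node is its
last entry. To encode `A ⊆ κ`, attach an interval at one node of rank `α + 1` for each `α ∈ A`, and
at the root to keep the space compact. The nodes without interval are the points with trivial
connected component, and they are dense in the tree; so the tree, and in it the set of nodes that
carry an interval, can be recovered from the topology, and the ranks of these nodes give back `A`.
-/

open Filter Set Topology

section RingIsomorphism

variable {X Y : Type*} [TopologicalSpace X] [TopologicalSpace Y]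

theorem ringHom_continuousMap_algebraMap (φ : C(X, ℝ) →+* C(Y, ℝ)) (r : ℝ) :
    φ (algebraMap ℝ C(X, ℝ) r) = algebraMap ℝ C(Y, ℝ) r := by
  ext y
  let evalAtConst : ℝ →+* ℝ :=
    ((ContinuousMap.evalAlgHom ℝ ℝ y).toRingHom.comp φ).comp (algebraMap ℝ C(X, ℝ))
  exact RingHom.congr_fun (Subsingleton.elim evalAtConst (RingHom.id ℝ)) r

variable [CompactSpace X] [T2Space X]

theorem exists_eq_comp_of_ringHom (φ : C(X, ℝ) →+* C(Y, ℝ)) :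
    ∃ f : C(Y, X), ∀ g, φ g = g.comp f := by
  let ψ : C(X, ℝ) →ₐ[ℝ] C(Y, ℝ) := { φ with commutes' := ringHom_continuousMap_algebraMap φ }
  let pullback : C(Y, WeakDual.characterSpace ℝ C(X, ℝ)) :=
    { toFun y := WeakDual.CharacterSpace.equivAlgHom.symm ((ContinuousMap.evalAlgHom ℝ ℝ y).comp ψ)
      continuous_toFun := Continuous.subtype_mk
        (WeakDual.continuous_of_continuous_eval fun g => map_continuous (ψ g)) _ }
  let η := WeakDual.CharacterSpace.homeoEval X ℝ
  refine ⟨(η.symm : C(_, X)).comp pullback, fun g => ContinuousMap.ext fun y => ?_⟩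
  exact (DFunLike.congr_fun (η.apply_symm_apply (pullback y)) g).symm

theorem apply_eq_self_of_forall_comp_eq {f : C(X, X)} (h : ∀ g : C(X, ℝ), g.comp f = g)
    (x : X) : f x = x :=
  (WeakDual.CharacterSpace.continuousMapEval_bijective X ℝ).injective
    (DFunLike.ext _ _ fun g => DFunLike.congr_fun (h g) x)

theorem nonempty_homeomorph_of_ringEquiv [CompactSpace Y] [T2Space Y]
    (φ : C(X, ℝ) ≃+* C(Y, ℝ)) : Nonempty (X ≃ₜ Y) := by
  obtain ⟨f, hf⟩ := exists_eq_comp_of_ringHom φ.toRingHom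
  obtain ⟨k, hk⟩ := exists_eq_comp_of_ringHom φ.symm.toRingHom
  have hfk (g : C(X, ℝ)) : g.comp (f.comp k) = g :=
    ((hk _).symm.trans (congrArg φ.symm (hf g).symm)).trans (φ.symm_apply_apply g)
  have hkf (g : C(Y, ℝ)) : g.comp (k.comp f) = g :=
    ((hf _).symm.trans (congrArg φ (hk g).symm)).trans (φ.apply_symm_apply g)
  exact ⟨{ toFun := k
           invFun := f
           left_inv := apply_eq_self_of_forall_comp_eq hfk
           right_inv := apply_eq_self_of_forall_comp_eq hkf }⟩

end RingIsomorphism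

section RationalSubalgebra

variable {A : Type*} [Ring A] [TopologicalSpace A] [Algebra ℚ A] [Algebra ℝ A]
  [ContinuousSMul ℝ A]

theorem algebraMap_real_mem_closure (S : Subalgebra ℚ A) (r : ℝ) :
    algebraMap ℝ A r ∈ closure (S : Set A) := by
  refine map_mem_closure (continuous_algebraMap ℝ A) (Rat.denseRange_cast r) ?_
  rintro _ ⟨q, rfl⟩
  have hq : algebraMap ℝ A (q : ℝ) = algebraMap ℚ A q :=
    RingHom.congr_fun
      (RingHom.ext_rat ((algebraMap ℝ A).comp (algebraMap ℚ ℝ)) (algebraMap ℚ A)) q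
  exact hq ▸ S.algebraMap_mem q

theorem dense_adjoin_rat_of_dense_adjoin_real [IsTopologicalRing A] {G : Set A}
    (hG : Dense (Algebra.adjoin ℝ G : Set A)) : Dense (Algebra.adjoin ℚ G : Set A) := by
  let S := Algebra.adjoin ℚ G
  let realClosure : Subalgebra ℝ A :=
    { S.toSubring.topologicalClosure with
      algebraMap_mem' := algebraMap_real_mem_closure S }
  have hle : Algebra.adjoin ℝ G ≤ realClosure :=
    Algebra.adjoin_le (Algebra.subset_adjoin.trans subset_closure)
  exact dense_closure.1 (hG.mono hle)

theorem mk_adjoin_rat_of_infinite {A : Type*} [Ring A] [Algebra ℚ A] {G : Set A}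
    (hG : G.Infinite) : #(Algebra.adjoin ℚ G) = #G := by
  have hG' : ℵ₀ ≤ #G := infinite_iff.1 hG.to_subtype
  refine le_antisymm ?_ (mk_le_mk_of_subset Algebra.subset_adjoin)
  simpa [hG'] using Algebra.lift_cardinalMk_adjoin_le ℚ G

end RationalSubalgebra

theorem exists_dense_mk_eq_of_separatesPoints {X : Type*} [TopologicalSpace X] [CompactSpace X]
    {G : Set C(X, ℝ)} (hG : G.Infinite) (hsep : ((⇑) '' G : Set (X → ℝ)).SeparatesPoints) :
    ∃ D : Set C(X, ℝ), Dense D ∧ #D = #G := by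
  have hreal : (Algebra.adjoin ℝ G).SeparatesPoints := fun x y hxy =>
    let ⟨f, hf, hne⟩ := hsep hxy
    ⟨f, image_mono Algebra.subset_adjoin hf, hne⟩
  refine ⟨Algebra.adjoin ℚ G, dense_adjoin_rat_of_dense_adjoin_real fun f => ?_,
    mk_adjoin_rat_of_infinite hG⟩
  exact ContinuousMap.continuousMap_mem_subalgebra_closure_of_separatesPoints _ hreal f

section CantorBendixson

variable {X Y K : Type*} [TopologicalSpace X] [TopologicalSpace Y]

/-- `ρ` is the Cantor–Bendixson rank of `X`, with values in a well-order `K` and `⊤` standing for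
all ranks beyond `K`. The transfinite recursion for the iterated derived sets `{x | γ ≤ ρ x}` is
expressed as a property of `ρ`. -/
def IsCantorBendixsonRank [Preorder K] (ρ : X → WithTop K) : Prop :=
  ∀ x (γ : K), γ ≤ ρ x ↔ ∀ β < γ, x ∈ derivedSet {y | (β : WithTop K) ≤ ρ y}

namespace IsCantorBendixsonRank

theorem comp_homeomorph [Preorder K] {ρ : Y → WithTop K} (hρ : IsCantorBendixsonRank ρ)
    (f : X ≃ₜ Y) : IsCantorBendixsonRank (ρ ∘ f) := by
  intro x γ
  refine (hρ (f x) γ).trans (forall₂_congr fun β _ => ⟨fun h => ?_, fun h => ?_⟩)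
  · have hx := f.symm.continuous.image_derivedSet f.symm.injective (mem_image_of_mem _ h)
    rwa [f.symm_apply_apply, f.symm.image_eq_preimage_symm] at hx
  · have hfx := f.continuous.image_derivedSet f.injective (mem_image_of_mem _ h)
    rw [f.image_eq_preimage_symm] at hfx
    simpa using hfx

theorem unique [LinearOrder K] [WellFoundedLT K] [NoMaxOrder K] {ρ σ : X → WithTop K}
    (hρ : IsCantorBendixsonRank ρ) (hσ : IsCantorBendixsonRank σ) : ρ = σ := by
  have key (γ : K) : ∀ x, γ ≤ ρ x ↔ γ ≤ σ x := by
    induction γ using WellFoundedLT.induction with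
    | ind γ ih =>
      intro x
      rw [hρ, hσ]
      exact forall₂_congr fun β hβ => by simp only [ih β hβ]
  exact funext fun x => WithTop.eq_of_forall_coe_le_iff fun γ => key γ x

end IsCantorBendixsonRank

end CantorBendixson

section ConeTopology

/-- The topology on a tree (ordered with its root at the bottom) generated by declaring each cone
`Ici t` clopen. -/
abbrev coneTopology (P : Type*) [Preorder P] : TopologicalSpace P :=
  TopologicalSpace.generateFrom (range Ici ∪ range fun t => (Ici t)ᶜ)

/-- The topology of `P` is the cone topology of its order. -/
class IsConeTopology (P : Type*) [TopologicalSpace P] [Preorder P] : Prop where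
  eq_coneTopology (P) : ‹TopologicalSpace P› = coneTopology P

namespace IsConeTopology

variable {P : Type*} [TopologicalSpace P]

section Preorder

variable [Preorder P] [IsConeTopology P]

theorem isClopen_Ici (t : P) : IsClopen (Ici t) := by
  constructor
  · rw [← isOpen_compl_iff, eq_coneTopology P]
    exact .basic _ (Or.inr (mem_range_self t))
  · rw [eq_coneTopology P]
    exact .basic _ (Or.inl (mem_range_self t))

theorem tendsto_nhds_iff {ι : Type*} {u : ι → P} {l : Filter ι} {t : P} :
    Tendsto u l (𝓝 t) ↔
      (∀ c ≤ t, ∀ᶠ i in l, c ≤ u i) ∧ ∀ c, ¬ c ≤ t → ∀ᶠ i in l, ¬ c ≤ u i := by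
  rw [eq_coneTopology P, coneTopology, TopologicalSpace.tendsto_nhds_generateFrom_iff]
  simp only [mem_union, mem_range, or_imp, forall_and, forall_exists_index, forall_apply_eq_imp_iff]
  rfl

theorem isOpen_of_isUpperSet {U : Set P} (hU : IsUpperSet U) : IsOpen U :=
  isOpen_iff_mem_nhds.2 fun t ht =>
    mem_of_superset ((isClopen_Ici t).isOpen.mem_nhds self_mem_Ici) (hU.Ici_subset ht)

theorem isClosed_of_isLowerSet {L : Set P} (hL : IsLowerSet L) : IsClosed L :=
  isOpen_compl_iff.1 (isOpen_of_isUpperSet hL.compl)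

end Preorder

variable [PartialOrder P] [IsConeTopology P]

instance : TotallySeparatedSpace P :=
  totallySeparatedSpace_iff_exists_isClopen.2 fun s t hst => by
    by_cases h : s ≤ t
    · exact ⟨(Ici t)ᶜ, (isClopen_Ici t).compl, fun hts => hst (h.antisymm hts), by simp⟩
    · exact ⟨Ici s, isClopen_Ici s, self_mem_Ici, h⟩

theorem isCantorBendixsonRank_of_strictAnti {K : Type*} [LinearOrder K] {ρ : P → WithTop K}
    (hρ : StrictAnti ρ)
    (hacc : ∀ t (β : K), β < ρ t → t ∈ derivedSet {s | (β : WithTop K) ≤ ρ s}) :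
    IsCantorBendixsonRank ρ := by
  refine fun t γ => ⟨fun hγ β hβ => hacc t β ((WithTop.coe_lt_coe.2 hβ).trans_le hγ), fun h => ?_⟩
  by_contra! hlt
  obtain ⟨β, hβ⟩ := WithTop.ne_top_iff_exists.1 hlt.ne_top
  have hβγ : β < γ := WithTop.coe_lt_coe.1 (hβ ▸ hlt)
  obtain ⟨s, ⟨hts, hβs⟩, hne⟩ :=
    accPt_iff_nhds.1 (h β hβγ) (Ici t) ((isClopen_Ici t).isOpen.mem_nhds self_mem_Ici)
  exact (hρ (lt_of_le_of_ne hts hne.symm)).not_ge (hβ ▸ hβs)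

variable [PredOrder P] [IsPredArchimedean P]

/-- An ultrafilter converges to the largest node whose cone it contains. -/
theorem compactSpace [OrderBot P] [WellFoundedGT P] : CompactSpace P := by
  refine ⟨isCompact_iff_ultrafilter_le_nhds'.2 fun 𝒰 _ => ?_⟩
  have hbot : Ici (⊥ : P) ∈ 𝒰 := by
    rw [Ici_bot]
    exact univ_mem
  obtain ⟨m, hm, hmax⟩ := wellFounded_gt.has_min {t : P | Ici t ∈ 𝒰} ⟨⊥, hbot⟩
  refine ⟨m, mem_univ m, tendsto_nhds_iff.2 ⟨fun c hc => ?_, fun c hc => ?_⟩⟩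
  · exact mem_of_superset hm (Ici_subset_Ici.2 hc)
  · refine Ultrafilter.compl_mem_iff_notMem.2 fun hc𝒰 => ?_
    obtain ⟨s, hms, hcs⟩ := 𝒰.nonempty_of_mem (inter_mem hm hc𝒰)
    obtain hcm | hmc := lt_or_le_of_directed hms hcs
    · exact hmax c hc𝒰 hcm
    · exact hc hmc

theorem tendsto_cofinite_of_injective_of_covBy {ι : Type*} {u : ι → P} {t : P}
    (hu : u.Injective) (hcov : ∀ i, t ⋖ u i) : Tendsto u cofinite (𝓝 t) := by
  refine tendsto_nhds_iff.2 ⟨fun c hc => .of_forall fun i => hc.trans (hcov i).le, fun c hc => ?_⟩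
  have hle_imp_eq (i : ι) (hci : c ≤ u i) : u i = c := by
    have htc : t < c := (lt_or_le_of_directed (hcov i).le hci).resolve_right hc
    exact ((hcov i).eq_or_eq htc.le hci).resolve_left htc.ne' |>.symm
  refine Set.Subsingleton.finite fun i hi j hj => hu ?_
  rw [hle_imp_eq i (not_not.1 hi), hle_imp_eq j (not_not.1 hj)]

theorem mem_derivedSet_range_of_covBy {ι : Type*} [Infinite ι] {u : ι → P} {t : P}
    (hu : u.Injective) (hcov : ∀ i, t ⋖ u i) : t ∈ derivedSet (range u) :=
  accPt_iff_frequently.2 <| (tendsto_cofinite_of_injective_of_covBy hu hcov).frequently <|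
    .of_forall fun i => ⟨(hcov i).ne', mem_range_self i⟩

end IsConeTopology

end ConeTopology

section Whiskered

theorem connectedComponent_homeomorph_eq_singleton_iff {X Y : Type*} [TopologicalSpace X]
    [TopologicalSpace Y] (f : X ≃ₜ Y) (x : X) :
    connectedComponent (f x) = {f x} ↔ connectedComponent x = {x} := by
  have hfibers (y : Y) : IsConnected (f ⁻¹' {y}) := by
    rw [← f.image_symm, image_singleton]
    exact isConnected_singleton
  rw [← f.isQuotientMap.isCoinducing.image_connectedComponent hfibers, ← image_singleton,
    f.injective.image_injective.eq_iff]

variable {X Y : Type*}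

/-- The space `X`, embedded at height `0`, with a unit interval attached at each point of `M`. -/
def whiskered (M : Set X) : Set (X × unitInterval) := {p | p.2 = 0 ∨ p.1 ∈ M}

namespace whiskered

variable {M : Set X} {N : Set Y}

/-- The inclusion of `X` at height `0`. -/
def base (M : Set X) (x : X) : whiskered M := ⟨(x, 0), Or.inl rfl⟩

theorem base_fst_of_snd_eq_zero {p : whiskered M} (hp : p.1.2 = 0) : base M p.1.1 = p :=
  Subtype.ext (Prod.ext rfl hp.symm)

theorem range_base : range (base M) = {p | p.1.2 = 0} :=
  Subset.antisymm (range_subset_iff.2 fun _ => rfl) fun p hp => ⟨p.1.1, base_fst_of_snd_eq_zero hp⟩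

theorem setOf_fst_notMem : {p : whiskered M | p.1.1 ∉ M} = base M '' Mᶜ :=
  Subset.antisymm (fun p hp => ⟨p.1.1, hp, base_fst_of_snd_eq_zero (p.2.resolve_right hp)⟩)
    (image_subset_iff.2 fun _ hx => hx)

variable [TopologicalSpace X] [TopologicalSpace Y]

theorem isClosed (hM : IsClosed M) : IsClosed (whiskered M) :=
  (isClosed_singleton.preimage continuous_snd).union (hM.preimage continuous_fst)

theorem compactSpace [CompactSpace X] (hM : IsClosed M) : CompactSpace (whiskered M) :=
  isCompact_iff_compactSpace.1 (isClosed hM).isCompact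

theorem isClosedEmbedding_base (M : Set X) : IsClosedEmbedding (base M) := by
  have hemb : IsEmbedding (base M) :=
    (isEmbedding_prodMkLeft (0 : unitInterval)).codRestrict (whiskered M) fun _ => Or.inl rfl
  refine ⟨hemb, ?_⟩
  rw [range_base]
  exact isClosed_singleton.preimage (by fun_prop : Continuous fun p : whiskered M => p.1.2)

theorem connectedComponent_eq_singleton_iff [TotallyDisconnectedSpace X] (p : whiskered M) :
    connectedComponent p = {p} ↔ p.1.1 ∉ M := by
  have hfst : Continuous fun q : whiskered M => q.1.1 := by fun_prop
  constructor
  · intro hp hM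
    let whisker (r : unitInterval) : whiskered M := ⟨(p.1.1, r), Or.inr hM⟩
    have hwhisker : range whisker ⊆ {p} :=
      hp ▸ (isPreconnected_range (by fun_prop)).subset_connectedComponent ⟨p.1.2, rfl⟩
    have h01 : whisker 0 = whisker 1 :=
      (hwhisker (mem_range_self 0)).trans (hwhisker (mem_range_self 1)).symm
    exact zero_ne_one (congrArg (fun q => q.1.2) h01)
  · refine fun hM => eq_singleton_iff_unique_mem.2 ⟨mem_connectedComponent, fun q hq => ?_⟩
    have hqp : q.1.1 = p.1.1 := by
      simpa using hfst.image_connectedComponent_subset p (mem_image_of_mem _ hq)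
    have hq0 : q.1.2 = 0 := q.2.resolve_right (hqp ▸ hM)
    exact Subtype.ext (Prod.ext hqp (hq0.trans (p.2.resolve_right hM).symm))

theorem closure_setOf_connectedComponent_eq_singleton [TotallyDisconnectedSpace X]
    (hM : Dense Mᶜ) : closure {p : whiskered M | connectedComponent p = {p}} = range (base M) := by
  simp only [connectedComponent_eq_singleton_iff, setOf_fst_notMem]
  rw [(isClosedEmbedding_base M).closure_image_eq, hM.closure_eq, image_univ]

variable [TotallyDisconnectedSpace X] [TotallyDisconnectedSpace Y]

theorem base_fst_homeomorph_base (hM : Dense Mᶜ) (hN : Dense Nᶜ)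
    (f : whiskered M ≃ₜ whiskered N) (x : X) : base N (f (base M x)).1.1 = f (base M x) := by
  suffices h : f (base M x) ∈ range (base N) from base_fst_of_snd_eq_zero (range_base.subset h)
  rw [← closure_setOf_connectedComponent_eq_singleton hN]
  refine map_mem_closure (s := {p | connectedComponent p = {p}}) f.continuous ?_ fun p hp => ?_
  · rw [closure_setOf_connectedComponent_eq_singleton hM]
    exact mem_range_self x
  · exact (connectedComponent_homeomorph_eq_singleton_iff f p).2 hp

theorem exists_homeomorph_mem_iff (hM : Dense Mᶜ) (hN : Dense Nᶜ)
    (f : whiskered M ≃ₜ whiskered N) : ∃ g : X ≃ₜ Y, ∀ x, g x ∈ N ↔ x ∈ M := by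
  have hf := base_fst_homeomorph_base hM hN f
  have hfsymm := base_fst_homeomorph_base hN hM f.symm
  have hbase : Continuous (base M) := (isClosedEmbedding_base M).continuous
  have hbase' : Continuous (base N) := (isClosedEmbedding_base N).continuous
  let g : X ≃ₜ Y :=
    { toFun x := (f (base M x)).1.1
      invFun y := (f.symm (base N y)).1.1
      left_inv x := by simp only [hf, f.symm_apply_apply]; rfl
      right_inv y := by simp only [hfsymm, f.apply_symm_apply]; rfl
      continuous_toFun := by fun_prop
      continuous_invFun := by fun_prop }
  refine ⟨g, fun x => not_iff_not.1 ?_⟩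
  calc g x ∉ N ↔ connectedComponent (f (base M x)) = {f (base M x)} :=
        (connectedComponent_eq_singleton_iff _).symm
    _ ↔ connectedComponent (base M x) = {base M x} :=
        connectedComponent_homeomorph_eq_singleton_iff f _
    _ ↔ x ∉ M := connectedComponent_eq_singleton_iff _

end whiskered

end Whiskered

namespace whiskered

variable {P : Type*} [TopologicalSpace P] {M : Set P}

/-- The height along the attached intervals. -/
def height (M : Set P) : C(whiskered M, ℝ) := ⟨fun p => p.1.2, by fun_prop⟩

/-- The function that is `1` at the points lying over the cone of `t` and `0` elsewhere. -/
noncomputable def coneIndicator [Preorder P] [IsConeTopology P] (M : Set P) (t : P) :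
    C(whiskered M, ℝ) :=
  (LocallyConstant.charFn ℝ (IsConeTopology.isClopen_Ici t)).toContinuousMap.comp
    ⟨fun p => p.1.1, by fun_prop⟩

theorem coneIndicator_eq_iff [Preorder P] [IsConeTopology P] {s t : P} {p q : whiskered M} :
    coneIndicator M s p = coneIndicator M t q ↔ (s ≤ p.1.1 ↔ t ≤ q.1.1) := by
  have coneIndicator_apply (r : P) (x : whiskered M) :
      coneIndicator M r x = (Ici r).indicator 1 x.1.1 := rfl
  by_cases hs : s ≤ p.1.1 <;> by_cases ht : t ≤ q.1.1 <;> simp [coneIndicator_apply, hs, ht]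

variable [PartialOrder P] [IsConeTopology P]

theorem coneIndicator_injective : (coneIndicator M).Injective := fun _ _ hst =>
  eq_of_forall_ge_iff fun r => coneIndicator_eq_iff.1 (DFunLike.congr_fun hst (base M r))

theorem separatesPoints_insert_height_range_coneIndicator :
    SeparatesPoints ((⇑) '' insert (height M) (range (coneIndicator M)) :
      Set (whiskered M → ℝ)) := by
  intro p q hpq
  contrapose! hpq
  have hheight : p.1.2 = q.1.2 :=
    Subtype.ext (hpq _ (mem_image_of_mem _ (mem_insert _ _)))
  have hcone (t : P) : t ≤ p.1.1 ↔ t ≤ q.1.1 :=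
    coneIndicator_eq_iff.1 (hpq _ (mem_image_of_mem _ (mem_insert_of_mem _ (mem_range_self t))))
  exact Subtype.ext (Prod.ext (eq_of_forall_le_iff hcone) hheight)

theorem exists_dense_mk_eq [CompactSpace P] [Infinite P] (hM : IsClosed M) :
    ∃ D : Set C(whiskered M, ℝ), Dense D ∧ #D = #P := by
  have := compactSpace hM
  have hinf : (range (coneIndicator M)).Infinite :=
    infinite_range_of_injective coneIndicator_injective
  obtain ⟨D, hD, hcard⟩ := exists_dense_mk_eq_of_separatesPoints
    (hinf.mono (subset_insert _ _)) (separatesPoints_insert_height_range_coneIndicator (M := M))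
  refine ⟨D, hD, hcard.trans ?_⟩
  have hrange : #(range (coneIndicator M)) = #P := mk_range_eq _ coneIndicator_injective
  refine le_antisymm ?_ (hrange ▸ mk_le_mk_of_subset (subset_insert _ _))
  calc #(insert (height M) (range (coneIndicator M)) : Set _)
      ≤ #(range (coneIndicator M)) + 1 := mk_insert_le
    _ = #P := by rw [hrange, add_one_eq (aleph0_le_mk P)]

end whiskered

/-- Finite strictly descending sequences in `K`, each entry carrying a natural number so that every
node of the resulting tree has infinitely many children of each smaller rank. The last entry of a
sequence is the head of the list. -/
def DescendingList (K : Type*) [LT K] : Type _ :=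
  {l : List (K × ℕ) // l.Pairwise fun a b => a.1 < b.1}

namespace DescendingList

variable {K : Type*}

section LT

variable [LT K]

theorem val_inj {s t : DescendingList K} : s.1 = t.1 ↔ s = t := Subtype.ext_iff.symm

instance : PartialOrder (DescendingList K) where
  le s t := s.1 <:+ t.1
  le_refl s := List.suffix_refl s.1
  le_trans _ _ _ := List.IsSuffix.trans
  le_antisymm _ _ hst hts := Subtype.ext (hst.eq_of_length_le hts.length_le)

theorem le_def {s t : DescendingList K} : s ≤ t ↔ s.1 <:+ t.1 := Iff.rfl

instance : OrderBot (DescendingList K) where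
  bot := ⟨[], .nil⟩
  bot_le _ := List.nil_suffix

instance : PredOrder (DescendingList K) where
  pred s := ⟨s.1.tail, s.2.tail⟩
  pred_le s := List.tail_suffix s.1
  min_of_le_pred {s} hs := by
    have hnil : s.1 = [] := by
      by_contra hne
      have hlen : s.1.length ≤ s.1.tail.length := List.IsSuffix.length_le hs
      rw [List.length_tail] at hlen
      have := List.length_pos_iff.2 hne
      omega
    exact fun t _ => le_def.2 (hnil ▸ List.nil_suffix)
  le_pred_of_lt {s t} hst := by
    obtain ⟨_ | ⟨a, l⟩, hl⟩ := le_def.1 hst.le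
    · exact absurd (Subtype.ext hl) hst.ne
    · exact ⟨l, by simp [← hl]⟩

instance : IsPredArchimedean (DescendingList K) where
  exists_pred_iterate_of_le {s t} hst := by
    have val_pred_iterate (n : ℕ) : (Order.pred^[n] t).1 = List.tail^[n] t.1 :=
      Function.Semiconj.iterate_right (f := Subtype.val) (fun _ => rfl) n t
    refine ⟨t.1.length - s.1.length, Subtype.ext ?_⟩
    rw [val_pred_iterate, List.tail_iterate]
    exact (List.suffix_iff_eq_drop.1 hst).symm

instance : TopologicalSpace (DescendingList K) := coneTopology _

instance : IsConeTopology (DescendingList K) := ⟨rfl⟩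

/-- The one-entry sequence `α`. -/
def single (α : K) : DescendingList K := ⟨[(α, 0)], List.pairwise_singleton _ _⟩

theorem single_injective : (single : K → DescendingList K).Injective := fun α β h => by
  have hlist : [(α, 0)] = [(β, 0)] := congrArg Subtype.val h
  simpa using hlist

theorem le_single_iff {s : DescendingList K} {α : K} : s ≤ single α ↔ s = single α ∨ s = ⊥ := by
  refine List.suffix_cons_iff.trans (or_congr ?_ ?_)
  · exact val_inj (t := single α)
  · exact List.suffix_nil.trans (val_inj (t := ⊥))

/-- The last entry of a sequence; the empty sequence has rank `⊤`. -/
def rank (s : DescendingList K) : WithTop K := (s.1.head?.map Prod.fst : Option K)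

theorem rank_single (α : K) : rank (single α) = α := rfl

end LT

theorem mk_eq_mk {K : Type*} [LT K] [Infinite K] : #(DescendingList K) = #K := by
  refine le_antisymm ?_ (mk_le_of_injective single_injective)
  calc #(DescendingList K) ≤ #(List (K × ℕ)) := mk_subtype_le _
    _ = #(K × ℕ) := mk_list_eq_mk _
    _ = #K := by simp [aleph0_le_mk]

theorem coe_lt_rank_iff [Preorder K] {s : DescendingList K} {β : K} :
    β < rank s ↔ ∀ a ∈ s.1, β < a.1 := by
  obtain ⟨_ | ⟨b, l⟩, hl⟩ := s
  · exact iff_of_true (WithTop.coe_lt_top β) (List.forall_mem_nil _)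
  · have hb : ∀ a ∈ l, b.1 < a.1 := (List.pairwise_cons.1 hl).1
    refine WithTop.coe_lt_coe.trans ⟨fun hβ => ?_, fun h => h b List.mem_cons_self⟩
    exact List.forall_mem_cons.2 ⟨hβ, fun a ha => hβ.trans (hb a ha)⟩

theorem rank_strictAnti [Preorder K] : StrictAnti (rank : DescendingList K → WithTop K) := by
  rintro s ⟨t, ht⟩ hst
  obtain ⟨_ | ⟨a, l⟩, rfl⟩ := le_def.1 hst.le
  · exact absurd rfl hst.ne
  · exact coe_lt_rank_iff.2 fun b hb =>
      (List.pairwise_cons.1 ht).1 b (List.mem_append_right l hb)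

instance [Preorder K] [WellFoundedLT K] : WellFoundedGT (DescendingList K) :=
  rank_strictAnti.wellFoundedGT

instance [Preorder K] [WellFoundedLT K] : CompactSpace (DescendingList K) :=
  IsConeTopology.compactSpace

/-- Extension of the sequence `s` by the entry `β`, tagged with `n`. -/
def child [Preorder K] (s : DescendingList K) {β : K} (h : β < rank s) (n : ℕ) : DescendingList K :=
  ⟨(β, n) :: s.1, s.2.cons (coe_lt_rank_iff.1 h)⟩

theorem covBy_child [Preorder K] (s : DescendingList K) {β : K} (h : β < rank s) (n : ℕ) :
    s ⋖ child s h n := by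
  refine ⟨lt_of_le_of_ne (List.suffix_cons _ _) fun heq => ?_, fun t hst htc => ?_⟩
  · exact List.cons_ne_self _ _ (congrArg Subtype.val heq).symm
  · obtain heq | hts := List.suffix_cons_iff.1 (le_def.1 htc.le)
    · exact htc.ne (Subtype.ext heq)
    · exact hst.not_ge hts

theorem rank_child [Preorder K] (s : DescendingList K) {β : K} (h : β < rank s) (n : ℕ) :
    rank (child s h n) = β := rfl

theorem child_injective [Preorder K] (s : DescendingList K) {β : K} (h : β < rank s) :
    (child s h).Injective := fun m n hmn => by
  have hlist : (β, m) :: s.1 = (β, n) :: s.1 := congrArg Subtype.val hmn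
  simpa using hlist

theorem mem_derivedSet_range_child [Preorder K] (s : DescendingList K) {β : K} (h : β < rank s) :
    s ∈ derivedSet (range fun n => child s h (n + 1)) :=
  IsConeTopology.mem_derivedSet_range_of_covBy
    ((child_injective s h).comp (add_left_injective 1)) fun n => covBy_child s h (n + 1)

theorem isCantorBendixsonRank_rank [LinearOrder K] :
    IsCantorBendixsonRank (rank : DescendingList K → WithTop K) := by
  refine IsConeTopology.isCantorBendixsonRank_of_strictAnti rank_strictAnti fun s β h => ?_
  refine derivedSet_mono _ _ ?_ (mem_derivedSet_range_child s h)
  rintro _ ⟨n, rfl⟩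
  exact (rank_child s h _).ge

theorem rank_homeomorph [LinearOrder K] [WellFoundedLT K] [NoMaxOrder K]
    (g : DescendingList K ≃ₜ DescendingList K) (s : DescendingList K) : rank (g s) = rank s :=
  congrFun ((isCantorBendixsonRank_rank.comp_homeomorph g).unique isCantorBendixsonRank_rank) s

section Marked

variable {A B : Set K}

section Preorder

variable [Preorder K] [SuccOrder K]

/-- The nodes encoding `A`: for each `α ∈ A` a node of rank `succ α`, which is not isolated since
its rank is not minimal, and the root, to which infinitely many such nodes converge. -/
def marked (A : Set K) : Set (DescendingList K) := insert ⊥ ((fun α => single (Order.succ α)) '' A)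

theorem isClosed_marked (A : Set K) : IsClosed (marked A) := by
  refine IsConeTopology.isClosed_of_isLowerSet ?_
  rintro _ s hs (rfl | ⟨α, hα, rfl⟩)
  · exact Or.inl (le_bot_iff.1 hs)
  · obtain rfl | rfl := le_single_iff.1 hs
    · exact Or.inr (mem_image_of_mem _ hα)
    · exact Or.inl rfl

theorem child_succ_notMem_marked (s : DescendingList K) {β : K} (h : β < rank s) (n : ℕ) :
    child s h (n + 1) ∉ marked A := by
  rintro (hbot | ⟨α, -, hα⟩)
  · exact List.cons_ne_nil _ _ (congrArg Subtype.val hbot)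
  · have hlist : [(Order.succ α, 0)] = (β, n + 1) :: s.1 := congrArg Subtype.val hα
    simp at hlist

theorem dense_compl_marked [NoMaxOrder K] [Nonempty K] (A : Set K) : Dense (marked A)ᶜ := by
  have mem_closure_of_lt_rank (s : DescendingList K) {β : K} (h : β < rank s) :
      s ∈ closure (marked A)ᶜ := by
    refine closure_mono ?_ (derivedSet_subset_closure _ (mem_derivedSet_range_child s h))
    rintro _ ⟨n, rfl⟩
    exact child_succ_notMem_marked s h n
  intro s
  by_cases hs : s ∈ marked A
  · obtain rfl | ⟨α, -, rfl⟩ := hs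
    · exact mem_closure_of_lt_rank ⊥ (WithTop.coe_lt_top (Classical.arbitrary K))
    · exact mem_closure_of_lt_rank _ (WithTop.coe_lt_coe.2 (Order.lt_succ α))
  · exact subset_closure hs

end Preorder

variable [LinearOrder K] [SuccOrder K] [NoMaxOrder K]

theorem exists_mem_marked_rank_eq_succ_iff {α : K} :
    (∃ s ∈ marked A, rank s = (Order.succ α : K)) ↔ α ∈ A := by
  constructor
  · rintro ⟨_, rfl | ⟨β, hβ, rfl⟩, hrank⟩
    · exact absurd hrank WithTop.top_ne_coe
    · exact Order.succ_injective (WithTop.coe_injective hrank) ▸ hβ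
  · exact fun hα => ⟨_, Or.inr (mem_image_of_mem _ hα), rank_single _⟩

theorem eq_of_homeomorph_whiskered_marked [WellFoundedLT K] [Nonempty K]
    (f : whiskered (marked A) ≃ₜ whiskered (marked B)) : A = B := by
  obtain ⟨g, hg⟩ := whiskered.exists_homeomorph_mem_iff (dense_compl_marked A)
    (dense_compl_marked B) f
  ext α
  rw [← exists_mem_marked_rank_eq_succ_iff (A := A), ← exists_mem_marked_rank_eq_succ_iff (A := B),
    g.surjective.exists (p := fun s => s ∈ marked B ∧ _)]
  simp only [hg, rank_homeomorph]

end Marked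

end DescendingList

/-- For every infinite cardinal `κ` there exists a family `(X i)_{i ∈ I}` of compact Hausdorff
spaces with `|I| = 2 ^ κ` such that each Banach algebra `C(X i, ℝ)` has a dense subset of
cardinality `κ`, and for distinct `i, j ∈ I` the rings `C(X i, ℝ)` and `C(X j, ℝ)` are not
isomorphic as rings. -/
theorem statement12 (κ : Cardinal.{u}) (hκ : Cardinal.aleph0 ≤ κ) :
    ∃ (I : Type u) (X : I → CompHaus.{u}),
      #I = 2 ^ κ ∧
      (∀ i, ∃ D : Set C(X i, ℝ), Dense D ∧ #D = κ) ∧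
      ∀ i j, i ≠ j → IsEmpty (C(X i, ℝ) ≃+* C(X j, ℝ)) := by
  let K := κ.ord.ToType
  have hK : #K = κ := mk_ord_toType κ
  have : Infinite K := infinite_iff.2 (hK ▸ hκ)
  have : NoMaxOrder K := noMaxOrder hκ
  have hcompact (A : Set K) : CompactSpace (whiskered (DescendingList.marked A)) :=
    whiskered.compactSpace (DescendingList.isClosed_marked A)
  refine ⟨Set K, fun A => CompHaus.of (whiskered (DescendingList.marked A)), ?_, fun A => ?_,
    fun A B hAB => ⟨fun φ => hAB ?_⟩⟩
  · rw [mk_set, hK]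
  · have : Infinite (DescendingList K) := .of_injective _ DescendingList.single_injective
    obtain ⟨D, hD, hcard⟩ := whiskered.exists_dense_mk_eq (DescendingList.isClosed_marked A)
    exact ⟨D, hD, hcard.trans (DescendingList.mk_eq_mk.trans hK)⟩
  · obtain ⟨f⟩ := nonempty_homeomorph_of_ringEquiv φ
    exact DescendingList.eq_of_homeomorph_whiskered_marked f
end

section
/- Let X be an infinite compact Hausdorff topological space that is separable and extremally disconnected. Then the Banach space C(X,ℝ) is isomorphic, via a continuous linear bijection with continuous inverse, to the Banach space ℓ∞ of bounded real sequences with the supremum norm. -/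
open Cardinal TopologicalSpace

/-!
Gleason's theorem makes an extremally disconnected compact Hausdorff space `X` projective. Applied
to the surjection `βD → X` induced by a dense family indexed by `D`, it exhibits `X` as a retract
of `βD`. It also shows that continuous maps from open subsets of `X` to compact Hausdorff spaces
extend to `X`; extending the map which sends each member `U i` of a disjoint family of nonempty open
sets to `i : D` exhibits `βD` as a retract of `X`. So each of `C(X)` and `C(βD) ≅ ℓ∞(D)` is
complemented in the other, and Pełczyński's decomposition method applies because `ℓ∞(D)` is
isomorphic to its own countable `ℓ∞`-power. For `X` separable and infinite one takes `D = ℕ`.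
-/

open BoundedContinuousFunction Function Set

section BoundedFunctions

variable {𝕜 A B : Type*} [NontriviallyNormedField 𝕜]
  [NormedAddCommGroup A] [NormedSpace 𝕜 A] [NormedAddCommGroup B] [NormedSpace 𝕜 B]

/-- Postcomposition of bounded continuous functions with a continuous linear equivalence. -/
noncomputable def bcfCongrRight (α : Type*) [TopologicalSpace α] (e : A ≃L[𝕜] B) :
    (α →ᵇ A) ≃L[𝕜] (α →ᵇ B) :=
  .equivOfInverse ((e : A →L[𝕜] B).compLeftContinuousBounded α)
    ((e.symm : B →L[𝕜] A).compLeftContinuousBounded α)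
    (fun f => by ext; simp) (fun f => by ext; simp)

variable (𝕜 A) in
/-- Precomposition of bounded continuous functions with a homeomorphism. -/
noncomputable def bcfCongrLeft {α β : Type*} [TopologicalSpace α] [TopologicalSpace β]
    (e : α ≃ₜ β) : (α →ᵇ A) ≃L[𝕜] (β →ᵇ A) :=
  .equivOfInverse (compContinuousCLM A 𝕜 (e.symm : C(β, α))) (compContinuousCLM A 𝕜 (e : C(α, β)))
    (fun f => by ext; simp) (fun f => by ext; simp)

variable (𝕜 A B) in
/-- Bounded continuous functions into a product are pairs of bounded continuous functions. -/
noncomputable def bcfProd (α : Type*) [TopologicalSpace α] :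
    (α →ᵇ A × B) ≃L[𝕜] (α →ᵇ A) × (α →ᵇ B) :=
  .equivOfInverse
    (((ContinuousLinearMap.fst 𝕜 A B).compLeftContinuousBounded α).prod
      ((ContinuousLinearMap.snd 𝕜 A B).compLeftContinuousBounded α))
    (((ContinuousLinearMap.inl 𝕜 A B).compLeftContinuousBounded α).coprod
      ((ContinuousLinearMap.inr 𝕜 A B).compLeftContinuousBounded α))
    (fun f => by ext <;> simp) (fun f => by ext <;> simp)

variable (𝕜 A) in
/-- A bounded sequence is its first term together with its tail. -/
noncomputable def bcfNatCons : (ℕ →ᵇ A) ≃ₗᵢ[𝕜] A × (ℕ →ᵇ A) where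
  toFun f := (f 0, f.compContinuous ⟨Nat.succ, continuous_of_discreteTopology⟩)
  invFun p := ofNormedAddCommGroupDiscrete (fun n => n.casesOn p.1 p.2) ‖p‖ fun
    | 0 => norm_fst_le p
    | n + 1 => (p.2.norm_coe_le_norm n).trans (norm_snd_le p)
  left_inv f := by ext n; cases n <;> rfl
  right_inv _ := rfl
  map_add' _ _ := rfl
  map_smul' _ _ := rfl
  norm_map' f := by
    refine le_antisymm (max_le (f.norm_coe_le_norm 0) (norm_compContinuous_le f _)) ?_
    refine (norm_le (norm_nonneg _)).2 fun
      | 0 => norm_fst_le (f 0, _)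
      | n + 1 => ?_
    exact (norm_coe_le_norm (f.compContinuous ⟨Nat.succ, _⟩) n).trans (norm_snd_le (f 0, _))

theorem norm_apply_apply_le {α β : Type*} [TopologicalSpace α] [TopologicalSpace β]
    (f : α →ᵇ β →ᵇ A) (a : α) (b : β) : ‖f a b‖ ≤ ‖f‖ :=
  ((f a).norm_coe_le_norm b).trans (f.norm_coe_le_norm a)

variable (𝕜 A) in
/-- Uncurrying of bounded continuous functions. The first factor is discrete, so that joint
continuity reduces to continuity in the second variable. -/
noncomputable def bcfUncurry (α β : Type*) [TopologicalSpace α] [DiscreteTopology α]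
    [TopologicalSpace β] : (α →ᵇ β →ᵇ A) ≃ₗᵢ[𝕜] (α × β →ᵇ A) where
  toFun f := ofNormedAddCommGroup (fun p => f p.1 p.2)
    (continuous_prod_of_discrete_left.2 fun a => (f a).continuous) ‖f‖
    fun p => norm_apply_apply_le f p.1 p.2
  invFun g := ofNormedAddCommGroupDiscrete
    (fun a => g.compContinuous ⟨fun b => (a, b), by fun_prop⟩) ‖g‖
    fun _ => norm_compContinuous_le g _
  left_inv _ := rfl
  right_inv _ := rfl
  map_add' _ _ := rfl
  map_smul' _ _ := rfl
  norm_map' f := by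
    refine le_antisymm ((norm_le (norm_nonneg f)).2 fun p => norm_apply_apply_le f p.1 p.2) ?_
    refine (norm_le (norm_nonneg _)).2 fun a => (norm_le (norm_nonneg _)).2 fun b => ?_
    exact norm_coe_le_norm (ofNormedAddCommGroup (fun p : α × β => f p.1 p.2) _ ‖f‖
      fun p => norm_apply_apply_le f p.1 p.2) (a, b)

theorem nonempty_nat_prod_equiv (D : Type*) [Infinite D] : Nonempty (ℕ × D ≃ D) := by
  rw [← Cardinal.lift_mk_eq']
  simp

variable (𝕜 A) in
theorem nonempty_bcf_nat_bcf_equiv (D : Type*) [TopologicalSpace D] [DiscreteTopology D]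
    [Infinite D] : Nonempty ((ℕ →ᵇ D →ᵇ A) ≃L[𝕜] (D →ᵇ A)) := by
  obtain ⟨e⟩ := nonempty_nat_prod_equiv D
  exact ⟨(bcfUncurry 𝕜 A ℕ D).toContinuousLinearEquiv.trans
    (bcfCongrLeft 𝕜 A e.toHomeomorphOfDiscrete)⟩

end BoundedFunctions

section Decomposition

variable {𝕜 E F : Type*} [NontriviallyNormedField 𝕜]
  [NormedAddCommGroup E] [NormedSpace 𝕜 E] [NormedAddCommGroup F] [NormedSpace 𝕜 F]

/-- With `K` the kernel of `P`,
`F ≅ ℓ∞(F) ≅ ℓ∞(E) ⊕ ℓ∞(K) ≅ E ⊕ ℓ∞(E) ⊕ ℓ∞(K) ≅ E ⊕ ℓ∞(F) ≅ E ⊕ F`. -/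
theorem nonempty_equiv_prod_of_hasRightInverse (e : (ℕ →ᵇ F) ≃L[𝕜] F) {P : F →L[𝕜] E}
    (hP : P.HasRightInverse) : Nonempty (F ≃L[𝕜] E × F) := by
  have split : F ≃L[𝕜] E × P.ker := .equivOfRightInverse P _ hP.rightInverse_rightInverse
  have seqSplit : (ℕ →ᵇ F) ≃L[𝕜] (ℕ →ᵇ E) × (ℕ →ᵇ P.ker) :=
    (bcfCongrRight ℕ split).trans (bcfProd 𝕜 E P.ker ℕ)
  exact ⟨e.symm.trans <| seqSplit.trans <|
    ((bcfNatCons 𝕜 E).toContinuousLinearEquiv.prodCongr (.refl 𝕜 _)).trans <|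
    (ContinuousLinearEquiv.prodAssoc 𝕜 _ _ _).trans <|
    (ContinuousLinearEquiv.refl 𝕜 E).prodCongr (seqSplit.symm.trans e)⟩

theorem nonempty_equiv_of_hasRightInverse_of_hasRightInverse (e : (ℕ →ᵇ F) ≃L[𝕜] F)
    {P : F →L[𝕜] E} (hP : P.HasRightInverse) {Q : E →L[𝕜] F} (hQ : Q.HasRightInverse) :
    Nonempty (E ≃L[𝕜] F) := by
  obtain ⟨absorb⟩ := nonempty_equiv_prod_of_hasRightInverse e hP
  have split : E ≃L[𝕜] F × Q.ker := .equivOfRightInverse Q _ hQ.rightInverse_rightInverse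
  have double : F ≃L[𝕜] F × F :=
    e.symm.trans <| (bcfNatCons 𝕜 F).toContinuousLinearEquiv.trans <|
      (ContinuousLinearEquiv.refl 𝕜 F).prodCongr e
  have absorb' : E ≃L[𝕜] F × E :=
    split.trans <| (double.prodCongr (.refl 𝕜 _)).trans <|
      (ContinuousLinearEquiv.prodAssoc 𝕜 _ _ _).trans <|
      (ContinuousLinearEquiv.refl 𝕜 F).prodCongr split.symm
  exact ⟨absorb'.trans <| (ContinuousLinearEquiv.prodComm 𝕜 _ _).trans absorb.symm⟩

end Decomposition

theorem hasRightInverse_compCLM {R M X Y : Type*} [Semiring R] [AddCommMonoid M] [Module R M]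
    [TopologicalSpace M] [ContinuousAdd M] [ContinuousConstSMul R M]
    [TopologicalSpace X] [TopologicalSpace Y] {q : C(Y, X)} {s : C(X, Y)} (h : LeftInverse q s) :
    (ContinuousMap.compCLM R M s).HasRightInverse :=
  ⟨ContinuousMap.compCLM R M q, fun f => ContinuousMap.ext fun x => congrArg f (h x)⟩

section StoneCech

variable {D : Type*} [TopologicalSpace D]

theorem exists_continuousMap_stoneCech {Y : Type*} [TopologicalSpace Y] [CompactSpace Y] [T2Space Y]
    {f : D → Y} (hf : Continuous f) : ∃ g : C(StoneCech D, Y), ∀ i, g (stoneCechUnit i) = f i :=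
  ⟨⟨stoneCechExtend hf, continuous_stoneCechExtend hf⟩, stoneCechExtend_stoneCechUnit hf⟩

variable (𝕜 E : Type*) [NontriviallyNormedField 𝕜] [NormedAddCommGroup E] [NormedSpace 𝕜 E]

variable (D) in
/-- Restriction of continuous functions on the Stone–Čech compactification to the original space. -/
noncomputable def stoneCechRestrict : C(StoneCech D, E) →ₗᵢ[𝕜] (D →ᵇ E) where
  toFun f := (mkOfCompact f).compContinuous ⟨stoneCechUnit, continuous_stoneCechUnit⟩
  map_add' _ _ := rfl
  map_smul' _ _ := rfl
  norm_map' f := by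
    refine le_antisymm (norm_compContinuous_le (mkOfCompact f) _) ?_
    refine (f.norm_le (norm_nonneg _)).2 fun x => ?_
    refine denseRange_stoneCechUnit.induction_on x (isClosed_le (by fun_prop) (by fun_prop)) ?_
    exact norm_coe_le_norm ((mkOfCompact f).compContinuous ⟨stoneCechUnit, _⟩)

theorem stoneCechRestrict_surjective [ProperSpace E] :
    Surjective (stoneCechRestrict D 𝕜 E) := by
  intro a
  have ha (i : D) : a i ∈ Metric.closedBall (0 : E) ‖a‖ :=
    mem_closedBall_zero_iff.2 (a.norm_coe_le_norm i)
  have := isCompact_iff_compactSpace.1 (isCompact_closedBall (0 : E) ‖a‖)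
  obtain ⟨g, hg⟩ := exists_continuousMap_stoneCech (a.continuous.codRestrict ha)
  exact ⟨⟨fun x => g x, by fun_prop⟩, BoundedContinuousFunction.ext fun i =>
    congrArg Subtype.val (hg i)⟩

variable (D) in
/-- For a proper space `E`, `C(βD, E)` is the space of bounded continuous functions `D → E`. -/
noncomputable def stoneCechEquivBCF [ProperSpace E] : C(StoneCech D, E) ≃ₗᵢ[𝕜] (D →ᵇ E) :=
  .ofSurjective (stoneCechRestrict D 𝕜 E) (stoneCechRestrict_surjective 𝕜 E)

end StoneCech

section ExtremallyDisconnected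

-- `CompactT2.Projective` only concerns spaces in the universe of `X`, hence the lifts.
theorem exists_rightInverse_of_extremallyDisconnected {X : Type v} {Y : Type w}
    [TopologicalSpace X] [CompactSpace X] [T2Space X] [ExtremallyDisconnected X]
    [TopologicalSpace Y] [CompactSpace Y] [T2Space Y] {q : Y → X} (hq : Continuous q)
    (hsurj : Surjective q) : ∃ s : C(X, Y), RightInverse s q := by
  have : ExtremallyDisconnected (ULift.{w} X) :=
    extremallyDisconnected_of_homeo Homeomorph.ulift.symm
  obtain ⟨s, hs, hqs⟩ := CompactT2.ExtremallyDisconnected.projective (A := ULift.{w} X)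
    (Y := ULift.{v} Y) continuous_id (continuous_uliftMap q hq) (ULift.map_surjective.2 hsurj)
  exact ⟨⟨fun x => (s ⟨x⟩).down, by fun_prop⟩, fun x => congrArg ULift.down (congrFun hqs ⟨x⟩)⟩

variable {X : Type*} [TopologicalSpace X] [CompactSpace X] [T2Space X] [ExtremallyDisconnected X]

variable {K : Type*} [TopologicalSpace K] [CompactSpace K] [T2Space K]

-- Project the closed set of pairs `(x, y)` with `y = f x` whenever `x ∈ W` to `X`; a continuous
-- section of this surjection is the graph of an extension.
theorem exists_continuousMap_eqOn_of_isOpen {W : Set X} (hW : IsOpen W) {f : X → K}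
    (hf : ContinuousOn f W) : ∃ g : C(X, K), EqOn g f W := by
  let Z : Set (X × K) := {p | p.1 ∈ W → p.2 = f p.1}
  have hZ : IsClosed Z := by
    have hpair : ContinuousOn (fun p : X × K => (p.2, f p.1)) (Prod.fst ⁻¹' W) :=
      continuousOn_snd.prodMk (hf.comp continuousOn_fst (mapsTo_preimage _ _))
    have hopen := hpair.isOpen_inter_preimage (hW.preimage continuous_fst)
      isClosed_diagonal.isOpen_compl
    convert hopen.isClosed_compl using 1
    ext p
    simp [Z]
  have : CompactSpace Z := isCompact_iff_compactSpace.1 hZ.isCompact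
  obtain ⟨s, hs⟩ := exists_rightInverse_of_extremallyDisconnected
    (q := fun p : Z => p.1.1) (by fun_prop) fun x => ⟨⟨(x, f x), fun _ => rfl⟩, rfl⟩
  refine ⟨⟨fun x => (s x).1.2, by fun_prop⟩, fun x hx => ?_⟩
  have hsx : (s x).1.1 = x := hs x
  exact ((s x).2 (hsx.symm ▸ hx)).trans (congrArg f hsx)

theorem exists_continuousMap_eqOn_const_of_pairwise_disjoint {ι : Type*} [Nonempty ι]
    {U : ι → Set X} (hU : ∀ i, IsOpen (U i)) (hdisj : Pairwise (Disjoint on U)) (p : ι → K) :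
    ∃ g : C(X, K), ∀ i, EqOn g (const X (p i)) (U i) := by
  let index (x : X) : ι := Classical.epsilon fun i => x ∈ U i
  have hindex (i : ι) (x : X) (hx : x ∈ U i) : index x = i :=
    hdisj.eq <| not_disjoint_iff.2
      ⟨x, Classical.epsilon_spec (p := fun j => x ∈ U j) ⟨i, hx⟩, hx⟩
  have heq (i : ι) : EqOn (p ∘ index) (const X (p i)) (U i) :=
    fun x hx => congrArg p (hindex i x hx)
  obtain ⟨g, hg⟩ := exists_continuousMap_eqOn_of_isOpen (isOpen_iUnion hU)
    (ContinuousOn.iUnion_of_isOpen (fun i => continuousOn_const.congr (heq i)) hU)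
  exact ⟨g, fun i => (hg.mono (subset_iUnion U i)).trans (heq i)⟩

variable {D : Type*} [TopologicalSpace D]

theorem exists_retraction_from_stoneCech_of_denseRange {d : D → X} (hd : Continuous d)
    (hdense : DenseRange d) :
    ∃ (q : C(StoneCech D, X)) (s : C(X, StoneCech D)), LeftInverse q s := by
  obtain ⟨q, hq⟩ := exists_continuousMap_stoneCech hd
  have hqdense : DenseRange q := hdense.mono <| range_subset_iff.2 fun i => ⟨_, hq i⟩
  have hsurj : Surjective q := range_eq_univ.1 <| by
    rw [← (isCompact_range q.continuous).isClosed.closure_eq, hqdense.closure_range]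
  obtain ⟨s, hs⟩ := exists_rightInverse_of_extremallyDisconnected q.continuous hsurj
  exact ⟨q, s, hs⟩

theorem exists_retraction_onto_stoneCech_of_pairwise_disjoint [DiscreteTopology D] [Nonempty D]
    {U : D → Set X} (hU : ∀ i, IsOpen (U i)) (hne : ∀ i, (U i).Nonempty)
    (hdisj : Pairwise (Disjoint on U)) :
    ∃ (q : C(X, StoneCech D)) (s : C(StoneCech D, X)), LeftInverse q s := by
  choose x hx using hne
  obtain ⟨q, hq⟩ := exists_continuousMap_eqOn_const_of_pairwise_disjoint hU hdisj
    (stoneCechUnit : D → StoneCech D)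
  obtain ⟨s, hs⟩ := exists_continuousMap_stoneCech (continuous_of_discreteTopology (f := x))
  have hqs : q ∘ s = id := stoneCech_hom_ext (by fun_prop) continuous_id <| funext fun i => by
    simpa [hs] using hq i (hx i)
  exact ⟨q, s, congrFun hqs⟩

end ExtremallyDisconnected

theorem statement16_general {𝕜 E X D : Type*} [NontriviallyNormedField 𝕜] [NormedAddCommGroup E]
    [NormedSpace 𝕜 E] [ProperSpace E] [TopologicalSpace X] [CompactSpace X] [T2Space X]
    [ExtremallyDisconnected X] [Infinite D] {d : D → X} (hd : DenseRange d) {U : D → Set X}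
    (hU : ∀ i, IsOpen (U i)) (hne : ∀ i, (U i).Nonempty) (hdisj : Pairwise (Disjoint on U)) :
    Nonempty (C(X, E) ≃L[𝕜] lp (fun _ : D => E) ⊤) := by
  let : TopologicalSpace D := ⊥
  have : DiscreteTopology D := ⟨rfl⟩
  obtain ⟨_, _, hX⟩ := exists_retraction_from_stoneCech_of_denseRange
    continuous_of_discreteTopology hd
  obtain ⟨_, _, hD⟩ := exists_retraction_onto_stoneCech_of_pairwise_disjoint hU hne hdisj
  obtain ⟨power⟩ := nonempty_bcf_nat_bcf_equiv 𝕜 E D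
  let stoneCech := (stoneCechEquivBCF D 𝕜 E).toContinuousLinearEquiv
  obtain ⟨e⟩ := nonempty_equiv_of_hasRightInverse_of_hasRightInverse
    ((bcfCongrRight ℕ stoneCech).trans (power.trans stoneCech.symm))
    (hasRightInverse_compCLM (R := 𝕜) (M := E) hX) (hasRightInverse_compCLM hD)
  exact ⟨e.trans <| stoneCech.trans (lpBCFₗᵢ E 𝕜).symm.toContinuousLinearEquiv⟩

/-- Let `X` be an infinite compact Hausdorff topological space that is separable and extremally
disconnected. Then the Banach space `C(X, ℝ)` is isomorphic, via a continuous linear bijection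
with continuous inverse, to the Banach space `ℓ∞` of bounded real sequences with the supremum
norm. -/
theorem statement16 (X : Type u) [TopologicalSpace X] [CompactSpace X] [T2Space X]
    [Infinite X] [SeparableSpace X] [ExtremallyDisconnected X] :
    Nonempty (C(X, ℝ) ≃L[ℝ] lp (fun _ : ℕ => ℝ) ⊤) := by
  obtain ⟨U, hinf, hU, hdisj⟩ := exists_seq_infinite_isOpen_pairwise_disjoint X
  exact statement16_general (denseRange_denseSeq X) hU (fun n => (hinf n).nonempty) hdisj
end

section
/- There exists a family (X_i)_{i ∈ I} of compact Hausdorff topological spaces with |I| = 2^𝔠 (where 𝔠 = 2^ℵ₀ is the cardinality of the continuum) such that each X_i is separable, extremally disconnected, and rigid (the identity is the only homeomorphism of X_i onto itself), and for distinct i, j ∈ I the spaces X_i and X_j are not homeomorphic. -/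
open Cardinal TopologicalSpace

/-!
Attach to every finite sequence `s` over a countable set `N` a nonprincipal ultrafilter `u s` on
`N`, and topologize the tree of finite sequences by declaring a set open if with each `s` it
contains `u s`-almost all one-step extensions of `s`. This countable space is extremally
disconnected, hence so is its Stone–Čech compactification, which is also separable.

If the `u s` are strongly Rudin–Keisler incomparable, the compactification is rigid. Otherwise a
homeomorphism `h` moves a clopen set `A` off itself. At each node `s` in `A`, incomparability yields
a `u s`-large set of successors such that no point `h⁻¹ t` with `t` a node is a limit of the cones
above these successors without lying in one of them. Thinning these sets further so that the cones
above the `k`-th level avoid the first `k` points `h⁻¹ t` gives a clopen subtree missing every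
`h⁻¹ t`, although these points are dense.

Such ultrafilters are built by a transfinite recursion of length `𝔠` from a matrix of sets with
`𝔠` independent rows. Reserving half of the rows to encode a map `c` from `ℕ → Bool` to itself gives
`2 ^ 𝔠` families of ultrafilters, any two of which are separated by one set. A homeomorphism from a
fixed space to the space of such a family determines the family through the traces of the cones,
for which there are only `𝔠` possibilities; so `2 ^ 𝔠` homeomorphism types occur.
-/

open Filter Set Topology

universe v

section IndependentMatrices

variable {N R C : Type*} {E : R → C → Set N} {F G : Filter N} {I J : Set R}

/-- The set of points lying, for every row `x ∈ a`, in the entry of the matrix `E` at row `x` and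
column `y x`. -/
def cylinder (E : R → C → Set N) (a : Finset R) (y : R → C) : Set N := {n | ∀ x ∈ a, n ∈ E x (y x)}

/-- The rows in `I` of the matrix of sets `E` are independent modulo the filter `F`: choosing one
entry in each of finitely many of these rows never gives an intersection that is null for `F`. -/
def IndepMod (E : R → C → Set N) (F : Filter N) (I : Set R) : Prop :=
  ∀ a : Finset R, ↑a ⊆ I → ∀ y : R → C, ∃ᶠ n in F, n ∈ cylinder E a y

/-- All but finitely many of the rows in `I` are independent modulo `F`. -/
def AlmostIndepMod (E : R → C → Set N) (F : Filter N) (I : Set R) : Prop :=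
  ∃ a : Finset R, IndepMod E F (I \ a)

/-- Distinct entries of the same row of `E` have finite intersection. -/
def HasAlmostDisjointRows (E : R → C → Set N) : Prop :=
  ∀ x, Pairwise fun y y' => (E x y ∩ E x y').Finite

theorem cylinder_anti {a b : Finset R} (hab : a ⊆ b) (y : R → C) :
    cylinder E b y ⊆ cylinder E a y :=
  fun _ hn x hx => hn x (hab hx)

namespace IndepMod

theorem mono (h : IndepMod E F I) (hF : F ≤ G) (hJ : J ⊆ I) : IndepMod E G J :=
  fun a ha y => (h a (ha.trans hJ) y).filter_mono hF

theorem almostIndepMod (h : IndepMod E F I) : AlmostIndepMod E F I :=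
  ⟨∅, h.mono le_rfl sdiff_subset⟩

theorem neBot [Nonempty C] (h : IndepMod E F I) : F.NeBot :=
  (frequently_mem_iff_neBot.1 (h ∅ (by simp) fun _ => Classical.arbitrary C)).mono inf_le_left

theorem inf_principal_cylinder (h : IndepMod E F I) {a : Finset R} (ha : ↑a ⊆ I) (y : R → C) :
    IndepMod E (F ⊓ 𝓟 (cylinder E a y)) (I \ a) := by
  classical
  intro b hb z
  have hab : ↑(a ∪ b) ⊆ I := by
    simpa using ⟨ha, hb.trans sdiff_subset⟩
  rw [frequently_inf_principal]
  refine (h (a ∪ b) hab (a.piecewise y z)).mono fun n hn => ⟨fun x hx => ?_, fun x hx => ?_⟩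
  · simpa [hx] using hn x (by simp [hx])
  · have hxa : x ∉ a := (hb hx).2
    simpa [hxa] using hn x (by simp [hx])

theorem iInf_of_directed {ι : Type*} [Nonempty ι] {F : ι → Filter N} (hF : Directed (· ≥ ·) F)
    (h : ∀ i, IndepMod E (F i) I) : IndepMod E (⨅ i, F i) I := by
  intro a ha y
  rw [frequently_mem_iff_neBot, iInf_inf]
  refine iInf_neBot_of_directed' (fun i j => ?_) fun i => frequently_mem_iff_neBot.1 (h i a ha y)
  obtain ⟨k, hki, hkj⟩ := hF i j
  exact ⟨k, inf_le_inf_right _ hki, inf_le_inf_right _ hkj⟩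

theorem inf_iInf_of_directed {ι : Type*} {F : ι → Filter N} (hF : Directed (· ≥ ·) F)
    (hFG : ∀ i, F i ≤ G) (hG : IndepMod E G I) (h : ∀ i, IndepMod E (F i) I) :
    IndepMod E (G ⊓ ⨅ i, F i) I := by
  cases isEmpty_or_nonempty ι
  · simpa using hG
  · rw [inf_eq_right.2 ((iInf_le F (Classical.arbitrary ι)).trans (hFG _))]
    exact iInf_of_directed hF h

theorem exists_le_forall_mem (h : IndepMod E F I) (hJ : J ⊆ I) (c : R → C) :
    ∃ G ≤ F, (∀ x ∈ J, E x (c x) ∈ G) ∧ IndepMod E G (I \ J) := by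
  classical
  let G (a : {a : Finset R // ↑a ⊆ J}) : Filter N := F ⊓ 𝓟 (cylinder E a c)
  have G_directed : Directed (· ≥ ·) G := by
    intro a b
    refine ⟨⟨a ∪ b, by simpa using ⟨a.2, b.2⟩⟩, ?_, ?_⟩ <;>
      exact inf_le_inf_left _ (principal_mono.2 (cylinder_anti (by simp) c))
  have : Nonempty {a : Finset R // ↑a ⊆ J} := ⟨⟨∅, by simp⟩⟩
  refine ⟨⨅ a, G a, (iInf_le G ⟨∅, by simp⟩).trans inf_le_left, fun x hx => ?_, ?_⟩
  · refine mem_iInf_of_mem ⟨{x}, by simpa using hx⟩ (mem_inf_of_right ?_)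
    exact fun n hn => hn x (by simp)
  · exact iInf_of_directed G_directed fun a =>
      (h.inf_principal_cylinder (a.2.trans hJ) c).mono le_rfl (sdiff_subset_sdiff_right a.2)

theorem comp_injective {R' : Type*} [Nonempty C] (h : IndepMod E F univ) {φ : R' → R}
    (hφ : Function.Injective φ) : IndepMod (fun x => E (φ x)) F univ := by
  intro a _ y
  refine (h (a.map ⟨φ, hφ⟩) (subset_univ _)
    (Function.extend φ y fun _ => Classical.arbitrary C)).mono fun n hn x hx => ?_
  simpa [hφ.extend_apply] using hn (φ x) (by simpa using hx)

end IndepMod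

theorem AlmostIndepMod.exists_le_mem_or_compl_mem (h : AlmostIndepMod E F I) (W : Set N) :
    ∃ G ≤ F, AlmostIndepMod E G I ∧ (W ∈ G ∨ Wᶜ ∈ G) := by
  classical
  obtain ⟨a, ha⟩ := h
  by_cases hW : IndepMod E (F ⊓ 𝓟 Wᶜ) (I \ a)
  · exact ⟨_, inf_le_left, ⟨a, hW⟩, Or.inr (mem_inf_of_right (mem_principal_self _))⟩
  · simp only [IndepMod, not_forall, frequently_inf_principal, not_frequently] at hW
    obtain ⟨b, hb, y, hWb⟩ := hW
    refine ⟨F ⊓ 𝓟 (cylinder E b y), inf_le_left, ⟨a ∪ b, ?_⟩, Or.inl ?_⟩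
    · simpa [sdiff_sdiff] using ha.inf_principal_cylinder hb y
    · rw [mem_inf_principal]
      filter_upwards [hWb] with n hn hnb
      by_contra hnW
      exact hn ⟨hnW, hnb⟩

end IndependentMatrices

section PrefixMatrix

/-- The initial segment of length `n` of the sequence `x`. -/
def initialWord {α : Type*} (n : ℕ) (x : ℕ → α) : Fin n → α := fun i => x i

theorem eventually_initialWord_ne {α : Type*} {x x' : ℕ → α} (h : x ≠ x') :
    ∀ᶠ n in atTop, initialWord n x ≠ initialWord n x' := by
  obtain ⟨k, hk⟩ := Function.ne_iff.1 h
  filter_upwards [eventually_gt_atTop k] with n hn heq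
  exact hk (congrFun heq ⟨k, hn⟩)

theorem eventually_injOn_initialWord {α : Type*} (a : Finset (ℕ → α)) :
    ∀ᶠ n in atTop, InjOn (initialWord n) (a : Set (ℕ → α)) := by
  have h : ∀ᶠ n in atTop, ∀ x ∈ a, ∀ x' ∈ a, x ≠ x' → initialWord n x ≠ initialWord n x' := by
    simp only [eventually_all_finset, eventually_imp_distrib_left]
    exact fun x _ x' _ => eventually_initialWord_ne
  filter_upwards [h] with n hn x hx x' hx' heq
  by_contra hne
  exact hn x hx x' hx' hne heq

/-- A self-map of the set of binary words of some length. These maps form a countable set, on which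
`prefixMatrix` lives. -/
abbrev WordMap : Type := Σ n : ℕ, (Fin n → Bool) → (Fin n → Bool)

/-- The independent matrix with rows and columns indexed by binary sequences: the entry at `(x, y)`
consists of the maps sending an initial segment of `x` to an initial segment of `y`. -/
def prefixMatrix (x y : ℕ → Bool) : Set WordMap :=
  {p | p.2 (initialWord p.1 x) = initialWord p.1 y}

theorem finite_setOf_wordMap_fst_lt (k : ℕ) : {p : WordMap | p.1 < k}.Finite := by
  have : {p : WordMap | p.1 < k} = ⋃ n : Fin k, range (Sigma.mk (n : ℕ)) := by
    ext ⟨n, g⟩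
    simp [Fin.exists_iff]
  rw [this]
  exact finite_iUnion fun _ => finite_range _

theorem hasAlmostDisjointRows_prefixMatrix : HasAlmostDisjointRows prefixMatrix := by
  intro x y y' hy
  obtain ⟨k, hk⟩ := eventually_atTop.1 (eventually_initialWord_ne hy)
  refine (finite_setOf_wordMap_fst_lt k).subset fun p ⟨hpy, hpy'⟩ => ?_
  by_contra hkp
  exact hk p.1 (not_lt.1 hkp) (hpy.symm.trans hpy')

theorem exists_mem_cylinder_prefixMatrix {n : ℕ} {a : Finset (ℕ → Bool)}
    (ha : InjOn (initialWord n) (a : Set (ℕ → Bool))) (y : (ℕ → Bool) → ℕ → Bool) :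
    ∃ g, (⟨n, g⟩ : WordMap) ∈ cylinder prefixMatrix a y := by
  have hinj : Function.Injective fun x : a => initialWord n x.1 := ha.injective
  let g := Function.extend (fun x : a => initialWord n x.1) (fun x : a => initialWord n (y x)) 0
  exact ⟨g, fun x hx => show g (initialWord n x) = _ from hinj.extend_apply _ _ (⟨x, hx⟩ : a)⟩

theorem indepMod_prefixMatrix : IndepMod prefixMatrix cofinite univ := by
  intro a _ y
  refine frequently_cofinite_iff_infinite.2 (Infinite.of_image Sigma.fst ?_)
  obtain ⟨k, hk⟩ := eventually_atTop.1 (eventually_injOn_initialWord a)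
  refine (Ici_infinite k).mono fun n hn => ?_
  obtain ⟨g, hg⟩ := exists_mem_cylinder_prefixMatrix (hk n hn) y
  exact ⟨⟨n, g⟩, hg, rfl⟩

theorem exists_independent_matrix {R : Type} (hR : #R ≤ 𝔠) :
    ∃ E : R → (ℕ → Bool) → Set WordMap, HasAlmostDisjointRows E ∧ IndepMod E cofinite univ := by
  obtain ⟨φ⟩ : Nonempty (R ↪ (ℕ → Bool)) := by
    rw [← Cardinal.le_def]
    simpa using hR
  exact ⟨fun x => prefixMatrix (φ x), fun x => hasAlmostDisjointRows_prefixMatrix (φ x),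
    indepMod_prefixMatrix.comp_injective φ.injective⟩

end PrefixMatrix

section Settling

variable {N R C S : Type*} {E : R → C → Set N}

/-- The filters `F t` decide what the maps `f t` for `t ≠ r` may do to `F r`: either some set of
`F r` is avoided by each `f t` along `F t`, or one of the `f t` takes finitely many values
along `F t`. -/
def Settles (F : S → Filter N) (r : S) (f : S → N → N) : Prop :=
  (∃ A ∈ F r, ∀ t ≠ r, ∀ᶠ n in F t, f t n ∉ A) ∨
    ∃ t ≠ r, ∃ Z : Set N, Z.Finite ∧ ∀ᶠ n in F t, f t n ∈ Z

/-- A strong form of pairwise Rudin–Keisler incomparability: if each `f t` maps `u t` to a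
nonprincipal ultrafilter, then some set of `u r` belongs to none of these images. -/
def IsRKDiscrete (u : S → Ultrafilter N) : Prop :=
  ∀ (r : S) (f : S → N → N), (∀ t ≠ r, Tendsto (f t) (u t) cofinite) →
    ∃ A ∈ u r, ∀ t ≠ r, ∀ᶠ n in u t, f t n ∉ A

theorem Settles.mono {F F' : S → Filter N} {r : S} {f : S → N → N} (h : Settles F r f)
    (hF : F' ≤ F) : Settles F' r f := by
  rcases h with ⟨A, hA, hAt⟩ | ⟨t, htr, Z, hZ, hfZ⟩
  · exact Or.inl ⟨A, hF r hA, fun t htr => (hAt t htr).filter_mono (hF t)⟩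
  · exact Or.inr ⟨t, htr, Z, hZ, hfZ.filter_mono (hF t)⟩

theorem isRKDiscrete_of_forall_settles {u : S → Ultrafilter N}
    (h : ∀ r f, Settles (fun s => (u s : Filter N)) r f) : IsRKDiscrete u := by
  intro r f hf
  refine (h r f).resolve_right ?_
  rintro ⟨t, htr, Z, hZ, hfZ⟩
  obtain ⟨n, hn, hn'⟩ := (hfZ.and ((hf t htr).eventually hZ.compl_mem_cofinite)).exists
  exact hn' hn

theorem AlmostIndepMod.exists_le_mem_of_forall_compl_notMem {F : Filter N} {I : Set R} {W : Set N}
    (h : AlmostIndepMod E F I) (hW : ∀ G ≤ F, AlmostIndepMod E G I → Wᶜ ∉ G) :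
    ∃ G ≤ F, AlmostIndepMod E G I ∧ W ∈ G := by
  obtain ⟨G, hGF, hG, hWG⟩ := h.exists_le_mem_or_compl_mem W
  exact ⟨G, hGF, hG, hWG.resolve_right (hW G hGF hG)⟩

theorem exists_le_inter_mem {F : Filter N} {I : Set R} {W W' : Set N} (h : AlmostIndepMod E F I)
    (hW : ∀ G ≤ F, AlmostIndepMod E G I → Wᶜ ∉ G) (hW' : ∀ G ≤ F, AlmostIndepMod E G I → W'ᶜ ∉ G) :
    ∃ G ≤ F, AlmostIndepMod E G I ∧ W ∩ W' ∈ G := by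
  obtain ⟨G, hGF, hG, hWG⟩ := h.exists_le_mem_of_forall_compl_notMem hW
  obtain ⟨G', hG'G, hG', hWG'⟩ :=
    hG.exists_le_mem_of_forall_compl_notMem fun H hHG => hW' H (hHG.trans hGF)
  exact ⟨G', hG'G.trans hGF, hG', inter_mem (hG'G hWG) hWG'⟩

variable {F : S → Filter N} {I : S → Set R}

theorem exists_settles_of_exists_finite (hF : ∀ s, AlmostIndepMod E (F s) (I s)) {r t : S}
    (htr : t ≠ r) {f : S → N → N} {Z : Set N} (hZ : Z.Finite)
    (hG : ∃ G ≤ F t, AlmostIndepMod E G (I t) ∧ ∀ᶠ n in G, f t n ∈ Z) :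
    ∃ F' ≤ F, (∀ s, AlmostIndepMod E (F' s) (I s)) ∧ Settles F' r f := by
  classical
  obtain ⟨G, hGF, hG, hZG⟩ := hG
  refine ⟨Function.update F t G, update_le_iff.2 ⟨hGF, fun _ _ => le_rfl⟩, fun s => ?_,
    Or.inr ⟨t, htr, Z, hZ, by simpa using hZG⟩⟩
  obtain rfl | hst := eq_or_ne s t
  · simpa using hG
  · simpa [hst] using hF s

theorem exists_settles_of_forall_exists_compl_mem (hF : ∀ s, IndepMod E (F s) (I s)) {r : S}
    {x : R} (hx : x ∈ I r) {f : S → N → N} {y : C}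
    (hy : ∀ t ≠ r, ∃ G ≤ F t, AlmostIndepMod E G (I t) ∧ ∀ᶠ n in G, f t n ∉ E x y) :
    ∃ F' ≤ F, (∀ s, AlmostIndepMod E (F' s) (I s)) ∧ Settles F' r f := by
  have hr : ∃ G ≤ F r, AlmostIndepMod E G (I r) ∧ E x y ∈ G :=
    ⟨F r ⊓ 𝓟 (cylinder E {x} fun _ => y), inf_le_left,
      ⟨{x}, (hF r).inf_principal_cylinder (by simpa using hx) _⟩,
      mem_inf_of_right fun n hn => hn x (by simp)⟩
  have hs : ∀ s, ∃ G ≤ F s, AlmostIndepMod E G (I s) ∧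
      (s = r → E x y ∈ G) ∧ (s ≠ r → ∀ᶠ n in G, f s n ∉ E x y) := by
    intro s
    obtain rfl | hsr := eq_or_ne s r
    · simpa using hr
    · simpa [hsr] using hy s hsr
  choose F' hF'F hF' hmem havoid using hs
  exact ⟨F', hF'F, hF', Or.inl ⟨E x y, hmem r rfl, havoid⟩⟩

-- A column `y` is bad for `t` if `f t` cannot be made to avoid `E x y`. Two bad columns for the
-- same `t` trap `f t` in a finite set; otherwise only countably many columns are bad.
theorem exists_settles [Countable S] [Uncountable C] (hE : HasAlmostDisjointRows E)
    (hF : ∀ s, IndepMod E (F s) (I s)) {r : S} (hr : (I r).Nonempty) (f : S → N → N) :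
    ∃ F' ≤ F, (∀ s, AlmostIndepMod E (F' s) (I s)) ∧ Settles F' r f := by
  obtain ⟨x, hx⟩ := hr
  let bad (t : S) : Set C :=
    {y | t ≠ r ∧ ∀ G ≤ F t, AlmostIndepMod E G (I t) → (f t ⁻¹' E x y)ᶜ ∉ G}
  by_cases htwo : ∃ t, (bad t).Nontrivial
  · obtain ⟨t, y, ⟨htr, hy⟩, y', ⟨-, hy'⟩, hne⟩ := htwo
    exact exists_settles_of_exists_finite (fun s => (hF s).almostIndepMod) htr (hE x hne)
      (exists_le_inter_mem (hF t).almostIndepMod hy hy')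
  · simp only [not_exists, not_nontrivial_iff] at htwo
    have bad_countable : (⋃ t, bad t).Countable := countable_iUnion fun t => (htwo t).countable
    obtain ⟨y, hy⟩ := (ne_univ_iff_exists_notMem _).1 fun h =>
      not_countable_univ (α := C) (h ▸ bad_countable)
    refine exists_settles_of_forall_exists_compl_mem hF hx (y := y) fun t htr => ?_
    have hyt : y ∉ bad t := fun h => hy (mem_iUnion_of_mem t h)
    by_contra hcon
    exact hyt ⟨htr, fun G hGF hG hmem => hcon ⟨G, hGF, hG, hmem⟩⟩

end Settling

section Recursion

theorem exists_forall_eq_iInf_Iio {α T : Type*} [CompleteLattice α] [LinearOrder T]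
    [WellFoundedLT T] (next : T → α → α) (x₀ : α) :
    ∃ p : T → α, ∀ τ, p τ = next τ (x₀ ⊓ ⨅ ζ : Iio τ, p ζ) := by
  let step (τ : T) (p : ∀ ζ, ζ < τ → α) : α := next τ (x₀ ⊓ ⨅ ζ : Iio τ, p ζ ζ.2)
  exact ⟨WellFoundedLT.fix step, WellFoundedLT.fix_eq step⟩

theorem nonempty_inter_iInter_Iio {R T : Type v} [LinearOrder T] [WellFoundedLT T] {I : Set R}
    {J : T → Set R} (hJ : ∀ τ, ((I ∩ ⋂ ζ : Iio τ, J ζ) \ J τ).Finite) (hI : ℵ₀ < #I) {τ : T}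
    (hτ : #(Iio τ) < #I) : (I ∩ ⋂ ζ : Iio τ, J ζ).Nonempty := by
  by_contra hempty
  let removed (ζ : T) : Set R := (I ∩ ⋂ η : Iio ζ, J η) \ J ζ
  have hsub : I ⊆ ⋃ ζ : Iio τ, removed ζ := by
    intro x hx
    have hlost : ∃ ζ, ζ < τ ∧ x ∉ J ζ := by
      by_contra! hkept
      exact hempty ⟨x, hx, mem_iInter.2 fun ζ => hkept ζ ζ.2⟩
    obtain ⟨ζ, ⟨hζτ, hxζ⟩, hmin⟩ := WellFounded.has_min wellFounded_lt {ζ | ζ < τ ∧ x ∉ J ζ} hlost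
    refine mem_iUnion.2 ⟨⟨ζ, hζτ⟩, ⟨hx, mem_iInter.2 fun η => ?_⟩, hxζ⟩
    by_contra hxη
    exact hmin η ⟨η.2.trans hζτ, hxη⟩ η.2
  have hle : #I ≤ #(Iio τ) * ℵ₀ :=
    calc #I ≤ #(⋃ ζ : Iio τ, removed ζ) := mk_le_mk_of_subset hsub
      _ ≤ #(Iio τ) * ⨆ ζ : Iio τ, #(removed ζ) := mk_iUnion_le _
      _ ≤ #(Iio τ) * ℵ₀ := by gcongr; exact ciSup_le' fun ζ => (hJ ζ).lt_aleph0.le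
  exact hle.not_gt (mul_lt_of_lt hI.le hτ hI)

variable {N S C : Type*} {R T : Type v} {E : R → C → Set N}

theorem indepMod_inf_iInf {ι : Type*} {p : ι → Filter N × Set R} {p₀ : Filter N × Set R}
    (hp : Directed (· ≥ ·) p) (hle : ∀ i, p i ≤ p₀) (hp₀ : IndepMod E p₀.1 p₀.2)
    (h : ∀ i, IndepMod E (p i).1 (p i).2) :
    IndepMod E (p₀ ⊓ ⨅ i, p i).1 (p₀ ⊓ ⨅ i, p i).2 := by
  rw [Prod.fst_inf, Prod.fst_iInf]
  refine IndepMod.inf_iInf_of_directed (hp.mono_comp _ (g := Prod.fst) fun _ _ h => h.1)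
    (fun i => (hle i).1) (hp₀.mono le_rfl (inf_le_left (a := p₀)).2) fun i => (h i).mono le_rfl ?_
  exact (inf_le_right.trans (iInf_le p i)).2

variable [Countable S] [Uncountable C] [LinearOrder T] [WellFoundedLT T]

theorem exists_le_finite_sdiff_and_settles (hE : HasAlmostDisjointRows E)
    (p : S → Filter N × Set R) (r : S) (f : S → N → N) :
    ∃ p' ≤ p, (∀ s, ((p s).2 \ (p' s).2).Finite) ∧
      ((∀ s, IndepMod E (p s).1 (p s).2) → (p r).2.Nonempty →
        (∀ s, IndepMod E (p' s).1 (p' s).2) ∧ Settles (fun s => (p' s).1) r f) := by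
  by_cases h : (∀ s, IndepMod E (p s).1 (p s).2) ∧ (p r).2.Nonempty
  · obtain ⟨F, hFp, hF, hsettles⟩ := exists_settles hE h.1 h.2 f
    choose a ha using hF
    refine ⟨fun s => (F s, (p s).2 \ a s), fun s => ⟨hFp s, sdiff_subset⟩, fun s => ?_,
      fun _ _ => ⟨ha, hsettles⟩⟩
    exact (a s).finite_toSet.subset (by simp [sdiff_sdiff_right_self])
  · exact ⟨p, le_rfl, by simp, fun h₁ h₂ => absurd ⟨h₁, h₂⟩ h⟩

theorem exists_chain_forall_settles (hE : HasAlmostDisjointRows E) {G : Filter N} {I : Set R}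
    (hG : IndepMod E G I) (hI : ℵ₀ < #I) (hT : ∀ τ : T, #(Iio τ) < #I)
    (task : T → S × (S → N → N)) :
    ∃ p : T → S → Filter N × Set R, Antitone p ∧ (∀ τ s, p τ s ≤ (G, I)) ∧
      ∀ τ, (∀ s, IndepMod E (p τ s).1 (p τ s).2) ∧
        Settles (fun s => (p τ s).1) (task τ).1 (task τ).2 := by
  choose next hnext hfinite hgood using fun (τ : T) (p : S → Filter N × Set R) =>
    exists_le_finite_sdiff_and_settles hE p (task τ).1 (task τ).2
  let p₀ : S → Filter N × Set R := fun _ => (G, I)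
  obtain ⟨p, hp⟩ := exists_forall_eq_iInf_Iio next p₀
  let q (τ : T) : S → Filter N × Set R := p₀ ⊓ ⨅ ζ : Iio τ, p ζ
  have hpq (τ) : p τ ≤ q τ := (hp τ).trans_le (hnext τ _)
  have hq_lt {ζ τ} (h : ζ < τ) : q τ ≤ p ζ := inf_le_right.trans (iInf_le _ (⟨ζ, h⟩ : Iio τ))
  have hanti : Antitone p := antitone_iff_forall_lt.2 fun _ _ h => (hpq _).trans (hq_lt h)
  have hle (τ) : p τ ≤ p₀ := (hpq τ).trans inf_le_left
  have q_snd (τ s) : (q τ s).2 = I ∩ ⋂ ζ : Iio τ, (p ζ s).2 := by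
    simp [q, p₀, Prod.snd_iInf]
  have hne (τ s) : (q τ s).2.Nonempty := by
    rw [q_snd]
    refine nonempty_inter_iInter_Iio (J := fun ζ => (p ζ s).2) (fun ζ => ?_) hI (hT τ)
    rw [← q_snd, hp ζ]
    exact hfinite ζ _ s
  refine ⟨p, hanti, hle, fun τ => ?_⟩
  induction τ using WellFoundedLT.induction with
  | ind τ ih =>
    have hq (s) : IndepMod E (q τ s).1 (q τ s).2 := by
      simp only [q, Pi.inf_apply, iInf_apply]
      refine indepMod_inf_iInf (directed_of_isDirected_le fun ζ η h => hanti h s)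
        (fun ζ => hle ζ s) hG fun ζ => (ih ζ ζ.2).1 s
    rw [hp τ]
    exact hgood τ (q τ) hq (hne τ _)

theorem exists_filters_forall_settles (hE : HasAlmostDisjointRows E) {G : Filter N} {I : Set R}
    (hG : IndepMod E G I) (hI : ℵ₀ < #I) (hT : ∀ τ : T, #(Iio τ) < #I)
    (task : T → S × (S → N → N)) :
    ∃ F : S → Filter N, (∀ s, (F s).NeBot ∧ F s ≤ G) ∧
      ∀ τ, Settles F (task τ).1 (task τ).2 := by
  obtain ⟨p, hanti, hle, hp⟩ := exists_chain_forall_settles hE hG hI hT task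
  refine ⟨fun s => ((G, I) ⊓ ⨅ τ, p τ s).1, fun s => ⟨?_, inf_le_left⟩, fun τ => ?_⟩
  · exact (indepMod_inf_iInf (directed_of_isDirected_le fun _ _ h => hanti h s)
      (fun τ => hle τ s) hG fun τ => (hp τ).1 s).neBot
  · exact (hp τ).2.mono fun s => (inf_le_right.trans (iInf_le (fun τ => p τ s) τ)).1

end Recursion

theorem mk_arrow_le_continuum {A B : Type v} [Countable A] (hB : #B ≤ 𝔠) : #(A → B) ≤ 𝔠 :=
  calc #(A → B) = #B ^ #A := (power_def B A).symm
    _ ≤ 𝔠 ^ #A := power_le_power_right hB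
    _ ≤ 𝔠 ^ ℵ₀ := power_le_power_left continuum_ne_zero mk_le_aleph0
    _ = 𝔠 := continuum_power_aleph0

theorem mk_prod_arrow_arrow_le_continuum (S N : Type v) [Countable S] [Countable N] :
    #(S × (S → N → N)) ≤ 𝔠 := by
  have hN : #N ≤ 𝔠 := mk_le_aleph0.trans aleph0_le_continuum
  have hmaps : #(S → N → N) ≤ 𝔠 := mk_arrow_le_continuum (mk_arrow_le_continuum hN)
  calc #(S × (S → N → N)) = #S * #(S → N → N) := (mul_def _ _).symm
    _ ≤ ℵ₀ * 𝔠 := mul_le_mul' mk_le_aleph0 hmaps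
    _ = 𝔠 := aleph0_mul_continuum

theorem exists_isRKDiscrete_le {N R S : Type v} {C : Type*} [Countable N] [Countable S]
    [Uncountable C] {E : R → C → Set N} (hE : HasAlmostDisjointRows E) {G : Filter N} {I : Set R}
    (hG : IndepMod E G I) (hI : 𝔠 ≤ #I) :
    ∃ u : S → Ultrafilter N, (∀ s, u s ≤ G) ∧ IsRKDiscrete u := by
  obtain ⟨_, _, hord⟩ := exists_ord_eq_type_lt (S × (S → N → N))
  obtain ⟨F, hF, hsettles⟩ := exists_filters_forall_settles hE hG (aleph0_lt_continuum.trans_le hI)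
    (fun τ => (mk_Iio_lt τ hord).trans_le ((mk_prod_arrow_arrow_le_continuum S N).trans hI)) id
  have (s : S) : (F s).NeBot := (hF s).1
  exact ⟨fun s => Ultrafilter.of (F s), fun s => (Ultrafilter.of_le _).trans (hF s).2,
    isRKDiscrete_of_forall_settles fun r f => (hsettles (r, f)).mono fun s => Ultrafilter.of_le _⟩

section StoneCechCompactification

variable {X : Type*} [TopologicalSpace X]

theorem subset_of_denseRange {ι : Type*} {f : ι → X} (hf : DenseRange f) {W W' : Set X}
    (hW : IsOpen W) (hW' : IsClosed W') (h : ∀ i, f i ∈ W → f i ∈ W') : W ⊆ W' := by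
  refine (hf.open_subset_closure_inter hW).trans (closure_minimal ?_ hW')
  rintro _ ⟨hi, i, rfl⟩
  exact h i hi

theorem exists_isClopen_disjoint_preimage [TotallySeparatedSpace X] {f : X → X} (hf : Continuous f)
    {x : X} (hx : f x ≠ x) : ∃ A : Set X, IsClopen A ∧ x ∈ A ∧ Disjoint A (f ⁻¹' A) := by
  obtain ⟨U, hU, hxU, hfxU⟩ := exists_isClopen_of_totally_separated hx.symm
  refine ⟨U ∩ f ⁻¹' Uᶜ, hU.inter (hU.compl.preimage hf), ⟨hxU, hfxU⟩, ?_⟩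
  exact disjoint_left.2 fun y hy hfy => hy.2 hfy.1

/-- The closure in the Stone–Čech compactification of a subset of `X`. -/
def stoneCechClosure (V : Set X) : Set (StoneCech X) := closure (stoneCechUnit '' V)

theorem stoneCechClosure_subset {V : Set X} {W : Set (StoneCech X)} (hW : IsClosed W)
    (h : ∀ x ∈ V, stoneCechUnit x ∈ W) : stoneCechClosure V ⊆ W :=
  closure_minimal (image_subset_iff.2 h) hW

theorem stoneCechUnit_mem_stoneCechClosure_of_mem {V : Set X} {x : X} (hx : x ∈ V) :
    stoneCechUnit x ∈ stoneCechClosure V :=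
  subset_closure (mem_image_of_mem _ hx)

theorem exists_stoneCechClosure_eq_preimage {V : Set X} (hV : IsClopen V) :
    ∃ g : StoneCech X → Bool, Continuous g ∧ (∀ x, g (stoneCechUnit x) = true ↔ x ∈ V) ∧
      stoneCechClosure V = g ⁻¹' {true} := by
  have hcont : Continuous V.boolIndicator := (continuous_boolIndicator_iff_isClopen V).2 hV
  have hg (x : X) : stoneCechExtend hcont (stoneCechUnit x) = true ↔ x ∈ V := by
    rw [stoneCechExtend_stoneCechUnit, mem_iff_boolIndicator]
  have hclopen : IsClopen (stoneCechExtend hcont ⁻¹' {true}) :=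
    (isClopen_discrete _).preimage (continuous_stoneCechExtend hcont)
  refine ⟨_, continuous_stoneCechExtend hcont, hg, ?_⟩
  refine (stoneCechClosure_subset hclopen.isClosed fun x => (hg x).2).antisymm ?_
  exact subset_of_denseRange denseRange_stoneCechUnit hclopen.isOpen isClosed_closure
    fun x hx => stoneCechUnit_mem_stoneCechClosure_of_mem ((hg x).1 hx)

theorem isClopen_stoneCechClosure {V : Set X} (hV : IsClopen V) :
    IsClopen (stoneCechClosure V) := by
  obtain ⟨g, hg, -, hVg⟩ := exists_stoneCechClosure_eq_preimage hV
  exact hVg ▸ (isClopen_discrete _).preimage hg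

theorem stoneCechUnit_mem_stoneCechClosure {V : Set X} (hV : IsClopen V) {x : X} :
    stoneCechUnit x ∈ stoneCechClosure V ↔ x ∈ V := by
  obtain ⟨g, -, hg, hVg⟩ := exists_stoneCechClosure_eq_preimage hV
  rw [hVg, ← hg, mem_preimage, mem_singleton_iff]

theorem stoneCech_subset_of_isOpen {W W' : Set (StoneCech X)} (hW : IsOpen W) (hW' : IsClosed W')
    (h : ∀ x, stoneCechUnit x ∈ W → stoneCechUnit x ∈ W') : W ⊆ W' :=
  subset_of_denseRange denseRange_stoneCechUnit hW hW' h

theorem disjoint_stoneCechClosure {V V' : Set X} (hV' : IsClopen V') (h : Disjoint V V') :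
    Disjoint (stoneCechClosure V) (stoneCechClosure V') := by
  rw [← subset_compl_iff_disjoint_right]
  refine stoneCechClosure_subset (isClopen_stoneCechClosure hV').compl.isClosed fun x hx => ?_
  rw [mem_compl_iff, stoneCechUnit_mem_stoneCechClosure hV']
  exact disjoint_left.1 h hx

theorem stoneCechUnit_mem_of_mem_closure {O : Set (StoneCech X)} (hO : IsOpen O)
    (hclosed : IsClosed (stoneCechUnit ⁻¹' O)) {x : X} (hx : stoneCechUnit x ∈ closure O) :
    stoneCechUnit x ∈ O := by
  have hV : IsClopen (stoneCechUnit ⁻¹' O) := ⟨hclosed, hO.preimage continuous_stoneCechUnit⟩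
  have hsub : closure O ⊆ stoneCechClosure (stoneCechUnit ⁻¹' O) :=
    closure_minimal (stoneCech_subset_of_isOpen hO isClosed_closure
      fun x hx => stoneCechUnit_mem_stoneCechClosure_of_mem hx) isClosed_closure
  exact (stoneCechUnit_mem_stoneCechClosure hV).1 (hsub hx)

instance [ExtremallyDisconnected X] : ExtremallyDisconnected (StoneCech X) where
  open_closure U hU := by
    let V : Set X := stoneCechUnit ⁻¹' U
    have hV : IsClopen (closure V) :=
      ⟨isClosed_closure,
        ExtremallyDisconnected.open_closure V (hU.preimage continuous_stoneCechUnit)⟩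
    have hclosure : closure U = stoneCechClosure (closure V) := by
      refine (closure_minimal ?_ isClosed_closure).antisymm ?_
      · exact stoneCech_subset_of_isOpen hU isClosed_closure
          fun x hx => stoneCechUnit_mem_stoneCechClosure_of_mem (subset_closure hx)
      · exact stoneCechClosure_subset isClosed_closure
          fun x hx => map_mem_closure continuous_stoneCechUnit hx fun _ => id
    exact hclosure ▸ (isClopen_stoneCechClosure hV).isOpen

instance [Countable X] : SeparableSpace (StoneCech X) :=
  ⟨range stoneCechUnit, countable_range _, denseRange_stoneCechUnit⟩

end StoneCechCompactification

section TreeSpace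

variable {N : Type*}

/-- The set of finite sequences over `N`, the last entry being the head of the list, with the
topology in which a set is open if with each sequence `s` it contains `u s`-almost all of the
one-step extensions of `s`. -/
def TreeSpace (_u : List N → Ultrafilter N) : Type _ := List N

variable {u : List N → Ultrafilter N}

instance [Countable N] : Countable (TreeSpace u) := inferInstanceAs (Countable (List N))

/-- The one-step extension of the sequence `s` by the entry `m`. -/
def TreeSpace.child (s : TreeSpace u) (m : N) : TreeSpace u := m :: s

instance : TopologicalSpace (TreeSpace u) where
  IsOpen U := ∀ s ∈ U, ∀ᶠ m in u s, s.child m ∈ U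
  isOpen_univ _ _ := Eventually.of_forall fun _ => trivial
  isOpen_inter _ _ hU hV s hs := (hU s hs.1).and (hV s hs.2)
  isOpen_sUnion _ hC s := fun ⟨U, hU, hs⟩ => (hC U hU s hs).mono fun _ hm => ⟨U, hU, hm⟩

theorem isOpen_treeSpace_iff {U : Set (TreeSpace u)} :
    IsOpen U ↔ ∀ s ∈ U, ∀ᶠ m in u s, s.child m ∈ U :=
  Iff.rfl

theorem isClosed_treeSpace_iff {U : Set (TreeSpace u)} :
    IsClosed U ↔ ∀ s ∉ U, ∀ᶠ m in u s, s.child m ∉ U := by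
  rw [← isOpen_compl_iff]
  exact Iff.rfl

instance : ExtremallyDisconnected (TreeSpace u) where
  open_closure U hU := by
    refine isOpen_treeSpace_iff.2 fun t ht => ?_
    by_contra hcon
    have hleave : ∀ᶠ m in u t, t.child m ∉ closure U := Ultrafilter.eventually_not.2 hcon
    have htU : t ∉ U := fun htU =>
      hcon ((isOpen_treeSpace_iff.1 hU t htU).mono fun _ hm => subset_closure hm)
    have hclosed : IsClosed (closure U \ {t}) := by
      refine isClosed_treeSpace_iff.2 fun s hs => ?_
      have : ∀ᶠ m in u s, s.child m ∉ closure U := by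
        by_cases hst : s = t
        · exact hst ▸ hleave
        · exact isClosed_treeSpace_iff.1 isClosed_closure s fun h => hs ⟨h, hst⟩
      exact this.mono fun m hm h => hm h.1
    have hsub : closure U ⊆ closure U \ {t} :=
      closure_minimal (subset_sdiff_singleton subset_closure htU) hclosed
    exact (hsub ht).2 rfl

/-- The set of all sequences extending `s`. -/
def cone (u : List N → Ultrafilter N) (s : List N) : Set (TreeSpace u) := {t | s <:+ t}

/-- The tree of all extensions `t` of `r` obtained by successively choosing the next entry after
`s` in the set `Q s`. -/
def subtree (u : List N → Ultrafilter N) (r : List N) (Q : List N → Set N) : Set (TreeSpace u) :=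
  {t | r <:+ t ∧ ∀ s m, r <:+ s → m :: s <:+ t → m ∈ Q s}

theorem eq_or_exists_mem_cone_cons {s : List N} {t : TreeSpace u} (h : t ∈ cone u s) :
    t = s ∨ ∃ n, t ∈ cone u (n :: s) := by
  obtain ⟨p, rfl⟩ := h
  rcases List.eq_nil_or_concat p with rfl | ⟨q, n, rfl⟩
  · exact Or.inl rfl
  · exact Or.inr ⟨n, q, by simp⟩

theorem disjoint_cone_cons {s : List N} {m n : N} (h : m ≠ n) :
    Disjoint (cone u (m :: s)) (cone u (n :: s)) := by
  refine disjoint_left.2 fun t hm hn => h ?_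
  have := (List.suffix_of_suffix_length_le hm hn (by simp)).eq_of_length (by simp)
  exact (List.cons.inj this).1

theorem self_mem_subtree (r : TreeSpace u) (Q : List N → Set N) : r ∈ subtree u r Q := by
  refine ⟨List.suffix_rfl, fun s m hrs hsr => ?_⟩
  have := hrs.length_le.trans_lt (Nat.lt_of_succ_le hsr.length_le)
  exact absurd this (lt_irrefl _)

section Subtree

variable {r : List N} {Q : List N → Set N} {s t : TreeSpace u} {m : N}

theorem mem_subtree_of_suffix (ht : t ∈ subtree u r Q) (hrs : r <:+ s) (hst : s <:+ t) :
    s ∈ subtree u r Q :=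
  ⟨hrs, fun s' m hrs' hs' => ht.2 s' m hrs' (hs'.trans hst)⟩

theorem child_mem_subtree (ht : t ∈ subtree u r Q) (hm : m ∈ Q t) : t.child m ∈ subtree u r Q := by
  refine ⟨ht.1.trans (List.suffix_cons m t), fun s k hrs hs => ?_⟩
  rcases List.suffix_cons_iff.1 hs with heq | hst
  · obtain ⟨rfl, rfl⟩ := List.cons.inj heq
    exact hm
  · exact ht.2 s k hrs hst

theorem eq_or_mem_of_child_mem_subtree (h : t.child m ∈ subtree u r Q) :
    t.child m = r ∨ t ∈ subtree u r Q ∧ m ∈ Q t := by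
  rcases List.suffix_cons_iff.1 h.1 with heq | hrt
  · exact Or.inl heq.symm
  · exact Or.inr ⟨mem_subtree_of_suffix h hrt (List.suffix_cons m t), h.2 t m hrt List.suffix_rfl⟩

end Subtree

theorem eventually_child_ne (hu : ∀ s, (u s : Filter N) ≤ cofinite) (s t : TreeSpace u) :
    ∀ᶠ m in u s, s.child m ≠ t := by
  cases t with
  | nil => exact Eventually.of_forall fun m => List.cons_ne_nil m s
  | cons n t =>
    exact (le_cofinite_iff_eventually_ne.1 (hu s) n).mono fun m hm h => hm (List.cons.inj h).1

theorem isClopen_subtree (hu : ∀ s, (u s : Filter N) ≤ cofinite) {r : List N} {Q : List N → Set N}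
    (hQ : ∀ s ∈ subtree u r Q, Q s ∈ u s) : IsClopen (subtree u r Q) := by
  constructor
  · refine isClosed_treeSpace_iff.2 fun t ht => ?_
    filter_upwards [eventually_child_ne hu t r] with m hm h
    exact (eq_or_mem_of_child_mem_subtree h).elim hm fun h => ht h.1
  · refine isOpen_treeSpace_iff.2 fun t ht => ?_
    filter_upwards [hQ t ht] with m hm
    exact child_mem_subtree ht hm

theorem isClopen_cone (hu : ∀ s, (u s : Filter N) ≤ cofinite) (s : List N) :
    IsClopen (cone u s) := by
  have : cone u s = subtree u s fun _ => univ := by simp [cone, subtree]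
  exact this ▸ isClopen_subtree hu fun _ _ => univ_mem

theorem exists_tendsto_cofinite_index (hu : ∀ s, (u s : Filter N) ≤ cofinite)
    {V : N → Set (TreeSpace u)} (hV : ∀ n, IsClosed (V n))
    (hdisj : Pairwise (Function.onFun Disjoint V)) :
    ∃ f : TreeSpace u → N → N, (∀ t, Tendsto (f t) (u t) cofinite) ∧
      ∀ t ∉ ⋃ n, V n, ∀ m n, t.child m ∈ V n → f t m = n := by
  classical
  have hindex (t : TreeSpace u) (m : N) :
      ∃ k, (t.child m ∈ V k ∨ k = m) ∧ ∀ n, t.child m ∈ V n → k = n := by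
    by_cases h : ∃ k, t.child m ∈ V k
    · obtain ⟨k, hk⟩ := h
      exact ⟨k, Or.inl hk, fun n hn => hdisj.eq (not_disjoint_iff.2 ⟨_, hk, hn⟩)⟩
    · exact ⟨m, Or.inr rfl, fun n hn => absurd ⟨n, hn⟩ h⟩
  choose index hindex hunique using hindex
  refine ⟨fun t => if t ∈ ⋃ n, V n then id else index t, fun t => ?_, fun t ht m n hmn => ?_⟩
  · by_cases ht : t ∈ ⋃ n, V n
    · simpa only [if_pos ht] using tendsto_id.mono_left (hu t)
    · simp only [if_neg ht]
      refine le_cofinite_iff_eventually_ne.2 fun n => eventually_map.2 ?_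
      filter_upwards [isClosed_treeSpace_iff.1 (hV n) t fun h => ht (mem_iUnion_of_mem n h),
        le_cofinite_iff_eventually_ne.1 (hu t) n] with m hmV hmn heq
      rcases hindex t m with h | h
      · exact hmV (heq ▸ h)
      · exact hmn (h.symm.trans heq)
  · simpa only [if_neg ht] using hunique t m n hmn

theorem exists_isClosed_biUnion (hu : ∀ s, (u s : Filter N) ≤ cofinite) (hRK : IsRKDiscrete u)
    {V : N → Set (TreeSpace u)} (hV : ∀ n, IsClopen (V n))
    (hdisj : Pairwise (Function.onFun Disjoint V)) {r : TreeSpace u}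
    (hr : r ∉ closure (⋃ n, V n)) : ∃ D ∈ u r, IsClosed (⋃ n ∈ D, V n) := by
  obtain ⟨f, hf, hindex⟩ := exists_tendsto_cofinite_index hu (fun n => (hV n).isClosed) hdisj
  obtain ⟨D, hD, havoid⟩ := hRK r f fun t _ => hf t
  refine ⟨D, hD, isClosed_treeSpace_iff.2 fun t ht => ?_⟩
  simp only [mem_iUnion, not_exists] at ht
  simp only [mem_iUnion, exists_prop, not_exists, not_and]
  by_cases htV : t ∈ ⋃ n, V n
  · obtain ⟨n, hn⟩ := mem_iUnion.1 htV
    filter_upwards [isOpen_treeSpace_iff.1 (hV n).isOpen t hn] with m hm k hkD hk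
    obtain rfl : n = k := hdisj.eq (not_disjoint_iff.2 ⟨_, hm, hk⟩)
    exact ht n hkD hn
  · obtain rfl | htr := eq_or_ne t r
    · filter_upwards [isClosed_treeSpace_iff.1 isClosed_closure t hr] with m hm k _ hk
      exact hm (subset_closure (mem_iUnion_of_mem k hk))
    · filter_upwards [havoid t htr] with m hm k hkD hk
      exact hm (hindex t htV m k hk ▸ hkD)

end TreeSpace

section Rigidity

variable {N : Type*} {u : List N → Ultrafilter N}

/-- The closure in the Stone–Čech compactification of the tree space of the cone above `s`. -/
def coneClosure (u : List N → Ultrafilter N) (s : List N) : Set (StoneCech (TreeSpace u)) :=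
  stoneCechClosure (cone u s)

theorem isClopen_coneClosure (hu : ∀ s, (u s : Filter N) ≤ cofinite) (s : List N) :
    IsClopen (coneClosure u s) :=
  isClopen_stoneCechClosure (isClopen_cone hu s)

theorem stoneCechUnit_mem_coneClosure (hu : ∀ s, (u s : Filter N) ≤ cofinite) {s : List N}
    {t : TreeSpace u} : stoneCechUnit t ∈ coneClosure u s ↔ s <:+ t :=
  stoneCechUnit_mem_stoneCechClosure (isClopen_cone hu s)

theorem pairwise_disjoint_coneClosure_cons (hu : ∀ s, (u s : Filter N) ≤ cofinite) (s : List N) :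
    Pairwise (Function.onFun Disjoint fun n => coneClosure u (n :: s)) :=
  fun _ n h => disjoint_stoneCechClosure (isClopen_cone hu (n :: s)) (disjoint_cone_cons h)

theorem eventually_notMem_coneClosure_cons (hu : ∀ s, (u s : Filter N) ≤ cofinite) (s : List N)
    (x : StoneCech (TreeSpace u)) : ∀ᶠ m in u s, x ∉ coneClosure u (m :: s) := by
  by_cases hx : ∃ n, x ∈ coneClosure u (n :: s)
  · obtain ⟨n, hn⟩ := hx
    filter_upwards [le_cofinite_iff_eventually_ne.1 (hu s) n] with m hmn hm
    exact disjoint_left.1 (pairwise_disjoint_coneClosure_cons hu s hmn) hm hn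
  · exact Eventually.of_forall (not_exists.1 hx)

theorem exists_forall_mem_biUnion_of_mem_closure (hu : ∀ s, (u s : Filter N) ≤ cofinite)
    (hRK : IsRKDiscrete u) {O : N → Set (StoneCech (TreeSpace u))} (hO : ∀ n, IsClopen (O n))
    (hdisj : Pairwise (Function.onFun Disjoint O)) {r : TreeSpace u}
    (hr : stoneCechUnit r ∉ closure (⋃ n, O n)) :
    ∃ D ∈ u r, ∀ t : TreeSpace u,
      stoneCechUnit t ∈ closure (⋃ n ∈ D, O n) → stoneCechUnit t ∈ ⋃ n ∈ D, O n := by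
  let V (n : N) : Set (TreeSpace u) := stoneCechUnit ⁻¹' O n
  have hrV : r ∉ closure (⋃ n, V n) := by
    rw [← preimage_iUnion]
    exact fun h => hr (map_mem_closure continuous_stoneCechUnit h fun _ => id)
  obtain ⟨D, hD, hclosed⟩ := exists_isClosed_biUnion hu hRK (V := V)
    (fun n => (hO n).preimage continuous_stoneCechUnit)
    (fun m n hmn => (hdisj hmn).preimage stoneCechUnit) hrV
  refine ⟨D, hD, fun t => stoneCechUnit_mem_of_mem_closure
    (isOpen_biUnion fun n _ => (hO n).isOpen) ?_⟩
  simpa only [preimage_iUnion] using hclosed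

section Subtree

variable {r : TreeSpace u} {Q : List N → Set N}

theorem stoneCechClosure_subtree_subset_coneClosure :
    stoneCechClosure (subtree u r Q) ⊆ coneClosure u r :=
  closure_mono (image_mono fun _ ht => ht.1)

theorem mem_of_mem_coneClosure_cons (hu : ∀ s, (u s : Filter N) ≤ cofinite)
    (hQ : ∀ s ∈ subtree u r Q, Q s ∈ u s) {s : TreeSpace u} (hs : s ∈ subtree u r Q)
    {x : StoneCech (TreeSpace u)} (hx : x ∈ stoneCechClosure (subtree u r Q)) {n : N}
    (hn : x ∈ coneClosure u (n :: s)) : n ∈ Q s := by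
  by_contra hnQ
  refine disjoint_left.1 (disjoint_stoneCechClosure (isClopen_subtree hu hQ) ?_) hn hx
  exact disjoint_left.2 fun t hst ht => hnQ (ht.2 s n hs.1 hst)

-- A node of the subtree extending `s` either extends a child of `s` or is `s` itself, which is a
-- limit of its children.
theorem stoneCechClosure_subtree_inter_coneClosure_subset (hu : ∀ s, (u s : Filter N) ≤ cofinite)
    (hQ : ∀ s ∈ subtree u r Q, Q s ∈ u s) {s : TreeSpace u} (hs : s ∈ subtree u r Q) :
    stoneCechClosure (subtree u r Q) ∩ coneClosure u s ⊆
      closure (⋃ n ∈ Q s, coneClosure u (n :: s) ∩ stoneCechClosure (subtree u r Q)) := by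
  have hT := isClopen_subtree hu hQ
  set T := subtree u r Q
  set P := ⋃ n ∈ Q s, coneClosure u (n :: s) ∩ stoneCechClosure T
  have hmem {t : TreeSpace u} (ht : t ∈ T) {n : N} (hnt : n :: s <:+ t) : stoneCechUnit t ∈ P :=
    mem_iUnion₂.2 ⟨n, ht.2 s n hs.1 hnt, (stoneCechUnit_mem_coneClosure hu).2 hnt,
      stoneCechUnit_mem_stoneCechClosure_of_mem ht⟩
  have hsP : stoneCechUnit s ∈ closure P := by
    by_contra hsP
    have hleave := isClosed_treeSpace_iff.1
      (isClosed_closure.preimage continuous_stoneCechUnit : IsClosed (stoneCechUnit ⁻¹' closure P))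
      s hsP
    obtain ⟨m, hmP, hm⟩ := (hleave.and (hQ s hs)).exists
    exact hmP (subset_closure (hmem (child_mem_subtree hs hm) List.suffix_rfl))
  refine stoneCech_subset_of_isOpen ((isClopen_stoneCechClosure hT).inter
    (isClopen_coneClosure hu s)).isOpen isClosed_closure ?_
  rintro t ⟨htT, hts⟩
  rw [stoneCechUnit_mem_stoneCechClosure hT] at htT
  rcases eq_or_exists_mem_cone_cons ((stoneCechUnit_mem_coneClosure hu).1 hts) with rfl | ⟨n, hn⟩
  · exact hsP
  · exact subset_closure (hmem htT hn)

theorem exists_mem_subtree_length_ge (hu : ∀ s, (u s : Filter N) ≤ cofinite)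
    (hQ : ∀ s ∈ subtree u r Q, Q s ∈ u s) {x : StoneCech (TreeSpace u)}
    (hx : x ∈ stoneCechClosure (subtree u r Q))
    (hnext : ∀ s ∈ subtree u r Q, x ∈ coneClosure u s → ∃ n, x ∈ coneClosure u (n :: s)) (j : ℕ) :
    ∃ s ∈ subtree u r Q, j ≤ List.length s ∧ x ∈ coneClosure u s := by
  induction j with
  | zero =>
    exact ⟨r, self_mem_subtree r Q, Nat.zero_le _, stoneCechClosure_subtree_subset_coneClosure hx⟩
  | succ j ih =>
    obtain ⟨s, hs, hj, hxs⟩ := ih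
    obtain ⟨n, hn⟩ := hnext s hs hxs
    exact ⟨s.child n, child_mem_subtree hs (mem_of_mem_coneClosure_cons hu hQ hs hx hn),
      Nat.succ_le_succ hj, hn⟩

end Subtree

variable {A : Set (StoneCech (TreeSpace u))} {x : ℕ → StoneCech (TreeSpace u)} {D : List N → Set N}

/-- The successors of `s` in `D s` which stay in `A` and whose cones avoid the first points of the
sequence `x`. -/
def avoidingSuccessors (A : Set (StoneCech (TreeSpace u))) (x : ℕ → StoneCech (TreeSpace u))
    (D : List N → Set N) (s : List N) : Set N :=
  {m | m ∈ D s ∧ stoneCechUnit (TreeSpace.child s m) ∈ A ∧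
    ∀ k ≤ s.length, x k ∉ coneClosure u (m :: s)}

theorem stoneCechUnit_mem_of_mem_subtree_avoidingSuccessors {r : TreeSpace u}
    (hr : stoneCechUnit r ∈ A) {s : TreeSpace u}
    (hs : s ∈ subtree u r (avoidingSuccessors A x D)) : stoneCechUnit s ∈ A := by
  cases s with
  | nil =>
    have hnil : r = ([] : List N) := List.suffix_nil.1 hs.1
    exact hnil ▸ hr
  | cons m t =>
    rcases eq_or_mem_of_child_mem_subtree hs with rfl | ⟨-, -, hmem, -⟩
    · exact hr
    · exact hmem

theorem avoidingSuccessors_mem (hu : ∀ s, (u s : Filter N) ≤ cofinite) (hA : IsOpen A)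
    {s : TreeSpace u} (hs : stoneCechUnit s ∈ A) (hD : D s ∈ u s) :
    avoidingSuccessors A x D s ∈ u s := by
  have hstay : ∀ᶠ m in u s, stoneCechUnit (s.child m) ∈ A :=
    isOpen_treeSpace_iff.1 (hA.preimage continuous_stoneCechUnit) s hs
  have havoid : ∀ᶠ m in u s, ∀ k ≤ List.length s, x k ∉ coneClosure u (m :: s) :=
    (eventually_all_finite (finite_Iic _)).2
      fun k _ => eventually_notMem_coneClosure_cons hu s (x k)
  filter_upwards [hD, hstay, havoid] with m hmD hmA hmx
  exact ⟨hmD, hmA, hmx⟩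

theorem exists_isOpen_forall_notMem (hu : ∀ s, (u s : Filter N) ≤ cofinite) (hA : IsClopen A)
    (hA_nonempty : A.Nonempty) (hD : ∀ s : TreeSpace u, stoneCechUnit s ∈ A → D s ∈ u s)
    (hx : ∀ s : TreeSpace u, stoneCechUnit s ∈ A → ∀ k,
      x k ∈ closure (⋃ n ∈ D s, coneClosure u (n :: s) ∩ A) →
        x k ∈ ⋃ n ∈ D s, coneClosure u (n :: s) ∩ A) :
    ∃ U : Set (StoneCech (TreeSpace u)), IsOpen U ∧ U.Nonempty ∧ ∀ k, x k ∉ U := by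
  obtain ⟨r, hr⟩ := denseRange_stoneCechUnit.exists_mem_open hA.isOpen hA_nonempty
  let Q := avoidingSuccessors A x D
  have hTA {s : TreeSpace u} (hs : s ∈ subtree u r Q) : stoneCechUnit s ∈ A :=
    stoneCechUnit_mem_of_mem_subtree_avoidingSuccessors hr hs
  have hQ : ∀ s ∈ subtree u r Q, Q s ∈ u s := fun s hs =>
    avoidingSuccessors_mem hu hA.isOpen (hTA hs) (hD s (hTA hs))
  refine ⟨stoneCechClosure (subtree u r Q),
    (isClopen_stoneCechClosure (isClopen_subtree hu hQ)).isOpen,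
    ⟨_, stoneCechUnit_mem_stoneCechClosure_of_mem (self_mem_subtree r Q)⟩, fun k hk => ?_⟩
  have hnext : ∀ s ∈ subtree u r Q, x k ∈ coneClosure u s → ∃ n, x k ∈ coneClosure u (n :: s) := by
    intro s hs hks
    have hclosure := stoneCechClosure_subtree_inter_coneClosure_subset hu hQ hs ⟨hk, hks⟩
    have hsub : ⋃ n ∈ Q s, coneClosure u (n :: s) ∩ stoneCechClosure (subtree u r Q) ⊆
        ⋃ n ∈ D s, coneClosure u (n :: s) ∩ A :=
      biUnion_mono (fun n hn => hn.1) fun n _ => inter_subset_inter_right _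
        (stoneCechClosure_subset hA.isClosed fun _ => hTA)
    obtain ⟨n, -, hn, -⟩ := mem_iUnion₂.1 (hx s (hTA hs) k (closure_mono hsub hclosure))
    exact ⟨n, hn⟩
  obtain ⟨s, hs, hks, hxs⟩ := exists_mem_subtree_length_ge hu hQ hk hnext k
  obtain ⟨n, hn⟩ := hnext s hs hxs
  exact (mem_of_mem_coneClosure_cons hu hQ hs hk hn).2.2 k hks hn

theorem exists_mem_forall_symm_mem_biUnion (hu : ∀ s, (u s : Filter N) ≤ cofinite)
    (hRK : IsRKDiscrete u) (hA : IsClopen A)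
    (h : StoneCech (TreeSpace u) ≃ₜ StoneCech (TreeSpace u)) (hmove : Disjoint A (h ⁻¹' A))
    {s : TreeSpace u} (hs : stoneCechUnit s ∈ A) :
    ∃ D ∈ u s, ∀ t : TreeSpace u,
      h.symm (stoneCechUnit t) ∈ closure (⋃ n ∈ D, coneClosure u (n :: s) ∩ A) →
        h.symm (stoneCechUnit t) ∈ ⋃ n ∈ D, coneClosure u (n :: s) ∩ A := by
  let O (n : N) : Set (StoneCech (TreeSpace u)) := h.symm ⁻¹' (coneClosure u (n :: s) ∩ A)
  have hO (n) : IsClopen (O n) :=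
    ((isClopen_coneClosure hu _).inter hA).preimage h.symm.continuous
  have hdisj : Pairwise (Function.onFun Disjoint O) := fun m n hmn =>
    ((pairwise_disjoint_coneClosure_cons hu s hmn).mono inter_subset_left
      inter_subset_left).preimage h.symm
  have hs_notMem : stoneCechUnit s ∉ closure (⋃ n, O n) := by
    have hsub : closure (⋃ n, O n) ⊆ h.symm ⁻¹' A :=
      closure_minimal (iUnion_subset fun n _ hy => hy.2) (hA.isClosed.preimage h.symm.continuous)
    exact fun hmem => disjoint_left.1 hmove (hsub hmem) (by simpa using hs)
  obtain ⟨D, hD, hDt⟩ := exists_forall_mem_biUnion_of_mem_closure hu hRK hO hdisj hs_notMem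
  refine ⟨D, hD, ?_⟩
  simpa only [O, ← preimage_iUnion, ← h.symm.preimage_closure, mem_preimage] using hDt

theorem homeomorph_stoneCech_treeSpace_eq_refl [Countable N]
    (hu : ∀ s, (u s : Filter N) ≤ cofinite) (hRK : IsRKDiscrete u)
    (h : StoneCech (TreeSpace u) ≃ₜ StoneCech (TreeSpace u)) : h = Homeomorph.refl _ := by
  by_contra hne
  obtain ⟨y, hy⟩ : ∃ y, h y ≠ y := by
    by_contra! hfix
    exact hne (Homeomorph.ext hfix)
  obtain ⟨A, hA, hyA, hmove⟩ := exists_isClopen_disjoint_preimage h.continuous hy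
  have hD (s : TreeSpace u) (hs : stoneCechUnit s ∈ A) :=
    exists_mem_forall_symm_mem_biUnion hu hRK hA h hmove hs
  choose! D hD hmem using hD
  have : Nonempty (TreeSpace u) := ⟨[]⟩
  obtain ⟨e, he⟩ := exists_surjective_nat (TreeSpace u)
  obtain ⟨U, hU, hU_nonempty, havoid⟩ := exists_isOpen_forall_notMem
    (x := fun k => h.symm (stoneCechUnit (e k))) hu hA ⟨y, hyA⟩ hD fun s hs k => hmem s hs (e k)
  have hdense : DenseRange fun k => h.symm (stoneCechUnit (e k)) :=
    (h.symm.surjective.denseRange.comp denseRange_stoneCechUnit h.symm.continuous).comp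
      he.denseRange (h.symm.continuous.comp continuous_stoneCechUnit)
  obtain ⟨k, hk⟩ := hdense.exists_mem_open hU hU_nonempty
  exact havoid k hk

end Rigidity

section Counting

theorem exists_pairwise_not_rel_mk_eq {α : Type*} (r : Setoid α) {κ : Cardinal}
    (hα : ℵ₀ ≤ #α) (hκ : κ < #α) (h : ∀ a, #{b // r a b} ≤ κ) :
    ∃ T : Set α, #T = #α ∧ T.Pairwise fun a b => ¬r a b := by
  refine ⟨range (Quotient.out (s := r)), ?_, ?_⟩
  · rw [mk_range_eq _ Quotient.out_injective]
    refine mk_quotient_le.antisymm (not_lt.1 fun hlt => ?_)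
    have hfiber (q : Quotient r) : #((Quotient.mk r) ⁻¹' {q}) ≤ κ := by
      refine (mk_le_mk_of_subset (fun b hb => ?_)).trans (h q.out)
      exact Quotient.exact (q.out_eq.trans (mem_singleton_iff.1 hb).symm)
    exact (mk_le_mk_mul_of_mk_preimage_le _ hfiber).not_gt (mul_lt_of_lt hα hlt hκ)
  · rintro _ ⟨q, rfl⟩ _ ⟨q', rfl⟩ hne hrel
    exact hne (congrArg Quotient.out (Quotient.out_equiv_out.1 hrel))

theorem not_forall_mem_coneClosure_iff {N : Type*} {u w : List N → Ultrafilter N}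
    (hu : ∀ s, (u s : Filter N) ≤ cofinite) (hw : ∀ s, (w s : Filter N) ≤ cofinite) {A : Set N}
    (hAu : ∀ s, A ∈ u s) (hAw : ∀ s, Aᶜ ∈ w s)
    (g : StoneCech (TreeSpace u) ≃ₜ StoneCech (TreeSpace w)) :
    ¬∀ s y, g y ∈ coneClosure w s ↔ y ∈ coneClosure u s := by
  intro hg
  have hT : IsClopen (subtree u [] fun _ => A) := isClopen_subtree hu fun s _ => hAu s
  let T' : Set (StoneCech (TreeSpace w)) :=
    g.symm ⁻¹' stoneCechClosure (subtree u [] fun _ => A)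
  have hT' : IsOpen T' := (isClopen_stoneCechClosure hT).isOpen.preimage g.symm.continuous
  have hsub (t : TreeSpace w) (ht : stoneCechUnit t ∈ T') : t ∈ subtree u [] fun _ => A := by
    by_contra htA
    have hcone : g.symm (stoneCechUnit t) ∈ coneClosure u t := by
      refine (hg t _).1 ?_
      rw [g.apply_symm_apply]
      exact (stoneCechUnit_mem_coneClosure hw).2 List.suffix_rfl
    refine disjoint_left.1 (disjoint_stoneCechClosure hT ?_) hcone ht
    exact disjoint_left.2 fun p htp hp => htA (mem_subtree_of_suffix hp List.nil_suffix htp)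
  have hT'_nonempty : T'.Nonempty := by
    refine ⟨g (stoneCechUnit []), ?_⟩
    rw [mem_preimage, g.symm_apply_apply]
    exact stoneCechUnit_mem_stoneCechClosure_of_mem (self_mem_subtree [] _)
  obtain ⟨t, ht⟩ := denseRange_stoneCechUnit.exists_mem_open hT' hT'_nonempty
  have hstay : ∀ᶠ m in w t, stoneCechUnit (t.child m) ∈ T' :=
    isOpen_treeSpace_iff.1 (hT'.preimage continuous_stoneCechUnit) t ht
  obtain ⟨m, hm, hmA⟩ := (hstay.and (hAw t)).exists
  rcases eq_or_mem_of_child_mem_subtree (hsub _ hm) with hnil | ⟨-, hmem⟩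
  · exact List.cons_ne_nil m t hnil
  · exact hmA hmem

/-- For distinct `i` and `j`, a single set belongs to all ultrafilters `U i s` and to none of the
ultrafilters `U j s`. -/
def PairwiseSeparated {ι S N : Type*} (U : ι → S → Ultrafilter N) : Prop :=
  Pairwise fun i j => ∃ A : Set N, (∀ s, A ∈ U i s) ∧ ∀ s, Aᶜ ∈ U j s

section HomeomorphismClass

variable {N ι : Type v} {U : ι → List N → Ultrafilter N}

/-- The nodes of the tree space of `u` which the homeomorphism `e` sends into the cone above
`s`. -/
def coneTrace {u w : List N → Ultrafilter N}
    (e : StoneCech (TreeSpace u) ≃ₜ StoneCech (TreeSpace w)) (s : List N) : Set (List N) :=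
  {t : TreeSpace u | e (stoneCechUnit t) ∈ coneClosure w s}

theorem preimage_coneClosure_eq_of_coneTrace_eq {u w w' : List N → Ultrafilter N}
    (hw : ∀ s, (w s : Filter N) ≤ cofinite) (hw' : ∀ s, (w' s : Filter N) ≤ cofinite)
    {e : StoneCech (TreeSpace u) ≃ₜ StoneCech (TreeSpace w)}
    {e' : StoneCech (TreeSpace u) ≃ₜ StoneCech (TreeSpace w')} {s : List N}
    (h : coneTrace e s = coneTrace e' s) :
    e ⁻¹' coneClosure w s = e' ⁻¹' coneClosure w' s := by
  have hclopen := (isClopen_coneClosure hw s).preimage e.continuous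
  have hclopen' := (isClopen_coneClosure hw' s).preimage e'.continuous
  exact (stoneCech_subset_of_isOpen hclopen.isOpen hclopen'.isClosed h.subset).antisymm
    (stoneCech_subset_of_isOpen hclopen'.isOpen hclopen.isClosed h.superset)

theorem eq_of_coneTrace_eq (hU : ∀ i s, (U i s : Filter N) ≤ cofinite) (hsep : PairwiseSeparated U)
    {u : List N → Ultrafilter N} {i j : ι}
    (e : StoneCech (TreeSpace u) ≃ₜ StoneCech (TreeSpace (U i)))
    (e' : StoneCech (TreeSpace u) ≃ₜ StoneCech (TreeSpace (U j)))
    (h : coneTrace e = coneTrace e') : i = j := by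
  by_contra hij
  obtain ⟨A, hAi, hAj⟩ := hsep hij
  refine not_forall_mem_coneClosure_iff (hU i) (hU j) hAi hAj (e.symm.trans e') fun s y => ?_
  have hpre := preimage_coneClosure_eq_of_coneTrace_eq (hU i) (hU j) (congrFun h s)
  simpa using (Set.ext_iff.1 hpre (e.symm y)).symm

theorem mk_homeomorphic_le_continuum [Countable N] (hU : ∀ i s, (U i s : Filter N) ≤ cofinite)
    (hsep : PairwiseSeparated U) (u : List N → Ultrafilter N) :
    #{i // Nonempty (StoneCech (TreeSpace u) ≃ₜ StoneCech (TreeSpace (U i)))} ≤ 𝔠 := by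
  have hset : #(Set (List N)) ≤ 𝔠 := by
    rw [mk_set, ← two_power_aleph0]
    exact power_le_power_left two_ne_zero mk_le_aleph0
  refine (mk_le_of_injective (f := fun i => coneTrace i.2.some) fun i j h => ?_).trans
    (mk_arrow_le_continuum (A := List N) hset)
  exact Subtype.ext (eq_of_coneTrace_eq hU hsep _ _ h)

/-- Indices are equivalent if the Stone–Čech compactifications of their tree spaces are
homeomorphic. -/
def homeomorphicSetoid (U : ι → List N → Ultrafilter N) : Setoid ι where
  r i j := Nonempty (StoneCech (TreeSpace (U i)) ≃ₜ StoneCech (TreeSpace (U j)))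
  iseqv := ⟨fun _ => ⟨.refl _⟩, fun ⟨e⟩ => ⟨e.symm⟩, fun ⟨e⟩ ⟨f⟩ => ⟨e.trans f⟩⟩

theorem exists_pairwise_isEmpty_homeomorph [Countable N]
    (hU : ∀ i s, (U i s : Filter N) ≤ cofinite) (hsep : PairwiseSeparated U) (hι : 𝔠 < #ι) :
    ∃ T : Set ι, #T = #ι ∧ T.Pairwise fun i j =>
      IsEmpty (StoneCech (TreeSpace (U i)) ≃ₜ StoneCech (TreeSpace (U j))) := by
  obtain ⟨T, hcard, hT⟩ := exists_pairwise_not_rel_mk_eq (homeomorphicSetoid U)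
    (aleph0_le_continuum.trans hι.le) hι fun i => mk_homeomorphic_le_continuum hU hsep (U i)
  exact ⟨T, hcard, hT.mono' fun i j h => not_nonempty_iff.1 h⟩

end HomeomorphismClass

end Counting

section Family

theorem HasAlmostDisjointRows.compl_mem {N R C : Type*} {E : R → C → Set N}
    (hE : HasAlmostDisjointRows E) {F : Filter N} (hF : F ≤ cofinite) {x : R} {y y' : C}
    (hy : y ≠ y') (h : E x y' ∈ F) : (E x y)ᶜ ∈ F := by
  filter_upwards [h, hF (hE x hy).compl_mem_cofinite] with n hn hn' hny
  exact hn' ⟨hny, hn⟩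

instance : Uncountable (ℕ → Bool) :=
  aleph0_lt_mk_iff.1 (by simpa using cantor ℵ₀)

-- Half of the rows of an independent matrix encode `c`; the other half remain available for making
-- the ultrafilters Rudin–Keisler discrete.
theorem exists_pairwiseSeparated_isRKDiscrete (S : Type) [Countable S] :
    ∃ U : ((ℕ → Bool) → ℕ → Bool) → S → Ultrafilter WordMap,
      (∀ c s, (U c s : Filter WordMap) ≤ cofinite) ∧ (∀ c, IsRKDiscrete (U c)) ∧
        PairwiseSeparated U := by
  obtain ⟨E, hE, hindep⟩ := exists_independent_matrix (R := (ℕ → Bool) ⊕ (ℕ → Bool)) (by simp)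
  have hmk : 𝔠 ≤ #(univ \ range Sum.inl : Set ((ℕ → Bool) ⊕ (ℕ → Bool))) := by
    rw [← compl_eq_univ_sdiff, compl_range_inl, mk_range_eq _ Sum.inr_injective]
    simp
  have hfamily (c : (ℕ → Bool) → ℕ → Bool) : ∃ u : S → Ultrafilter WordMap,
      (∀ s, (u s : Filter WordMap) ≤ cofinite ∧ ∀ x, E (Sum.inl x) (c x) ∈ u s) ∧
        IsRKDiscrete u := by
    obtain ⟨G, hG, hmem, hindepG⟩ := hindep.exists_le_forall_mem
      (subset_univ (range Sum.inl)) (Sum.elim c c)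
    obtain ⟨u, huG, hRK⟩ := exists_isRKDiscrete_le (S := S) hE hindepG hmk
    exact ⟨u, fun s => ⟨(huG s).trans hG, fun x => huG s (hmem _ (mem_range_self x))⟩, hRK⟩
  choose U hU hRK using hfamily
  refine ⟨U, fun c s => (hU c s).1, hRK, fun c c' hc => ?_⟩
  obtain ⟨x, hx⟩ := Function.ne_iff.1 hc
  exact ⟨E (Sum.inl x) (c x), fun s => (hU c s).2 x,
    fun s => hE.compl_mem (hU c' s).1 hx ((hU c' s).2 x)⟩

theorem homeomorph_eq_refl_of_homeomorph {X Y : Type*} [TopologicalSpace X] [TopologicalSpace Y]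
    (e : X ≃ₜ Y) (hX : ∀ f : X ≃ₜ X, f = .refl X) (g : Y ≃ₜ Y) : g = .refl Y := by
  ext y
  have h := DFunLike.congr_fun (hX ((e.trans g).trans e.symm)) (e.symm y)
  simpa using h

end Family

/-- There exists a family `(X i)_{i ∈ I}` of compact Hausdorff spaces with `|I| = 2 ^ 𝔠`
(where `𝔠 = 2 ^ ℵ₀` is the cardinality of the continuum) such that each `X i` is separable,
extremally disconnected, and rigid (the identity is the only self-homeomorphism of `X i`),
and for distinct `i, j ∈ I` the spaces `X i` and `X j` are not homeomorphic. -/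
theorem statement18 :
    ∃ (I : Type u) (X : I → CompHaus.{u}),
      #I = 2 ^ Cardinal.continuum ∧
      (∀ i, SeparableSpace (X i)) ∧
      (∀ i, ExtremallyDisconnected (X i)) ∧
      (∀ i, ∀ e : X i ≃ₜ X i, e = Homeomorph.refl (X i)) ∧
      ∀ i j, i ≠ j → IsEmpty (X i ≃ₜ X j) := by
  obtain ⟨U, hU, hRK, hsep⟩ := exists_pairwiseSeparated_isRKDiscrete (List WordMap)
  have hmk : #((ℕ → Bool) → ℕ → Bool) = 2 ^ 𝔠 := by simp [power_self_eq aleph0_le_continuum]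
  obtain ⟨T, hcard, hT⟩ := exists_pairwise_isEmpty_homeomorph hU hsep (hmk ▸ cantor 𝔠)
  let X (i : ULift.{u} T) : CompHaus.{u} := .of (ULift.{u} (StoneCech (TreeSpace (U i.down))))
  let up (i) : StoneCech (TreeSpace (U i.down)) ≃ₜ X i := Homeomorph.ulift.symm
  refine ⟨ULift.{u} T, X, ?_, fun i => ?_, fun i => ?_, fun i => ?_, fun i j hij => ?_⟩
  · rw [mk_uLift, hcard, hmk, lift_power, lift_two, lift_continuum]
  · exact (up i).surjective.denseRange.separableSpace (up i).continuous
  · exact extremallyDisconnected_of_homeo (up i)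
  · exact homeomorph_eq_refl_of_homeomorph (up i)
      (homeomorph_stoneCech_treeSpace_eq_refl (hU i.down) (hRK i.down))
  · have hne : (i.down : (ℕ → Bool) → ℕ → Bool) ≠ j.down :=
      fun h => hij (ULift.ext _ _ (Subtype.ext h))
    have := hT i.down.2 j.down.2 hne
    exact ⟨fun e => this.elim (((up i).trans e).trans (up j).symm)⟩
end
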